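/- arXiv:2009.05428 — 6 statements merged into one kernel-verified Lean document; each statement's English description precedes it below -/
import Mathlib

section
/- Let $k_A \ge 2$, $k_B$, $D_A$, $D_B$ be positive integers satisfying $k_B \ge (e\, k_A D_B)^{1/(k_A-1)} D_A$. Let $G$ and $H$ be finite bipartite graphs with bipartitions $(A_G,B_G)$ and $(A_H,B_H)$ respectively, such that $H$ is a bipartite correspondence-cover of $G$ with respect to a map $L$. If every vertex of $A_H$ has degree at most $D_A$ in $H$, every vertex of $B_H$ has degree at most $D_B$ in $H$, $|L(v)| \ge k_A$ for all $v \in A_G$, and $|L(w)| \ge k_B$ for all $w \in B_G$, then $H$ admits an independent transversal with respect to $L$. -/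
/-!
The proof reduces to a statement about hypergraphs and then counts.

Shrink every `L v`, `v ∈ A_G`, to a set `L' v` of exactly `k = k_A` vertices. A transversal `T` of
the parts of the `B` side extends to an independent transversal as soon as every `L' v` keeps a
vertex without neighbours in `T`. This fails at `v` exactly when `T` contains a set `g (L' v)`,
where `g` sends each `x ∈ L' v` to a neighbour of `x`. By the matching condition such a set has
exactly `k` elements, and a given `y ∈ B_H` lies in at most `D_B * D_A ^ (k - 1)` of them: choose
the preimage of `y` among its neighbours, then the values of `g` at the other `k - 1` vertices.

It remains to find a transversal `T` containing no edge of a `k`-uniform hypergraph of maximum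
degree `D = D_B * D_A ^ (k - 1)` (`exists_good`). Let `N S` be the number of edge-free transversals
of a set `S` of parts, and put `β = k_B * (1 - 1 / k)`. By induction on `S`,
`β * N S ≤ N (insert w S)` (`good_step`). Indeed, fix `y` in the part `w`. If adding `y` to an
edge-free `T` completes an edge `f`, then `f.erase y ⊆ T`, and deleting these `k - 1` vertices
leaves an edge-free transversal of a smaller set of parts; by the induction hypothesis at most
`N S / β ^ (k - 1)` transversals `T` are spoiled by `f` (`card_containing_mul_le`). The numerical
hypothesis, together with `(1 + 1 / (k - 1)) ^ (k - 1) ≤ e`, gives `k * D ≤ β ^ (k - 1)`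
(`numeric_bound`), so each `y` spoils at most a fraction `1 / k` of the transversals.
-/

/-- `H` is a cover of `G` with respect to `L`: the sets `L v` partition `V(H)`, and whenever
`v v'` are non-adjacent in `G` (including `v = v'`) there are no edges of `H` between
`L v` and `L v'`. -/
def IsCoverWrt {V W : Type*} (G : SimpleGraph V) (H : SimpleGraph W) (L : V → Set W) : Prop :=
  (∀ w : W, ∃! v : V, w ∈ L v) ∧
  ∀ ⦃v v' : V⦄, ¬ G.Adj v v' → ∀ x ∈ L v, ∀ y ∈ L v', ¬ H.Adj x y

/-- `H` is a correspondence-cover of `G` with respect to `L`: a cover such that for every edge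
`v v'` of `G` the bipartite subgraph of `H` induced between `L v` and `L v'` is a matching. -/
def IsCorrespondenceCoverWrt {V W : Type*} (G : SimpleGraph V) (H : SimpleGraph W)
    (L : V → Set W) : Prop :=
  IsCoverWrt G H L ∧
  ∀ ⦃v v' : V⦄, G.Adj v v' → ∀ x ∈ L v, ∀ y ∈ L v', ∀ y' ∈ L v',
    H.Adj x y → H.Adj x y' → y = y'

/-- `(A, B)` is a bipartition of the graph `G`. -/
def IsBipartitionOf {V : Type*} (G : SimpleGraph V) (A B : Set V) : Prop :=
  A ∪ B = Set.univ ∧ Disjoint A B ∧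
  ∀ ⦃u v : V⦄, G.Adj u v → (u ∈ A ∧ v ∈ B) ∨ (u ∈ B ∧ v ∈ A)

/-- `H` is a bipartite correspondence-cover of `G`, with respect to the bipartitions
`(AG, BG)` of `G` and `(AH, BH)` of `H` and the map `L`. -/
def IsBipartiteCorrespondenceCover {V W : Type*} (G : SimpleGraph V) (H : SimpleGraph W)
    (AG BG : Set V) (AH BH : Set W) (L : V → Set W) : Prop :=
  IsBipartitionOf G AG BG ∧ IsBipartitionOf H AH BH ∧
  IsCorrespondenceCoverWrt G H L ∧
  (∀ v ∈ AG, L v ⊆ AH) ∧ (∀ w ∈ BG, L w ⊆ BH)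

/-- `H` admits an independent transversal with respect to `L`: an independent set of `H`
containing exactly one vertex from each part `L v`. -/
def HasIndepTransversal {V W : Type*} (H : SimpleGraph W) (L : V → Set W) : Prop :=
  ∃ T : Set W, (∀ x ∈ T, ∀ y ∈ T, ¬ H.Adj x y) ∧ ∀ v : V, ∃! w : W, w ∈ L v ∧ w ∈ T

/-- The degree of a vertex, as the number of its neighbours. -/
noncomputable def deg {W : Type*} (H : SimpleGraph W) (x : W) : ℕ := (H.neighborSet x).ncard

open Finset Classical

/-! ### Counting edge-free partial transversals -/

section Counting

variable {V W : Type*} [Fintype W]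

/-- The transversals of the parts indexed by `S` that contain no edge of the hypergraph `F`. The
parts are the fibres of `p : W → V`; a transversal is encoded as the finite set of chosen vertices,
which `p` maps bijectively onto `S`. -/
noncomputable def Good (p : W → V) (F : Finset (Finset W)) (S : Finset V) : Finset (Finset W) :=
  univ.filter fun T => T.image p = S ∧ Set.InjOn p T ∧ ∀ f ∈ F, ¬ f ⊆ T

lemma mem_Good {p : W → V} {F : Finset (Finset W)} {S : Finset V} {T : Finset W} :
    T ∈ Good p F S ↔ T.image p = S ∧ Set.InjOn p T ∧ ∀ f ∈ F, ¬ f ⊆ T := by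
  simp [Good]

lemma sdiff_mem_Good {p : W → V} {F : Finset (Finset W)} {S : Finset V} {T e : Finset W}
    (hT : T ∈ Good p F S) (he : e ⊆ T) : T \ e ∈ Good p F (S \ e.image p) := by
  rw [mem_Good] at hT ⊢
  obtain ⟨h1, h2, h3⟩ := hT
  refine ⟨?_, h2.mono (by simp), fun f hf hfe => h3 f hf
    (hfe.trans sdiff_subset)⟩
  rw [← h1]
  ext v
  simp only [mem_image, mem_sdiff]
  constructor
  · rintro ⟨x, ⟨hx, hxe⟩, rfl⟩
    refine ⟨⟨x, hx, rfl⟩, ?_⟩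
    rintro ⟨z, hz, hzx⟩
    have : z = x := h2 (he hz) hx hzx
    exact hxe (this ▸ hz)
  · rintro ⟨⟨x, hx, rfl⟩, hn⟩
    exact ⟨x, ⟨hx, fun hxe => hn ⟨x, hxe, rfl⟩⟩, rfl⟩

lemma chain {p : W → V} {F : Finset (Finset W)} {B S : Finset V} {β : ℝ} (hβ : 0 ≤ β)
    (ih : ∀ S' ⊂ S, ∀ w ∈ B, w ∉ S' → β * #(Good p F S') ≤ #(Good p F (insert w S')))
    (hSB : S ⊆ B) (S' U : Finset V) (hd : Disjoint S' U) (hU : S' ∪ U ⊆ S) :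
    β ^ #U * #(Good p F S') ≤ #(Good p F (S' ∪ U)) := by
  induction U using Finset.induction_on with
  | empty => simp
  | insert w U hw ihU =>
    rw [disjoint_insert_right] at hd
    rw [union_insert] at hU ⊢
    have hwU : w ∉ S' ∪ U := by simp [hw, hd.1]
    have h1 := ihU hd.2 ((subset_insert _ _).trans hU)
    have h2 := ih (S' ∪ U) ((ssubset_insert hwU).trans_subset hU) w
      (hSB (hU (mem_insert_self _ _))) hwU
    rw [card_insert_of_notMem hw, pow_succ']
    calc _ = β * (β ^ #U * #(Good p F S')) := by ring
      _ ≤ β * #(Good p F (S' ∪ U)) := by gcongr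
      _ ≤ _ := h2

/-- Prescribing the vertices of `e` costs a factor `β` each: deleting `e` maps the transversals
containing it injectively to edge-free transversals of the remaining parts. -/
lemma card_containing_mul_le {p : W → V} {F : Finset (Finset W)} {B S : Finset V} {β : ℝ}
    (hβ : 0 ≤ β)
    (ih : ∀ S' ⊂ S, ∀ w ∈ B, w ∉ S' → β * #(Good p F S') ≤ #(Good p F (insert w S')))
    (hSB : S ⊆ B) (e : Finset W) :
    β ^ #e * #((Good p F S).filter (e ⊆ ·)) ≤ #(Good p F S) := by
  rcases ((Good p F S).filter (e ⊆ ·)).eq_empty_or_nonempty with h | ⟨T, hT⟩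
  · simp [h]
  rw [mem_filter] at hT
  have hTG := mem_Good.1 hT.1
  have hinj : Set.InjOn p e := hTG.2.1.mono (by simpa using hT.2)
  have hsub : e.image p ⊆ S := hTG.1 ▸ image_subset_image hT.2
  have hle : #((Good p F S).filter (e ⊆ ·)) ≤ #(Good p F (S \ e.image p)) := by
    refine card_le_card_of_injOn (· \ e) ?_ ?_
    · intro T hT
      rw [mem_coe, mem_filter] at hT
      exact sdiff_mem_Good hT.1 hT.2
    · intro T hT T' hT' heq
      rw [mem_coe, mem_filter] at hT hT'
      dsimp only at heq
      rw [← sdiff_union_of_subset hT.2, ← sdiff_union_of_subset hT'.2, heq]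
  have hc := chain hβ ih hSB (S \ e.image p) (e.image p) sdiff_disjoint
    (by rw [sdiff_union_of_subset hsub])
  rw [sdiff_union_of_subset hsub, card_image_of_injOn hinj] at hc
  refine le_trans ?_ hc
  gcongr

lemma good_step {p : W → V} {F : Finset (Finset W)} {B : Finset V} {k D : ℕ} {m : ℝ}
    (hk : 2 ≤ k) (hm : 0 < m) (hF : ∀ f ∈ F, #f = k)
    (hdeg : ∀ y, p y ∈ B → #(F.filter (y ∈ ·)) ≤ D)
    (hpart : ∀ w ∈ B, m ≤ #(univ.filter (p · = w)))
    (hnum : (k : ℝ) * D ≤ (m * (1 - 1 / k)) ^ (k - 1)) (S : Finset V) :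
    S ⊆ B → ∀ w ∈ B, w ∉ S →
      m * (1 - 1 / k) * #(Good p F S) ≤ #(Good p F (insert w S)) := by
  induction S using Finset.strongInduction with
  | H S ih =>
  intro hSB w hwB hwS
  have hk' : (2 : ℝ) ≤ k := by exact_mod_cast hk
  have hq : 0 < 1 - 1 / (k : ℝ) := by
    rw [sub_pos, div_lt_one (by linarith)]; linarith
  set β := m * (1 - 1 / (k : ℝ)) with hβdef
  have hβ : 0 < β := by positivity
  have ih' : ∀ S' ⊂ S, ∀ w ∈ B, w ∉ S' → β * #(Good p F S') ≤ #(Good p F (insert w S')) :=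
    fun S' hS' => ih S' hS' (hS'.subset.trans hSB)
  set N := #(Good p F S) with hN
  -- `ok y` consists of the transversals of `S` that stay edge-free after adding `y`.
  let ok : W → Finset (Finset W) := fun y =>
    (Good p F S).filter fun T => ∀ f ∈ F, ¬ f ⊆ insert y T
  have hok : ∀ y, p y = w → (1 - 1 / (k : ℝ)) * N ≤ #(ok y) := by
    intro y hy
    have hsub : (Good p F S).filter (fun T => ¬ ∀ f ∈ F, ¬ f ⊆ insert y T) ⊆
        (F.filter (y ∈ ·)).biUnion fun f => (Good p F S).filter (f.erase y ⊆ ·) := by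
      intro T hT
      rw [mem_filter] at hT
      obtain ⟨hT, hbad⟩ := hT
      push Not at hbad
      obtain ⟨f, hf, hfT⟩ := hbad
      have hyf : y ∈ f := by
        by_contra hyf
        exact (mem_Good.1 hT).2.2 f hf ((subset_insert_iff_of_notMem hyf).1 hfT)
      rw [mem_biUnion]
      exact ⟨f, mem_filter.2 ⟨hf, hyf⟩, mem_filter.2 ⟨hT, subset_insert_iff.1 hfT⟩⟩
    set bad := #((Good p F S).filter (fun T => ¬ ∀ f ∈ F, ¬ f ⊆ insert y T)) with hbad
    have h1 : β ^ (k - 1) * bad ≤ D * N := by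
      have h2 : (bad : ℝ) ≤
          ∑ f ∈ F.filter (y ∈ ·), (#((Good p F S).filter (f.erase y ⊆ ·)) : ℝ) := by
        exact_mod_cast (card_le_card hsub).trans card_biUnion_le
      calc β ^ (k - 1) * bad
          ≤ β ^ (k - 1) *
            ∑ f ∈ F.filter (y ∈ ·), (#((Good p F S).filter (f.erase y ⊆ ·)) : ℝ) := by gcongr
        _ = ∑ f ∈ F.filter (y ∈ ·),
            β ^ (k - 1) * (#((Good p F S).filter (f.erase y ⊆ ·)) : ℝ) := mul_sum _ _ _
        _ ≤ ∑ f ∈ F.filter (y ∈ ·), (N : ℝ) := by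
            refine sum_le_sum fun f hf => ?_
            rw [mem_filter] at hf
            have := card_containing_mul_le hβ.le ih' hSB (f.erase y)
            rwa [card_erase_of_mem hf.2, hF f hf.1] at this
        _ = #(F.filter (y ∈ ·)) * N := by simp
        _ ≤ D * N := by
            gcongr
            exact hdeg y (hy ▸ hwB)
    have h3 : (k : ℝ) * bad ≤ N := by
      have hP : 0 < β ^ (k - 1) := by positivity
      refine le_of_mul_le_mul_left ?_ hP
      calc β ^ (k - 1) * (k * bad) = k * (β ^ (k - 1) * bad) := by ring
        _ ≤ k * (D * N) := by gcongr
        _ = k * D * N := by ring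
        _ ≤ _ := by gcongr
    have h4 : #(ok y) + bad = N := card_filter_add_card_filter_not _
    have h5 : (#(ok y) : ℝ) + bad = N := by exact_mod_cast h4
    have h6 : (bad : ℝ) ≤ N / k := by
      rw [le_div_iff₀ (by linarith)]; linarith
    have : (1 - 1 / (k : ℝ)) * N = N - N / k := by ring
    linarith
  have hinj : #((univ.filter (p · = w)).sigma ok) ≤ #(Good p F (insert w S)) := by
    have hnot : ∀ T ∈ Good p F S, ∀ y, p y = w → y ∉ T := by
      intro T hT y hy hyT
      rw [mem_Good] at hT
      exact hwS (hT.1 ▸ hy ▸ mem_image_of_mem p hyT)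
    refine card_le_card_of_injOn (fun a => insert a.1 a.2) ?_ ?_
    · rintro ⟨y, T⟩ h
      simp only [ok, mem_coe, mem_sigma, mem_filter, mem_univ, true_and] at h
      obtain ⟨hy, hT, hgood⟩ := h
      have hyT := hnot T hT y hy
      have hT' := mem_Good.1 hT
      simp only [mem_coe]
      rw [mem_Good]
      refine ⟨by rw [image_insert, hT'.1, hy], ?_, hgood⟩
      rw [coe_insert, Set.injOn_insert (by simpa using hyT)]
      refine ⟨hT'.2.1, ?_⟩
      rw [← coe_image, hT'.1, hy]
      simpa using hwS
    · rintro ⟨y, T⟩ h ⟨y', T'⟩ h' heq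
      simp only [ok, mem_coe, mem_sigma, mem_filter, mem_univ, true_and] at h h'
      dsimp only at heq
      have hyy : y = y' := by
        have : y ∈ insert y' T' := heq ▸ mem_insert_self _ _
        rcases mem_insert.1 this with h1 | h1
        · exact h1
        · exact absurd h1 (hnot T' h'.2.1 y h.1)
      subst hyy
      have : T = T' := by
        rw [← erase_insert (hnot T h.2.1 y h.1), heq, erase_insert (hnot T' h'.2.1 y h.1)]
      rw [this]
  have hsum : (#(univ.filter (p · = w)) : ℝ) * ((1 - 1 / (k : ℝ)) * N) ≤
      #((univ.filter (p · = w)).sigma ok) := by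
    rw [card_sigma]
    push_cast
    rw [← nsmul_eq_mul, ← sum_const]
    refine sum_le_sum fun y hy => hok y ?_
    simpa using hy
  calc β * N = m * ((1 - 1 / (k : ℝ)) * N) := by rw [hβdef]; ring
    _ ≤ #(univ.filter (p · = w)) * ((1 - 1 / (k : ℝ)) * N) := by
        gcongr
        exact hpart w hwB
    _ ≤ _ := hsum
    _ ≤ _ := by exact_mod_cast hinj

/-- A `k`-uniform hypergraph of maximum degree at most `D` on parts of size at least `m` has an
edge-free transversal if `k * D ≤ (m * (1 - 1 / k)) ^ (k - 1)`. -/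
lemma exists_good {p : W → V} {F : Finset (Finset W)} {B : Finset V} {k D : ℕ} {m : ℝ}
    (hk : 2 ≤ k) (hm : 0 < m) (hF : ∀ f ∈ F, #f = k)
    (hdeg : ∀ y, p y ∈ B → #(F.filter (y ∈ ·)) ≤ D)
    (hpart : ∀ w ∈ B, m ≤ #(univ.filter (p · = w)))
    (hnum : (k : ℝ) * D ≤ (m * (1 - 1 / k)) ^ (k - 1)) : (Good p F B).Nonempty := by
  have hk' : (2 : ℝ) ≤ k := by exact_mod_cast hk
  have hq : 0 < 1 - 1 / (k : ℝ) := by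
    rw [sub_pos, div_lt_one (by linarith)]; linarith
  have key : ∀ S : Finset V, S ⊆ B → (Good p F S).Nonempty := by
    intro S
    induction S using Finset.induction_on with
    | empty =>
      intro _
      refine ⟨∅, mem_Good.2 ⟨rfl, by simp, fun f hf hfe => ?_⟩⟩
      have := hF f hf
      rw [subset_empty.1 hfe, card_empty] at this
      omega
    | insert w S hw ihS =>
      intro hS
      have h1 := ihS ((subset_insert _ _).trans hS)
      have h2 := good_step hk hm hF hdeg hpart hnum S ((subset_insert _ _).trans hS) w
        (hS (mem_insert_self _ _)) hw
      have h3 : (0 : ℝ) < #(Good p F S) := by exact_mod_cast h1.card_pos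
      have h4 : (0 : ℝ) < #(Good p F (insert w S)) := lt_of_lt_of_le (by positivity) h2
      exact card_pos.1 (by exact_mod_cast h4)
  exact key B subset_rfl

end Counting

/-! ### The numerical condition -/

lemma numeric_bound {k m a b : ℕ} (hk : 2 ≤ k)
    (h : (Real.exp 1 * k * b) ^ (((k : ℝ) - 1)⁻¹) * a ≤ (m : ℝ)) :
    (k : ℝ) * (b * a ^ (k - 1) : ℕ) ≤ ((m : ℝ) * (1 - 1 / k)) ^ (k - 1) := by
  obtain ⟨n, rfl⟩ : ∃ n, k = n + 1 := ⟨k - 1, by omega⟩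
  have hn : (0 : ℝ) < n := by exact_mod_cast (by omega : 0 < n)
  simp only [Nat.add_sub_cancel]
  have hX : 0 ≤ Real.exp 1 * ((n + 1 : ℕ) : ℝ) * b := by positivity
  have h1 : Real.exp 1 * ((n + 1 : ℕ) : ℝ) * b * (a : ℝ) ^ n ≤ (m : ℝ) ^ n := by
    have := pow_le_pow_left₀ (by positivity) h n
    rw [mul_pow] at this
    have hexp : (((n + 1 : ℕ) : ℝ) - 1)⁻¹ = (n : ℝ)⁻¹ := by push_cast; ring
    rwa [hexp, Real.rpow_inv_natCast_pow hX (by omega)] at this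
  have h2 : (1 + 1 / (n : ℝ)) ^ n ≤ Real.exp 1 := by
    have := pow_le_pow_left₀ (by positivity) (Real.add_one_le_exp (1 / (n : ℝ))) n
    rw [← Real.exp_nat_mul, mul_one_div_cancel hn.ne'] at this
    rwa [add_comm]
  have h3 : (1 - 1 / ((n + 1 : ℕ) : ℝ)) * (1 + 1 / (n : ℝ)) = 1 := by
    push_cast
    field_simp
    ring
  have hq : 0 ≤ 1 - 1 / ((n + 1 : ℕ) : ℝ) := by
    rw [sub_nonneg, div_le_one (by positivity)]; push_cast; linarith
  have h4 : 1 ≤ (1 - 1 / ((n + 1 : ℕ) : ℝ)) ^ n * Real.exp 1 := by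
    calc (1 : ℝ) = ((1 - 1 / ((n + 1 : ℕ) : ℝ)) * (1 + 1 / (n : ℝ))) ^ n := by rw [h3, one_pow]
      _ = (1 - 1 / ((n + 1 : ℕ) : ℝ)) ^ n * (1 + 1 / (n : ℝ)) ^ n := mul_pow _ _ _
      _ ≤ _ := by gcongr
  have hq' := pow_nonneg hq n
  rw [mul_pow]
  set q := (1 - 1 / ((n + 1 : ℕ) : ℝ)) ^ n
  set c := ((n + 1 : ℕ) : ℝ)
  calc c * ((b * a ^ n : ℕ) : ℝ) = 1 * (c * b * a ^ n) := by push_cast; ring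
    _ ≤ (q * Real.exp 1) * (c * b * a ^ n) := by gcongr
    _ = q * (Real.exp 1 * c * b * a ^ n) := by ring
    _ ≤ q * m ^ n := by gcongr
    _ = _ := mul_comm _ _

/-! ### The hypergraph of blocking sets -/

section Blocking

variable {V W : Type*} [Fintype W]

/-- The sets `g (L' v)`, `v ∈ A`, of size `k`, where `g` sends each vertex of `L' v` to one of its
neighbours: a transversal containing one of them blocks all of `L' v`. -/
noncomputable def blocking (H : SimpleGraph W) (A : Set V) (L' : V → Finset W) (k : ℕ) :
    Finset (Finset W) :=
  univ.filter fun f => #f = k ∧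
    ∃ v ∈ A, ∃ g : W → W, (∀ x ∈ L' v, H.Adj x (g x)) ∧ f = (L' v).image g

/-- To specify a blocking set through `y`, choose the preimage `x` of `y` among the neighbours of
`y`, then a neighbour of each of the remaining `k - 1` vertices in the part of `x`. -/
lemma card_blocking_le {H : SimpleGraph W} {A : Set V} {L' : V → Finset W} {k DA DB : ℕ}
    {p : W → V} (hp : ∀ v ∈ A, ∀ x ∈ L' v, p x = v) (hL' : ∀ v ∈ A, #(L' v) = k)
    (hA : ∀ v ∈ A, ∀ x ∈ L' v, deg H x ≤ DA) (y : W) (hB : deg H y ≤ DB) :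
    #((blocking H A L' k).filter (y ∈ ·)) ≤ DB * DA ^ (k - 1) := by
  have hdeg : ∀ x, #(univ.filter (H.Adj x ·)) = deg H x := by
    intro x
    rw [deg, ← Set.ncard_coe_finset]
    congr 1
    ext z
    simp
  let E : W → Finset (Finset W) := fun x =>
    (((L' (p x)).erase x).pi fun z => univ.filter (H.Adj z ·)).image fun h =>
      insert y (((L' (p x)).erase x).attach.image fun z => h z.1 z.2)
  have hsub : (blocking H A L' k).filter (y ∈ ·) ⊆
      (univ.filter fun x => H.Adj y x ∧ p x ∈ A ∧ x ∈ L' (p x)).biUnion E := by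
    intro f hf
    simp only [blocking, mem_filter, mem_univ, true_and] at hf
    obtain ⟨⟨-, v, hv, g, hg, rfl⟩, hy⟩ := hf
    obtain ⟨x, hx, rfl⟩ := mem_image.1 hy
    have hpx := hp v hv x hx
    subst hpx
    rw [mem_biUnion]
    refine ⟨x, by simp [(hg x hx).symm, hv, hx], ?_⟩
    refine mem_image.2 ⟨fun z _ => g z, ?_, ?_⟩
    · rw [mem_pi]
      intro z hz
      simpa using hg z (mem_of_mem_erase hz)
    · have himg : ((L' (p x)).erase x).attach.image (fun z => g z.1) =
          ((L' (p x)).erase x).image g := by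
        ext
        simp
      rw [himg, ← image_insert, insert_erase hx]
  refine (card_le_card hsub).trans ?_
  refine (card_biUnion_le_card_mul _ _ (DA ^ (k - 1)) ?_).trans ?_
  · intro x hx
    simp only [mem_filter, mem_univ, true_and] at hx
    refine card_image_le.trans ?_
    rw [card_pi]
    refine (prod_le_pow_card _ _ DA fun z hz => ?_).trans ?_
    · rw [hdeg]
      exact hA _ hx.2.1 z (mem_of_mem_erase hz)
    · rw [card_erase_of_mem hx.2.2, hL' _ hx.2.1]
  · gcongr
    refine le_trans (card_le_card ?_) ((hdeg y).le.trans hB)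
    intro x hx
    simp only [mem_filter, mem_univ, true_and] at hx ⊢
    exact hx.1

end Blocking

theorem stmt0 {V W : Type*} [Fintype V] [Fintype W]
    (kA kB DA DB : ℕ) (hkA : 2 ≤ kA) (hkB : 0 < kB) (hDA : 0 < DA) (hDB : 0 < DB)
    (hcond : (Real.exp 1 * kA * DB) ^ (((kA : ℝ) - 1)⁻¹) * DA ≤ (kB : ℝ))
    (G : SimpleGraph V) (H : SimpleGraph W) (AG BG : Set V) (AH BH : Set W)
    (L : V → Set W)
    (hcover : IsBipartiteCorrespondenceCover G H AG BG AH BH L)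
    (hdegA : ∀ x ∈ AH, deg H x ≤ DA) (hdegB : ∀ x ∈ BH, deg H x ≤ DB)
    (hLA : ∀ v ∈ AG, kA ≤ (L v).ncard) (hLB : ∀ w ∈ BG, kB ≤ (L w).ncard) :
    HasIndepTransversal H L := by
  obtain ⟨⟨hGU, hGD, hGE⟩, -, ⟨⟨hpart, hnon⟩, hmatch⟩, hLAH, hLBH⟩ := hcover
  have hadj : ∀ ⦃u v : V⦄ ⦃x y : W⦄, x ∈ L u → y ∈ L v → H.Adj x y → G.Adj u v := by
    intro u v x y hx hy hxy
    by_contra h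
    exact hnon h x hx y hy hxy
  choose p hpmem hpuniq using hpart
  have hpL : ∀ v x, p x = v ↔ x ∈ L v := fun v x =>
    ⟨fun h => h ▸ hpmem x, fun h => (hpuniq x v h).symm⟩
  have hex : ∀ v, ∃ s : Finset W, (∀ x ∈ s, x ∈ L v) ∧ (v ∈ AG → #s = kA) := by
    intro v
    by_cases hv : v ∈ AG
    · have h := hLA v hv
      rw [Set.ncard_eq_toFinset_card'] at h
      obtain ⟨s, hs, hc⟩ := exists_subset_card_eq h
      exact ⟨s, fun x hx => by simpa using hs hx, fun _ => hc⟩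
    · exact ⟨∅, by simp, fun h => absurd h hv⟩
  choose L' hL'L hL'card using hex
  obtain ⟨T, hT⟩ : (Good p (blocking H AG L' kA) BG.toFinset).Nonempty := by
    refine exists_good (k := kA) (D := DB * DA ^ (kA - 1)) (m := kB) hkA
      (by exact_mod_cast hkB) ?_ ?_ ?_ (numeric_bound hkA hcond)
    · intro f hf
      simp only [blocking, mem_filter] at hf
      exact hf.2.1
    · intro y hy
      refine card_blocking_le (p := p) (fun v _ x hx => (hpL v x).2 (hL'L v x hx))
        hL'card (fun v hv x hx => hdegA x (hLAH v hv (hL'L v x hx))) y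
        (hdegB y (hLBH (p y) (by simpa using hy) (hpmem y)))
    · intro w hw
      have h := hLB w (by simpa using hw)
      rw [Set.ncard_eq_toFinset_card'] at h
      have : (L w).toFinset = univ.filter (p · = w) := by
        ext x
        simp [hpL]
      rw [this] at h
      exact_mod_cast h
  rw [mem_Good] at hT
  obtain ⟨hTim, -, hTF⟩ := hT
  have hchoice : ∀ v, ∃ x, x ∈ L v ∧ (v ∈ BG → x ∈ T) ∧
      (v ∈ AG → ∀ y ∈ T, ¬ H.Adj x y) := by
    intro v
    by_cases hvB : v ∈ BG
    · have : v ∈ T.image p := by rw [hTim]; simpa using hvB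
      obtain ⟨x, hx, hxv⟩ := mem_image.1 this
      exact ⟨x, (hpL v x).1 hxv, fun _ => hx, fun hvA =>
        absurd hvB (Set.disjoint_left.1 hGD hvA)⟩
    · have hvA : v ∈ AG := by
        have : v ∈ AG ∪ BG := hGU ▸ Set.mem_univ v
        exact this.resolve_right hvB
      by_contra hcon
      push Not at hcon
      have hblock : ∀ x, ∃ y, x ∈ L' v → y ∈ T ∧ H.Adj x y := by
        intro x
        by_cases hx : x ∈ L' v
        · obtain ⟨-, y, hy, hxy⟩ := hcon x (hL'L v x hx) (fun h => absurd h hvB)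
          exact ⟨y, fun _ => ⟨hy, hxy⟩⟩
        · exact ⟨x, fun h => absurd h hx⟩
      choose g hg using hblock
      refine hTF ((L' v).image g) ?_ (image_subset_iff.2 fun x hx => (hg x hx).1)
      simp only [blocking, mem_filter, mem_univ, true_and]
      refine ⟨?_, v, hvA, g, fun x hx => (hg x hx).2, rfl⟩
      -- The matching condition makes `g` injective on `L' v`.
      rw [card_image_of_injOn, hL'card v hvA]
      intro x hx x' hx' hxx
      have h1 := (hg x hx).2
      have h2 := (hg x' hx').2
      rw [← hxx] at h2
      have hxL := hL'L v x hx
      exact hmatch (hadj (hpmem (g x)) hxL h1.symm) (g x) (hpmem _) x hxL x' (hL'L v x' hx')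
        h1.symm h2.symm
  choose c hcL hcB hcA using hchoice
  refine ⟨Set.range c, ?_, fun v => ⟨c v, ⟨hcL v, v, rfl⟩, ?_⟩⟩
  · rintro _ ⟨u, rfl⟩ _ ⟨v, rfl⟩ huv
    rcases hGE (hadj (hcL u) (hcL v) huv) with ⟨hu, hv⟩ | ⟨hu, hv⟩
    · exact hcA u hu _ (hcB v hv) huv
    · exact hcA v hv _ (hcB u hu) huv.symm
  · rintro _ ⟨hw, u, rfl⟩
    have h1 := (hpL v _).2 hw
    have h2 := (hpL u _).2 (hcL u)
    rw [← h1, h2]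
end

section
/- Let $k_A$, $k_B$, $D_A$, $D_B$ be positive integers satisfying $e\,(k_A D_A (k_B D_B - 1) + 1)\,\bigl(1 - (1 - 1/k_B)^{D_A}\bigr)^{k_A} \le 1$. Let $G$ and $H$ be finite bipartite graphs with bipartitions $(A_G,B_G)$ and $(A_H,B_H)$ respectively, such that $H$ is a bipartite correspondence-cover of $G$ with respect to a map $L$. If every vertex of $A_H$ has degree at most $D_A$ in $H$, every vertex of $B_H$ has degree at most $D_B$ in $H$, $|L(v)| \ge k_A$ for all $v \in A_G$, and $|L(w)| \ge k_B$ for all $w \in B_G$, then $H$ admits an independent transversal with respect to $L$. -/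
open Finset

/-! ### Negative correlation in a product space -/

/-- If moving coordinate `w` away from `y` never leaves `E`, then conditionally on `E`
the coordinate `w` equals `y` with probability at most `1 / k`. -/
lemma card_coord_eq {I : Type*} [DecidableEq I] {k : ℕ}
    (E : Finset (I → Fin k)) (w : I) (y : Fin k)
    (h : ∀ f ∈ E, f w = y → ∀ z, Function.update f w z ∈ E) :
    k * #{f ∈ E | f w = y} ≤ #E := by
  have h1 : #({f ∈ E | f w = y} ×ˢ (univ : Finset (Fin k))) ≤ #E := by
    apply Finset.card_le_card_of_injOn (fun q => Function.update q.1 w q.2)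
    · intro q hq
      simp only [coe_product, Set.mem_prod, mem_coe, mem_filter] at hq
      exact h _ hq.1.1 hq.1.2 _
    · rintro ⟨f, z⟩ hq ⟨f', z'⟩ hq' heq
      simp only [coe_product, Set.mem_prod, mem_coe, mem_filter] at hq hq' heq
      have hz : z = z' := by simpa using congrFun heq w
      have hf : f = f' := by
        funext u
        by_cases hu : u = w
        · subst hu
          rw [hq.1.2, hq'.1.2]
        · simpa [hu] using congrFun heq u
      rw [hz, hf]
  rw [card_product, card_univ, Fintype.card_fin] at h1
  linarith

/-- Avoiding the values `y w`, `w ∈ U`, is positively correlated with every event `E` that is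
preserved by moving coordinates `w ∈ U` away from `y w`. -/
lemma card_avoid {I : Type*} [DecidableEq I] {k : ℕ} (hk : 0 < k)
    (E : Finset (I → Fin k)) (U : Finset I) (y : I → Fin k)
    (h : ∀ w ∈ U, ∀ f ∈ E, f w = y w → ∀ z, Function.update f w z ∈ E) :
    (1 - 1 / (k : ℝ)) ^ #U * #E ≤ #{f ∈ E | ∀ w ∈ U, f w ≠ y w} := by
  induction U using Finset.induction_on with
  | empty => simp
  | insert w U hw ih =>
    have ih' := ih fun u hu => h u (mem_insert_of_mem hu)
    set E' := {f ∈ E | ∀ u ∈ U, f u ≠ y u} with hE'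
    have hk' : (1 : ℝ) ≤ k := by exact_mod_cast hk
    have hcl : ∀ f ∈ E', f w = y w → ∀ z, Function.update f w z ∈ E' := by
      intro f hf hfw z
      rw [hE', mem_filter] at hf ⊢
      refine ⟨h w (mem_insert_self _ _) f hf.1 hfw z, fun u hu => ?_⟩
      have huw : u ≠ w := fun e => hw (e ▸ hu)
      rw [Function.update_of_ne huw]
      exact hf.2 u hu
    have h1 : (k : ℝ) * #{f ∈ E' | f w = y w} ≤ #E' := by
      exact_mod_cast card_coord_eq E' w (y w) hcl
    have h2 : (#{f ∈ E' | f w = y w} : ℝ) + #{f ∈ E' | f w ≠ y w} = #E' := by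
      exact_mod_cast Finset.card_filter_add_card_filter_not (s := E') (fun f => f w = y w)
    have h3 : {f ∈ E | ∀ u ∈ insert w U, f u ≠ y u} = {f ∈ E' | f w ≠ y w} := by
      ext f
      simp only [hE', mem_filter, mem_insert, forall_eq_or_imp]
      tauto
    rw [h3, card_insert_of_notMem hw, pow_succ']
    have h4 : (#{f ∈ E' | f w = y w} : ℝ) ≤ 1 / k * #E' := by
      rw [one_div, inv_mul_eq_div, le_div_iff₀ (by linarith)]
      linarith
    have h5 : (0 : ℝ) ≤ 1 - 1 / k := by
      rw [sub_nonneg, div_le_one (by linarith)]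
      exact hk'
    calc (1 - 1 / (k : ℝ)) * (1 - 1 / (k : ℝ)) ^ #U * #E
        = (1 - 1 / (k : ℝ)) * ((1 - 1 / (k : ℝ)) ^ #U * #E) := by ring
      _ ≤ (1 - 1 / (k : ℝ)) * #E' := mul_le_mul_of_nonneg_left ih' h5
      _ ≤ _ := by linarith

/-- An element `x ∈ S` is hit when some coordinate `w ∈ U x` takes the value `y x w`. If no
coordinate can hit two elements at once, all of `S` is hit with probability at most
`(1 - (1 - 1/k)^D)^|S|`, even conditionally on an event `Q` not depending on the coordinates in the
sets `U x`. -/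
lemma card_all_hit {I X : Type*} [DecidableEq I] {k : ℕ} (hk : 0 < k) (D : ℕ)
    (Q : Finset (I → Fin k)) (S : Finset X) (U : X → Finset I) (y : X → I → Fin k)
    (hU : ∀ x ∈ S, #(U x) ≤ D)
    (hy : ∀ x ∈ S, ∀ x' ∈ S, ∀ w, w ∈ U x → w ∈ U x' → y x w = y x' w → x = x')
    (hQ : ∀ x ∈ S, ∀ w ∈ U x, ∀ f ∈ Q, ∀ z, Function.update f w z ∈ Q) :
    (#{f ∈ Q | ∀ x ∈ S, ∃ w ∈ U x, f w = y x w} : ℝ) ≤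
      (1 - (1 - 1 / (k : ℝ)) ^ D) ^ #S * #Q := by
  classical
  have hk' : (1 : ℝ) ≤ k := by exact_mod_cast hk
  have h5 : (0 : ℝ) ≤ 1 - 1 / k := by
    rw [sub_nonneg, div_le_one (by linarith)]
    exact hk'
  have h6 : 1 - 1 / (k : ℝ) ≤ 1 := by
    have : (0 : ℝ) ≤ 1 / k := by positivity
    linarith
  have h7 : (1 - 1 / (k : ℝ)) ^ D ≤ 1 := pow_le_one₀ h5 h6
  induction S using Finset.induction_on with
  | empty => simp
  | insert x S hx ih =>
    have ih' := ih (fun u hu => hU u (mem_insert_of_mem hu))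
      (fun u hu u' hu' => hy u (mem_insert_of_mem hu) u' (mem_insert_of_mem hu'))
      (fun u hu => hQ u (mem_insert_of_mem hu))
    set E := {f ∈ Q | ∀ x ∈ S, ∃ w ∈ U x, f w = y x w} with hE
    have hcl : ∀ w ∈ U x, ∀ f ∈ E, f w = y x w → ∀ z, Function.update f w z ∈ E := by
      intro w hw f hf hfw z
      rw [hE, mem_filter] at hf ⊢
      refine ⟨hQ x (mem_insert_self _ _) w hw f hf.1 z, fun x' hx' => ?_⟩
      obtain ⟨w', hw', hfw'⟩ := hf.2 x' hx'
      refine ⟨w', hw', ?_⟩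
      -- the coordinate hitting `x'` is not `w`, since `w` hits `x`
      have hne : w' ≠ w := by
        rintro rfl
        exact hx (hy x (mem_insert_self _ _) x' (mem_insert_of_mem hx') w' hw hw'
          (hfw.symm.trans hfw') ▸ hx')
      rw [Function.update_of_ne hne, hfw']
    have h1 : (1 - 1 / (k : ℝ)) ^ #(U x) * #E ≤ #{f ∈ E | ∀ w ∈ U x, f w ≠ y x w} := by
      convert card_avoid hk E (U x) (y x) hcl
    have h2 : (1 - 1 / (k : ℝ)) ^ D ≤ (1 - 1 / (k : ℝ)) ^ #(U x) :=
      pow_le_pow_of_le_one h5 h6 (hU x (mem_insert_self _ _))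
    have h3 : (#{f ∈ E | ∀ w ∈ U x, f w ≠ y x w} : ℝ) +
        #{f ∈ E | ¬ ∀ w ∈ U x, f w ≠ y x w} = #E := by
      exact_mod_cast Finset.card_filter_add_card_filter_not (s := E)
        (fun f => ∀ w ∈ U x, f w ≠ y x w)
    have h4 : {f ∈ Q | ∀ x' ∈ insert x S, ∃ w ∈ U x', f w = y x' w} =
        {f ∈ E | ¬ ∀ w ∈ U x, f w ≠ y x w} := by
      ext f
      simp only [hE, mem_filter, mem_insert, forall_eq_or_imp, not_forall, not_not, exists_prop]
      tauto
    rw [h4, card_insert_of_notMem hx, pow_succ']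
    have h8 := mul_le_mul_of_nonneg_right h2 (Nat.cast_nonneg (α := ℝ) #E)
    calc (#{f ∈ E | ¬ ∀ w ∈ U x, f w ≠ y x w} : ℝ)
        ≤ (1 - (1 - 1 / (k : ℝ)) ^ D) * #E := by linarith
      _ ≤ (1 - (1 - 1 / (k : ℝ)) ^ D) * ((1 - (1 - 1 / (k : ℝ)) ^ D) ^ #S * #Q) :=
          mul_le_mul_of_nonneg_left ih' (by linarith)
      _ = _ := by ring

/-! ### The local lemma -/

/-- Counting form of the lopsided Lovász local lemma, with a uniform weight `a`: if each event
`E j` has probability at most `p ≤ a (1 - a)^d` conditionally on the absence of any events outside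
`Γ j`, where `|Γ j| ≤ d`, then some outcome avoids all events.
`N S` is the set of outcomes avoiding all events in `S`, and `M j S` is its part inside `E j`. -/
lemma local_lemma_weight {Ω J : Type*} [Fintype Ω] [Nonempty Ω] [Fintype J] [DecidableEq J]
    (E : J → Ω → Prop) (Γ : J → Finset J) (d : ℕ) (p a : ℝ)
    (ha0 : 0 ≤ a) (ha1 : a < 1) (hpa : p ≤ a * (1 - a) ^ d)
    (hΓ : ∀ j, #(Γ j) ≤ d)
    (N : Finset J → Finset Ω) (hN : ∀ S ω, ω ∈ N S ↔ ∀ i ∈ S, ¬ E i ω)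
    (M : J → Finset J → Finset Ω) (hM : ∀ j S ω, ω ∈ M j S ↔ E j ω ∧ ∀ i ∈ S, ¬ E i ω)
    (hp : ∀ j S, j ∉ S → Disjoint S (Γ j) → (#(M j S) : ℝ) ≤ p * #(N S)) :
    ∃ ω, ∀ j, ¬ E j ω := by
  classical
  have hsplit : ∀ j S, (#(N S) : ℝ) = #(M j S) + #(N (insert j S)) := by
    intro j S
    have hd : Disjoint (M j S) (N (insert j S)) := by
      rw [Finset.disjoint_left]
      intro ω h1 h2
      exact (hN _ _).1 h2 j (mem_insert_self _ _) ((hM _ _ _).1 h1).1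
    have hu : N S = M j S ∪ N (insert j S) := by
      ext ω
      simp only [mem_union, hN, hM, mem_insert, forall_eq_or_imp]
      tauto
    rw [hu, card_union_of_disjoint hd]
    push_cast
    rfl
  have key : ∀ n : ℕ, ∀ S : Finset J, #S = n → ∀ j, j ∉ S → (#(M j S) : ℝ) ≤ a * #(N S) := by
    intro n
    induction n using Nat.strong_induction_on with
    | _ n ih =>
      intro S hS j hj
      have hstep : ∀ T ⊆ S ∩ Γ j,
          (1 - a) ^ #T * #(N (S \ Γ j)) ≤ (#(N (T ∪ S \ Γ j)) : ℝ) := by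
        intro T
        induction T using Finset.induction_on with
        | empty => simp
        | insert i T hi ihT =>
          intro hT
          have hiS : i ∈ S ∩ Γ j := hT (mem_insert_self _ _)
          have hT' : T ⊆ S ∩ Γ j := fun u hu => hT (mem_insert_of_mem hu)
          have hi' : i ∉ T ∪ S \ Γ j := by
            simp only [mem_union, mem_sdiff, not_or, not_and, not_not]
            exact ⟨hi, fun _ => (mem_inter.1 hiS).2⟩
          have hsub : T ∪ S \ Γ j ⊂ S := by
            refine (Finset.ssubset_iff_of_subset ?_).2 ⟨i, (mem_inter.1 hiS).1, hi'⟩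
            exact union_subset (fun u hu => (mem_inter.1 (hT' hu)).1) sdiff_subset
          have h1 := ih _ (hS ▸ card_lt_card hsub) _ rfl i hi'
          have h2 := hsplit i (T ∪ S \ Γ j)
          rw [insert_union, card_insert_of_notMem hi, pow_succ']
          have h3 := mul_le_mul_of_nonneg_left (ihT hT') (sub_nonneg.2 ha1.le)
          linarith
      have h1 := hstep _ (Finset.Subset.refl _)
      have h2 : S ∩ Γ j ∪ S \ Γ j = S := by
        ext u
        simp only [mem_union, mem_inter, mem_sdiff]
        tauto
      rw [h2] at h1
      have h3 : (#(M j S) : ℝ) ≤ #(M j (S \ Γ j)) := by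
        exact_mod_cast card_le_card fun ω hω => by
          rw [hM] at hω ⊢
          exact ⟨hω.1, fun i hi => hω.2 i (mem_sdiff.1 hi).1⟩
      have h4 := hp j (S \ Γ j) (fun h => hj (mem_sdiff.1 h).1) sdiff_disjoint
      have h5 : (1 - a) ^ d ≤ (1 - a) ^ #(S ∩ Γ j) :=
        pow_le_pow_of_le_one (by linarith) (by linarith)
          ((card_le_card inter_subset_right).trans (hΓ j))
      have h6 : p ≤ a * (1 - a) ^ #(S ∩ Γ j) :=
        hpa.trans (mul_le_mul_of_nonneg_left h5 ha0)
      calc (#(M j S) : ℝ) ≤ p * #(N (S \ Γ j)) := h3.trans h4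
        _ ≤ a * (1 - a) ^ #(S ∩ Γ j) * #(N (S \ Γ j)) :=
            mul_le_mul_of_nonneg_right h6 (Nat.cast_nonneg _)
        _ = a * ((1 - a) ^ #(S ∩ Γ j) * #(N (S \ Γ j))) := by ring
        _ ≤ a * #(N S) := mul_le_mul_of_nonneg_left h1 ha0
  have hpos : ∀ S : Finset J, (0 : ℝ) < #(N S) := by
    intro S
    induction S using Finset.induction_on with
    | empty =>
      have : (N ∅).Nonempty := ⟨Classical.arbitrary Ω, by simp [hN]⟩
      exact_mod_cast this.card_pos
    | insert j S hj ih =>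
      have h1 := key _ S rfl j hj
      have h2 := hsplit j S
      nlinarith
  have h := hpos univ
  obtain ⟨ω, hω⟩ := Finset.card_pos.1 (by exact_mod_cast h : 0 < #(N univ))
  exact ⟨ω, fun j => (hN _ _).1 hω j (mem_univ _)⟩

/-- The weight needed in the local lemma under the symmetric condition `e (d + 1) p ≤ 1`. -/
lemma exists_weight (d : ℕ) (p : ℝ) (h : Real.exp 1 * ((d : ℝ) + 1) * p ≤ 1) :
    ∃ a : ℝ, 0 ≤ a ∧ a < 1 ∧ p ≤ a * (1 - a) ^ d := by
  rcases Nat.eq_zero_or_pos d with rfl | hd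
  · -- for `d = 0` the usual weight `1 / (d + 1)` would equal `1`
    refine ⟨1 / 2, by norm_num, by norm_num, ?_⟩
    have he : (2 : ℝ) ≤ Real.exp 1 := by
      have := Real.add_one_le_exp (1 : ℝ)
      linarith
    simp only [Nat.cast_zero, zero_add, mul_one, pow_zero] at h ⊢
    by_contra! hp
    nlinarith
  · have hd' : (0 : ℝ) < d := by exact_mod_cast hd
    refine ⟨1 / (d + 1), by positivity, ?_, ?_⟩
    · rw [div_lt_one (by positivity)]
      linarith
    · have h1 : (1 : ℝ) - 1 / (d + 1) = (1 + 1 / (d : ℝ))⁻¹ := by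
        field_simp
        ring
      have h2 : (1 + 1 / (d : ℝ)) ^ d ≤ Real.exp 1 := by
        have h3 : 1 + 1 / (d : ℝ) ≤ Real.exp (1 / d) := by
          have := Real.add_one_le_exp (1 / (d : ℝ))
          linarith
        calc (1 + 1 / (d : ℝ)) ^ d ≤ Real.exp (1 / d) ^ d :=
              pow_le_pow_left₀ (by positivity) h3 d
          _ = Real.exp 1 := by
              rw [← Real.exp_nat_mul]
              congr 1
              field_simp
      have h4 : (Real.exp 1)⁻¹ ≤ (1 - 1 / ((d : ℝ) + 1)) ^ d := by
        rw [h1, inv_pow]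
        exact inv_anti₀ (by positivity) h2
      calc p ≤ 1 / (d + 1) * (Real.exp 1)⁻¹ := by
            rw [one_div, ← mul_inv, ← one_div, le_div_iff₀ (by positivity)]
            linarith
        _ ≤ _ := mul_le_mul_of_nonneg_left h4 (by positivity)

/-- Symmetric lopsided Lovász local lemma, in counting form. -/
lemma local_lemma {Ω J : Type*} [Fintype Ω] [Nonempty Ω] [Fintype J] [DecidableEq J]
    (E : J → Ω → Prop) (Γ : J → Finset J) (d : ℕ) (p : ℝ)
    (h : Real.exp 1 * ((d : ℝ) + 1) * p ≤ 1)
    (hΓ : ∀ j, #(Γ j) ≤ d)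
    (hp : ∀ j S, j ∉ S → Disjoint S (Γ j) → ∀ Q : Finset Ω, (∀ ω, ω ∈ Q ↔ ∀ i ∈ S, ¬ E i ω) →
      ∀ R : Finset Ω, (∀ ω, ω ∈ R ↔ ω ∈ Q ∧ E j ω) → (#R : ℝ) ≤ p * #Q) :
    ∃ ω, ∀ j, ¬ E j ω := by
  classical
  obtain ⟨a, ha0, ha1, hpa⟩ := exists_weight d p h
  refine local_lemma_weight E Γ d p a ha0 ha1 hpa hΓ
    (fun S => {ω | ∀ i ∈ S, ¬ E i ω}) (by simp)
    (fun j S => {ω | E j ω ∧ ∀ i ∈ S, ¬ E i ω}) (by simp) ?_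
  intro j S hj hd
  refine hp j S hj hd _ (by simp) _ ?_
  intro ω
  simp [and_comm]

/-! ### Independent transversals -/

/-- The count of dependent events: a union over `x ∈ S` and `w ∈ U x` of sets of size at most `b`,
each containing `v`, has at most `|S| D (b - 1)` elements besides `v`. -/
lemma card_biUnion_erase {X I V : Type*} [DecidableEq V]
    (S : Finset X) (U : X → Finset I) (P : I → Finset V) (v : V) (D b : ℕ)
    (hU : ∀ x ∈ S, #(U x) ≤ D) (hP : ∀ x ∈ S, ∀ w ∈ U x, v ∈ P w ∧ #(P w) ≤ b) :
    #(S.biUnion fun x => (U x).biUnion fun w => (P w).erase v) ≤ #S * (D * (b - 1)) := by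
  refine card_biUnion_le_card_mul _ _ _ fun x hx => ?_
  refine (card_biUnion_le_card_mul _ _ (b - 1) fun w hw => ?_).trans
    (Nat.mul_le_mul_right _ (hU x hx))
  rw [card_erase_of_mem (hP x hx w hw).1]
  exact Nat.sub_le_sub_right (hP x hx w hw).2 1

theorem stmt1 {V W : Type*} [Fintype V] [Fintype W]
    (kA kB DA DB : ℕ) (hkA : 0 < kA) (hkB : 0 < kB) (hDA : 0 < DA) (hDB : 0 < DB)
    (hcond : Real.exp 1 * ((kA : ℝ) * DA * ((kB : ℝ) * DB - 1) + 1) *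
      (1 - (1 - 1 / (kB : ℝ)) ^ DA) ^ kA ≤ 1)
    (G : SimpleGraph V) (H : SimpleGraph W) (AG BG : Set V) (AH BH : Set W)
    (L : V → Set W)
    (hcover : IsBipartiteCorrespondenceCover G H AG BG AH BH L)
    (hdegA : ∀ x ∈ AH, deg H x ≤ DA) (hdegB : ∀ x ∈ BH, deg H x ≤ DB)
    (hLA : ∀ v ∈ AG, kA ≤ (L v).ncard) (hLB : ∀ w ∈ BG, kB ≤ (L w).ncard) :
    HasIndepTransversal H L := by
  classical
  obtain ⟨⟨hGu, hGd, hGadj⟩, -, ⟨⟨hpart, hcov⟩, hmatch⟩, hLAH, hLBH⟩ := hcover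
  -- `owner x` is the vertex of `G` whose part contains `x`
  choose owner howner hown_uniq using hpart
  have hown : ∀ {x v}, x ∈ L v → owner x = v := fun {x v} h => (hown_uniq x v h).symm
  have hcov' : ∀ {v v' x y}, x ∈ L v → y ∈ L v' → H.Adj x y → G.Adj v v' :=
    fun {v v' x y} hx hy hxy => by
      by_contra hn
      exact hcov hn x hx y hy hxy
  have hSA : ∀ v : AG, ∃ S : Finset W, (∀ x ∈ S, x ∈ L v) ∧ #S = kA := by
    rintro ⟨v, hv⟩
    have h1 := hLA v hv
    rw [Set.ncard_eq_toFinset_card'] at h1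
    obtain ⟨S, hS, hc⟩ := exists_subset_card_eq h1
    exact ⟨S, fun x hx => by simpa using hS hx, hc⟩
  choose S hSL hSc using hSA
  have hSB : ∀ w : BG, ∃ c : Fin kB → W, Function.Injective c ∧ ∀ z, c z ∈ L w := by
    rintro ⟨w, hw⟩
    have h1 := hLB w hw
    rw [Set.ncard_eq_toFinset_card'] at h1
    obtain ⟨S, hS, hc⟩ := exists_subset_card_eq h1
    refine ⟨fun z => (S.equivFin.symm (Fin.cast hc.symm z)).1, ?_, fun z => ?_⟩
    · intro z z' h
      simpa [Subtype.ext_iff] using S.equivFin.symm.injective (Subtype.ext h)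
    · simpa using hS (S.equivFin.symm (Fin.cast hc.symm z)).2
  choose c hcinj hcL using hSB
  -- `U x` is the set of coordinates that can hit `x`, namely by taking the value `y x w`
  let U : W → Finset BG := fun x => {w | ∃ z, H.Adj x (c w z)}
  have hyex : ∀ x (w : BG), ∃ z : Fin kB, w ∈ U x → H.Adj x (c w z) := by
    intro x w
    by_cases hw : w ∈ U x
    · obtain ⟨z, hz⟩ := (mem_filter.1 hw).2
      exact ⟨z, fun _ => hz⟩
    · exact ⟨⟨0, hkB⟩, fun h => absurd h hw⟩
  choose y hy using hyex
  have hU_card : ∀ v : AG, ∀ x ∈ S v, #(U x) ≤ DA := by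
    intro v x hx
    refine le_trans ?_ (hdegA x (hLAH v v.2 (hSL v x hx)))
    rw [deg, Set.ncard_eq_toFinset_card']
    refine card_le_card_of_injOn (fun w => c w (y x w)) ?_ ?_
    · intro w hw
      simpa using hy x w hw
    · intro w _ w' _ h
      have h' : c w (y x w) = c w' (y x w') := h
      apply Subtype.ext
      rw [← hown (hcL w (y x w)), h', hown (hcL w' _)]
  -- `P w` is the set of vertices of `G` whose part has an element adjacent to a value at `w`
  let P : BG → Finset V := fun w =>
    ((univ : Finset (Fin kB)).biUnion fun z => (H.neighborSet (c w z)).toFinset).image owner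
  have hP_card : ∀ w, #(P w) ≤ kB * DB := by
    intro w
    refine card_image_le.trans ?_
    refine (card_biUnion_le_card_mul _ _ DB fun z _ => ?_).trans (by simp)
    rw [← Set.ncard_eq_toFinset_card']
    exact hdegB _ (hLBH w w.2 (hcL w z))
  have hP_mem : ∀ (v : AG) (x), x ∈ S v → ∀ w ∈ U x, (v : V) ∈ P w := by
    intro v x hx w hw
    refine mem_image.2 ⟨x, mem_biUnion.2 ⟨y x w, mem_univ _, ?_⟩, hown (hSL v x hx)⟩
    simpa using (hy x w hw).symm
  let Γ' : AG → Finset V := fun v =>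
    (S v).biUnion fun x => (U x).biUnion fun w => (P w).erase (v : V)
  let Γ : AG → Finset AG := fun v => {v' | (v' : V) ∈ Γ' v}
  have hΓ : ∀ v, #(Γ v) ≤ kA * (DA * (kB * DB - 1)) := by
    intro v
    have h1 : #(Γ v) ≤ #(Γ' v) := by
      refine card_le_card_of_injOn Subtype.val ?_ Subtype.val_injective.injOn
      intro v' hv'
      exact (mem_filter.1 hv').2
    refine h1.trans ?_
    rw [← hSc v]
    exact card_biUnion_erase _ _ _ _ _ _ (hU_card v)
      fun x hx w hw => ⟨hP_mem v x hx w hw, hP_card w⟩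
  have : Nonempty (Fin kB) := ⟨⟨0, hkB⟩⟩
  have hd : ((kA * (DA * (kB * DB - 1)) : ℕ) : ℝ) = (kA : ℝ) * DA * ((kB : ℝ) * DB - 1) := by
    have : 1 ≤ kB * DB := Nat.mul_pos hkB hDB
    push_cast [Nat.cast_sub this]
    ring
  obtain ⟨f, hf⟩ := local_lemma (Ω := BG → Fin kB) (J := AG)
    (fun v f => ∀ x ∈ S v, ∃ w ∈ U x, f w = y x w) Γ (kA * (DA * (kB * DB - 1)))
    ((1 - (1 - 1 / (kB : ℝ)) ^ DA) ^ kA) (by rw [hd]; exact hcond) hΓ (by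
      intro v T hvT hT Q hQ R hR
      have hRe : R = {f ∈ Q | ∀ x ∈ S v, ∃ w ∈ U x, f w = y x w} := by
        ext f
        rw [hR, mem_filter]
      have hmain := card_all_hit hkB DA Q (S v) U y (hU_card v) ?_ ?_
      · rw [hRe, ← hSc v]
        convert hmain
      · -- two elements of `L v` have no common neighbour, by the matching condition at `v`
        intro x hx x' hx' w hw hw' hyy
        have h1 := hy x w hw
        have h2 := hy x' w hw'
        rw [← hyy] at h2
        exact hmatch (hcov' (hcL w _) (hSL v x hx) h1.symm) _ (hcL w (y x w)) x (hSL v x hx)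
          x' (hSL v x' hx') h1.symm h2.symm
      · -- bad events outside `Γ v` do not depend on coordinates that can hit `L v`
        intro x hx w hw g hg z
        rw [hQ] at hg ⊢
        intro v' hv' hbad
        refine hg v' hv' fun x' hx' => ?_
        obtain ⟨w', hw', hgw'⟩ := hbad x' hx'
        refine ⟨w', hw', ?_⟩
        have hne : w' ≠ w := by
          rintro rfl
          refine Finset.disjoint_left.1 hT hv' (mem_filter.2 ⟨mem_univ _, ?_⟩)
          refine mem_biUnion.2 ⟨x, hx, mem_biUnion.2 ⟨w', hw, mem_erase.2 ⟨?_, ?_⟩⟩⟩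
          · intro h
            exact hvT (Subtype.ext h ▸ hv')
          · exact hP_mem v' x' hx' w' hw'
        rwa [Function.update_of_ne hne] at hgw')
  have hA : ∀ v : AG, ∃ x, x ∈ L v ∧ ∀ w : BG, ¬ H.Adj x (c w (f w)) := by
    intro v
    have h := hf v
    push Not at h
    obtain ⟨x, hx, hxw⟩ := h
    refine ⟨x, hSL v x hx, fun w hadj => ?_⟩
    have hw : w ∈ U x := mem_filter.2 ⟨mem_univ _, f w, hadj⟩
    refine hxw w hw (hcinj w ?_)
    exact hmatch (hcov' (hSL v x hx) (hcL w (f w)) hadj) x (hSL v x hx) _ (hcL w _) _ (hcL w _)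
      hadj (hy x w hw)
  choose s hsL hs using hA
  have hBof : ∀ v, v ∉ AG → v ∈ BG := fun v hv => by
    have : v ∈ AG ∪ BG := hGu ▸ Set.mem_univ v
    exact this.resolve_left hv
  let t : V → W := fun v =>
    if hv : v ∈ AG then s ⟨v, hv⟩ else c ⟨v, hBof v hv⟩ (f ⟨v, hBof v hv⟩)
  have htA : ∀ v (hv : v ∈ AG), t v = s ⟨v, hv⟩ := fun v hv => dif_pos hv
  have htB : ∀ v (hv : v ∈ BG), t v = c ⟨v, hv⟩ (f ⟨v, hv⟩) := fun v hv =>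
    dif_neg fun h => Set.disjoint_left.1 hGd h hv
  have htL : ∀ v, t v ∈ L v := by
    intro v
    by_cases hv : v ∈ AG
    · rw [htA v hv]
      exact hsL ⟨v, hv⟩
    · rw [htB v (hBof v hv)]
      exact hcL ⟨v, hBof v hv⟩ _
  have hAB : ∀ u ∈ AG, ∀ v ∈ BG, ¬ H.Adj (t u) (t v) := by
    intro u hu v hv
    rw [htA u hu, htB v hv]
    exact hs ⟨u, hu⟩ ⟨v, hv⟩
  refine ⟨Set.range t, ?_, ?_⟩
  · rintro _ ⟨u, rfl⟩ _ ⟨v, rfl⟩ hadj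
    rcases hGadj (hcov' (htL u) (htL v) hadj) with ⟨hu, hv⟩ | ⟨hu, hv⟩
    · exact hAB u hu v hv hadj
    · exact hAB v hv u hu hadj.symm
  · intro v
    refine ⟨t v, ⟨htL v, v, rfl⟩, ?_⟩
    rintro _ ⟨hx, u, rfl⟩
    rw [← hown hx, hown (htL u)]
end

section
/- Let $k_A$, $k_B$, $\Delta_A$, $\Delta_B$ be positive integers satisfying $e\,(\Delta_A(\Delta_B - 1) + 1)\,\bigl(1 - (1 - 1/k_B)^{\Delta_A \min\{1,\, k_B/k_A\}}\bigr)^{k_A} \le 1$ (the inner exponent is a real number). Let $G$ and $H$ be finite bipartite graphs with bipartitions $(A_G,B_G)$ and $(A_H,B_H)$ respectively, such that $H$ is a bipartite correspondence-cover of $G$ with respect to a map $L$. If every vertex of $A_G$ has degree at most $\Delta_A$ in $G$, every vertex of $B_G$ has degree at most $\Delta_B$ in $G$, $|L(v)| \ge k_A$ for all $v \in A_G$, and $|L(w)| \ge k_B$ for all $w \in B_G$, then $H$ admits an independent transversal with respect to $L$. -/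
open Finset Classical

/-! ### The Lovász local lemma -/

/-- The lopsided symmetric local lemma for the uniform measure on a finite set: `hA` says that
the conditional probability of `A v`, given that no event in a set `S` avoiding `Γ v` occurs,
is at most `p`. -/
theorem local_lemma_s2 {Ω ι : Type*} [Fintype Ω] [Nonempty Ω] (I : Finset ι)
    (A : ι → Ω → Prop) (Γ : ι → Finset ι) (d : ℕ) (p y : ℝ) (hy0 : 0 ≤ y) (hy1 : y < 1)
    (hp : p ≤ y * (1 - y) ^ d) (hΓ : ∀ v ∈ I, (Γ v).card ≤ d)
    (hA : ∀ v ∈ I, ∀ S ⊆ I, v ∉ S → Disjoint S (Γ v) →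
      ((univ.filter fun ω => (∀ u ∈ S, ¬ A u ω) ∧ A v ω).card : ℝ) ≤
        p * (univ.filter fun ω => ∀ u ∈ S, ¬ A u ω).card) :
    ∃ ω, ∀ v ∈ I, ¬ A v ω := by
  set N : Finset ι → ℝ := fun S => ((univ.filter fun ω => ∀ u ∈ S, ¬ A u ω).card : ℝ) with hN
  have hN0 : ∀ S, 0 ≤ N S := fun S => Nat.cast_nonneg _
  have key : ∀ S : Finset ι, S ⊆ I → ∀ v ∈ I, v ∉ S → (1 - y) * N S ≤ N (insert v S) := by
    intro S
    induction S using Finset.strongInduction with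
    | H S ih =>
    intro hS v hv hvS
    have hsplit : N S = N (insert v S) +
        ((univ.filter fun ω => (∀ u ∈ S, ¬ A u ω) ∧ A v ω).card : ℝ) := by
      simp only [hN]
      rw [← Nat.cast_add, Nat.cast_inj, ← card_union_of_disjoint]
      · congr 1
        ext ω
        simp only [mem_filter, mem_univ, true_and, mem_union, mem_insert, forall_eq_or_imp]
        tauto
      · rw [Finset.disjoint_left]
        simp only [mem_filter, mem_univ, true_and, mem_insert, forall_eq_or_imp]
        tauto
    have hchain : ∀ R : Finset ι, R ⊆ S ∩ Γ v →
        (1 - y) ^ R.card * N (S \ Γ v) ≤ N ((S \ Γ v) ∪ R) := by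
      intro R
      induction R using Finset.induction_on with
      | empty => simp
      | insert r R hr ihR =>
        intro hR
        rw [insert_subset_iff] at hR
        obtain ⟨hr1, hR1⟩ := hR
        have hrS := (mem_inter.1 hr1).1
        have hrG := (mem_inter.1 hr1).2
        have hnot : r ∉ (S \ Γ v) ∪ R := by
          simp [hr, hrG]
        have hsub : (S \ Γ v) ∪ R ⊆ S :=
          union_subset sdiff_subset (hR1.trans inter_subset_left)
        have h1 := ih ((S \ Γ v) ∪ R)
          (ssubset_iff_of_subset hsub |>.2 ⟨r, hrS, hnot⟩) (hsub.trans hS) r (hS hrS) hnot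
        rw [card_insert_of_notMem hr, union_insert, pow_succ']
        calc _ = (1 - y) * ((1 - y) ^ R.card * N (S \ Γ v)) := by ring
          _ ≤ (1 - y) * N ((S \ Γ v) ∪ R) :=
            mul_le_mul_of_nonneg_left (ihR hR1) (by linarith)
          _ ≤ _ := h1
    have h2 := hchain _ (Subset.refl _)
    rw [sdiff_union_inter] at h2
    have h3 : ((univ.filter fun ω => (∀ u ∈ S, ¬ A u ω) ∧ A v ω).card : ℝ) ≤ y * N S := by
      calc ((univ.filter fun ω => (∀ u ∈ S, ¬ A u ω) ∧ A v ω).card : ℝ)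
          ≤ ((univ.filter fun ω => (∀ u ∈ S \ Γ v, ¬ A u ω) ∧ A v ω).card : ℝ) := by
            refine Nat.cast_le.2 (card_le_card ?_)
            intro ω
            simp only [mem_filter, mem_univ, true_and, mem_sdiff]
            exact fun h => ⟨fun u hu => h.1 u hu.1, h.2⟩
        _ ≤ p * N (S \ Γ v) :=
            hA v hv _ (sdiff_subset.trans hS) (fun h => hvS (mem_sdiff.1 h).1) sdiff_disjoint
        _ ≤ (y * (1 - y) ^ d) * N (S \ Γ v) := mul_le_mul_of_nonneg_right hp (hN0 _)
        _ ≤ (y * (1 - y) ^ (S ∩ Γ v).card) * N (S \ Γ v) := by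
            refine mul_le_mul_of_nonneg_right (mul_le_mul_of_nonneg_left ?_ hy0) (hN0 _)
            exact pow_le_pow_of_le_one (by linarith) (by linarith)
              ((card_le_card inter_subset_right).trans (hΓ v hv))
        _ = y * ((1 - y) ^ (S ∩ Γ v).card * N (S \ Γ v)) := by ring
        _ ≤ y * N S := mul_le_mul_of_nonneg_left h2 hy0
    linarith
  have hpos : ∀ S : Finset ι, S ⊆ I → 0 < N S := by
    intro S
    induction S using Finset.induction_on with
    | empty => simp [hN, Fintype.card_pos]
    | insert r S hr ih =>
      intro h
      rw [insert_subset_iff] at h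
      exact lt_of_lt_of_le (mul_pos (by linarith) (ih h.2)) (key S h.2 r h.1 hr)
  have h := hpos I (Subset.refl _)
  simp only [hN, Nat.cast_pos, card_pos] at h
  obtain ⟨ω, hω⟩ := h
  exact ⟨ω, (mem_filter.1 hω).2⟩

/-- The classical condition `e (d + 1) p ≤ 1` provides a parameter for `local_lemma`. For `d = 0`
the usual choice `1 / (d + 1)` is not below `1`, and `p` itself is used. -/
theorem exists_local_lemma_param (d : ℕ) (p : ℝ) (hp0 : 0 ≤ p)
    (hp : Real.exp 1 * ((d : ℝ) + 1) * p ≤ 1) :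
    ∃ y : ℝ, 0 ≤ y ∧ y < 1 ∧ p ≤ y * (1 - y) ^ d := by
  have he : (1 : ℝ) < Real.exp 1 := Real.one_lt_exp_iff.2 one_pos
  rcases Nat.eq_zero_or_pos d with rfl | hd
  · refine ⟨p, hp0, ?_, by simp⟩
    norm_num at hp
    by_contra h
    push Not at h
    nlinarith
  · have hd' : (0 : ℝ) < d := by exact_mod_cast hd
    refine ⟨1 / (d + 1), by positivity, by rw [div_lt_one] <;> linarith, ?_⟩
    have h1 : (1 + 1 / (d : ℝ)) ^ d ≤ Real.exp 1 := by
      calc (1 + 1 / (d : ℝ)) ^ d ≤ (Real.exp (1 / d)) ^ d := by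
            refine pow_le_pow_left₀ (by positivity) ?_ d
            linarith [Real.add_one_le_exp (1 / (d : ℝ))]
        _ = Real.exp 1 := by
            rw [← Real.exp_nat_mul]; congr 1; field_simp
    have h2 : (1 - 1 / ((d : ℝ) + 1)) ^ d * (1 + 1 / (d : ℝ)) ^ d = 1 := by
      rw [← mul_pow]
      have : (1 - 1 / ((d : ℝ) + 1)) * (1 + 1 / (d : ℝ)) = 1 := by field_simp; ring
      rw [this, one_pow]
    set z := (1 - 1 / ((d : ℝ) + 1)) ^ d
    have hz : 0 ≤ z := by
      apply pow_nonneg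
      rw [sub_nonneg, div_le_one] <;> linarith
    have h3 : 1 ≤ z * Real.exp 1 := by
      calc 1 = z * (1 + 1 / (d : ℝ)) ^ d := h2.symm
        _ ≤ _ := mul_le_mul_of_nonneg_left h1 hz
    rw [one_div, inv_mul_eq_div, le_div_iff₀ (by positivity)]
    have h4 : Real.exp 1 * (p * (d + 1)) ≤ Real.exp 1 * z := by
      nlinarith
    exact le_of_mul_le_mul_left h4 (Real.exp_pos 1)

/-! ### Negative correlation for balls and bins -/

/-- Throwing one more ball, uniformly over its `k` values: if `a x` bounds the probability that
bin `x` is already occupied, the average of `∏ a x` over the bins missed by the new ball is at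
most the product of the new occupation probabilities. -/
theorem one_ball {X : Type*} {k : ℕ} (hk : 0 < k) (hit : Fin k → X → Prop) (a : X → ℝ)
    (ha0 : ∀ x, 0 ≤ a x) (ha1 : ∀ x, a x ≤ 1) (S : Finset X)
    (hS : ∀ c, ∀ x ∈ S, ∀ y ∈ S, hit c x → hit c y → x = y) :
    (∑ c : Fin k, ∏ x ∈ S, (if hit c x then 1 else a x)) ≤
      k * ∏ x ∈ S, (1 - (1 - a x) * (1 - ((univ.filter fun c => hit c x).card : ℝ) / k)) := by
  have hk' : (0 : ℝ) < k := by exact_mod_cast hk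
  set b : X → ℝ := fun x => 1 - (1 - a x) * (1 - ((univ.filter fun c => hit c x).card : ℝ) / k)
    with hb
  have hab : ∀ x, a x ≤ b x := by
    intro x
    have : 0 ≤ ((univ.filter fun c => hit c x).card : ℝ) / k := by positivity
    simp only [hb]
    nlinarith [ha1 x]
  induction S using Finset.induction_on with
  | empty => simp
  | insert s S hs ih =>
    have ih' := ih fun c x hx y hy =>
      hS c x (mem_insert_of_mem hx) y (mem_insert_of_mem hy)
    simp only [prod_insert hs]
    set G : Fin k → ℝ := fun c => ∏ x ∈ S, (if hit c x then 1 else a x) with hG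
    have hP : 0 ≤ ∏ x ∈ S, b x := prod_nonneg fun x _ => (ha0 x).trans (hab x)
    have hterm : ∀ c, (if hit c s then 1 else a s) * G c ≤
        a s * G c + (if hit c s then (1 - a s) * ∏ x ∈ S, b x else 0) := by
      intro c
      split_ifs with h
      · have hGc : G c ≤ ∏ x ∈ S, b x := by
          refine prod_le_prod (fun x _ => ?_) (fun x hx => ?_)
          · split_ifs
            · exact zero_le_one
            · exact ha0 x
          · rw [if_neg]
            · exact hab x
            · intro hx'
              have := hS c s (mem_insert_self _ _) x (mem_insert_of_mem hx) h hx'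
              exact hs (this ▸ hx)
        nlinarith [ha1 s]
      · simp
    calc ∑ c, (if hit c s then 1 else a s) * G c
        ≤ ∑ c, (a s * G c + (if hit c s then (1 - a s) * ∏ x ∈ S, b x else 0)) :=
          sum_le_sum fun c _ => hterm c
      _ = a s * ∑ c, G c +
          (univ.filter fun c => hit c s).card * ((1 - a s) * ∏ x ∈ S, b x) := by
          rw [sum_add_distrib, mul_sum, ← sum_filter, sum_const, nsmul_eq_mul]
      _ ≤ a s * (k * ∏ x ∈ S, b x) +
          (univ.filter fun c => hit c s).card * ((1 - a s) * ∏ x ∈ S, b x) := by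
          gcongr
          exact ha0 s
      _ = k * (b s * ∏ x ∈ S, b x) := by
          simp only [hb]
          field_simp
          ring

/-- An event that is invariant under changing coordinate `w` is independent of the value there. -/
theorem card_fiber {V : Type*} [Fintype V] {k : ℕ} (Q : (V → Fin k) → Prop) (w : V)
    (hQ : ∀ f c, Q (Function.update f w c) ↔ Q f) (c : Fin k) :
    k * (univ.filter fun f => Q f ∧ f w = c).card = (univ.filter Q).card := by
  have h1 : ∀ c', (univ.filter fun f => Q f ∧ f w = c').card =
      (univ.filter fun f => Q f ∧ f w = c).card := by
    intro c'
    refine card_bij' (fun f _ => Function.update f w c) (fun f _ => Function.update f w c')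
      ?_ ?_ ?_ ?_
    · intro f hf
      simp only [mem_filter, mem_univ, true_and] at hf ⊢
      exact ⟨(hQ _ _).2 hf.1, by simp⟩
    · intro f hf
      simp only [mem_filter, mem_univ, true_and] at hf ⊢
      exact ⟨(hQ _ _).2 hf.1, by simp⟩
    · intro f hf
      simp only [mem_filter, mem_univ, true_and] at hf
      simp [← hf.2]
    · intro f hf
      simp only [mem_filter, mem_univ, true_and] at hf
      simp [← hf.2]
  have h2 := card_eq_sum_card_fiberwise (f := fun f : V → Fin k => f w)
    (s := univ.filter Q) (t := univ) (by simp)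
  rw [h2]
  simp only [filter_filter, h1, sum_const, card_univ, Fintype.card_fin, smul_eq_mul]

/-- Negative correlation, conditionally on an event `Q` not depending on the balls in `T`: the
probability that every bin of `S` is hit by a ball of `T` is at most the product of the individual
hitting probabilities, provided that no ball can hit two bins of `S` at once. -/
theorem card_hit_le {V X : Type*} [Fintype V] {k : ℕ} (hk : 0 < k)
    (hit : V → Fin k → X → Prop) (T : Finset V) (S : Finset X)
    (hS : ∀ w ∈ T, ∀ c, ∀ x ∈ S, ∀ y ∈ S, hit w c x → hit w c y → x = y)
    (Q : (V → Fin k) → Prop)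
    (hQ : ∀ w ∈ T, ∀ f c, Q (Function.update f w c) ↔ Q f) :
    ((univ.filter fun f => Q f ∧ ∀ x ∈ S, ∃ w ∈ T, hit w (f w) x).card : ℝ) ≤
      (∏ x ∈ S, (1 - ∏ w ∈ T, (1 - ((univ.filter fun c => hit w c x).card : ℝ) / k))) *
        (univ.filter Q).card := by
  have hk' : (0 : ℝ) < k := by exact_mod_cast hk
  have hp1 : ∀ w x, ((univ.filter fun c => hit w c x).card : ℝ) / k ≤ 1 := by
    intro w x
    rw [div_le_one hk']
    exact_mod_cast (card_le_univ _).trans (by simp)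
  induction T using Finset.induction_on generalizing S Q with
  | empty =>
    rcases S.eq_empty_or_nonempty with rfl | ⟨x, hx⟩
    · simp
    · have : (univ.filter fun f : V → Fin k => Q f ∧ ∀ x ∈ S, ∃ w ∈ (∅ : Finset V),
          hit w (f w) x) = ∅ := by
        rw [filter_eq_empty_iff]
        rintro f - ⟨-, h⟩
        obtain ⟨w, hw, -⟩ := h x hx
        simp at hw
      rw [this, card_empty, Nat.cast_zero]
      refine mul_nonneg (prod_nonneg fun x _ => ?_) (Nat.cast_nonneg _)
      simp
  | insert w0 T hw0 ih =>
    set a : X → ℝ := fun x =>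
      1 - ∏ w ∈ T, (1 - ((univ.filter fun c => hit w c x).card : ℝ) / k) with ha
    have ha0 : ∀ x, 0 ≤ a x := by
      intro x
      simp only [ha, sub_nonneg]
      refine prod_le_one (fun w _ => by linarith [hp1 w x]) (fun w _ => ?_)
      have : 0 ≤ ((univ.filter fun c => hit w c x).card : ℝ) / k := by positivity
      linarith
    have ha1 : ∀ x, a x ≤ 1 := by
      intro x
      simp only [ha]
      have : 0 ≤ ∏ w ∈ T, (1 - ((univ.filter fun c => hit w c x).card : ℝ) / k) :=
        prod_nonneg fun w _ => by linarith [hp1 w x]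
      linarith
    have hq := card_fiber Q w0 (hQ w0 (mem_insert_self _ _))
    have hfib := card_eq_sum_card_fiberwise (f := fun f : V → Fin k => f w0)
      (s := univ.filter fun f => Q f ∧ ∀ x ∈ S, ∃ w ∈ insert w0 T, hit w (f w) x)
      (t := univ) (by simp)
    have hterm : ∀ c : Fin k,
        (((univ.filter fun f => Q f ∧ ∀ x ∈ S, ∃ w ∈ insert w0 T, hit w (f w) x).filter
          fun f => f w0 = c).card : ℝ) ≤
        (∏ x ∈ S, (if hit w0 c x then 1 else a x)) * ((univ.filter Q).card / k) := by
      intro c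
      -- Given the value `c` at `w0`, the bins not hit by it must be hit by the balls in `T`.
      have h1 := ih (S.filter fun x => ¬ hit w0 c x)
        (fun w hw c x hx y hy => hS w (mem_insert_of_mem hw) c x (mem_filter.1 hx).1 y
          (mem_filter.1 hy).1)
        (fun f => Q f ∧ f w0 = c) (by
          intro w hw f c'
          have hne : w0 ≠ w := fun h => hw0 (h ▸ hw)
          rw [hQ w (mem_insert_of_mem hw), Function.update_of_ne hne])
      have h2 : ((univ.filter fun f => Q f ∧ f w0 = c).card : ℝ) = (univ.filter Q).card / k := by
        rw [eq_div_iff hk'.ne', ← hq c]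
        push_cast
        ring
      -- The decidability instance in `h1` differs from the one elaborated in `h2`.
      have h2' : ∀ inst : DecidablePred fun f : V → Fin k => Q f ∧ f w0 = c,
          ((@Finset.filter _ (fun f : V → Fin k => Q f ∧ f w0 = c) inst univ).card : ℝ) =
            (univ.filter Q).card / k := by
        intro _
        convert h2
      have h3 : ∏ x ∈ S.filter (fun x => ¬ hit w0 c x), a x =
          ∏ x ∈ S, (if hit w0 c x then 1 else a x) := by
        rw [prod_filter]
        exact prod_congr rfl fun x _ => by split_ifs <;> simp_all
      rw [h2', h3] at h1
      refine le_trans (Nat.cast_le.2 (card_le_card ?_)) h1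
      intro f
      simp only [mem_filter, mem_univ, true_and, mem_insert, exists_eq_or_imp]
      rintro ⟨⟨hQf, hf⟩, hc⟩
      refine ⟨⟨hQf, hc⟩, fun x hx => ?_⟩
      rcases hf x hx.1 with h | h
      · exact absurd (hc ▸ h) hx.2
      · exact h
    rw [hfib, Nat.cast_sum]
    refine (sum_le_sum fun c _ => hterm c).trans ?_
    rw [← sum_mul]
    have h4 := one_ball hk (hit w0) a ha0 ha1 S (hS w0 (mem_insert_self _ _))
    have h5 : ∀ x, 1 - (1 - a x) * (1 - ((univ.filter fun c => hit w0 c x).card : ℝ) / k) =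
        1 - ∏ w ∈ insert w0 T, (1 - ((univ.filter fun c => hit w c x).card : ℝ) / k) := by
      intro x
      rw [prod_insert hw0]
      simp only [ha]
      ring
    simp only [h5] at h4
    calc _ ≤ _ := mul_le_mul_of_nonneg_right h4 (by positivity)
      _ = _ := by field_simp

/-! ### The analytic estimate -/

/-- AM-GM for `∏ (1 - q ^ d x)` and again for the mean of the `q ^ d x`. -/
theorem prod_one_sub_pow_le {X : Type*} (S : Finset X) (n : ℕ) (hn : 0 < n) (hSn : S.card = n)
    (q : ℝ) (hq0 : 0 < q) (hq1 : q ≤ 1) (d : X → ℕ) (D : ℝ)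
    (hD : (∑ x ∈ S, d x : ℝ) ≤ n * D) :
    ∏ x ∈ S, (1 - q ^ d x) ≤ (1 - q ^ D) ^ n := by
  have hn' : (0 : ℝ) < n := by exact_mod_cast hn
  have hw : ∑ _x ∈ S, (1 / (n : ℝ)) = 1 := by
    rw [sum_const, hSn, nsmul_eq_mul]; field_simp
  have hu : ∀ x ∈ S, 0 ≤ 1 - q ^ d x := fun x _ =>
    sub_nonneg.2 (pow_le_one₀ hq0.le hq1)
  have h1 := Real.geom_mean_le_arith_mean_weighted S (fun _ => 1 / (n : ℝ))
    (fun x => 1 - q ^ d x) (fun _ _ => by positivity) hw hu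
  have h2 := Real.geom_mean_le_arith_mean_weighted S (fun _ => 1 / (n : ℝ))
    (fun x => q ^ d x) (fun _ _ => by positivity) hw (fun _ _ => by positivity)
  rw [Real.finsetProd_rpow _ _ hu] at h1
  rw [Real.finsetProd_rpow _ _ (fun _ _ => by positivity), prod_pow_eq_pow_sum,
    ← Real.rpow_natCast, ← Real.rpow_mul hq0.le] at h2
  have h3 : q ^ D ≤ q ^ (((∑ x ∈ S, d x : ℕ) : ℝ) * (1 / n)) := by
    refine Real.rpow_le_rpow_of_exponent_ge hq0 hq1 ?_
    rw [mul_one_div, div_le_iff₀ hn']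
    push_cast
    linarith
  have h4 : (∏ x ∈ S, (1 - q ^ d x)) ^ (1 / (n : ℝ)) ≤ 1 - q ^ D := by
    refine h1.trans ?_
    have : ∑ x ∈ S, 1 / (n : ℝ) * (1 - q ^ d x) = 1 - ∑ x ∈ S, 1 / (n : ℝ) * q ^ d x := by
      simp only [mul_sub, sum_sub_distrib, mul_one, hw]
    linarith
  have hP : 0 ≤ ∏ x ∈ S, (1 - q ^ d x) := prod_nonneg hu
  calc ∏ x ∈ S, (1 - q ^ d x) = ((∏ x ∈ S, (1 - q ^ d x)) ^ (1 / (n : ℝ))) ^ n := by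
        rw [one_div, Real.rpow_inv_natCast_pow hP hn.ne']
    _ ≤ _ := pow_le_pow_left₀ (Real.rpow_nonneg hP _) h4 n

theorem stmt2 {V W : Type*} [Fintype V] [Fintype W]
    (kA kB ΔA ΔB : ℕ) (hkA : 0 < kA) (hkB : 0 < kB) (hΔA : 0 < ΔA) (hΔB : 0 < ΔB)
    (hcond : Real.exp 1 * ((ΔA : ℝ) * ((ΔB : ℝ) - 1) + 1) *
      (1 - (1 - 1 / (kB : ℝ)) ^ ((ΔA : ℝ) * min 1 ((kB : ℝ) / (kA : ℝ)))) ^ kA ≤ 1)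
    (G : SimpleGraph V) (H : SimpleGraph W) (AG BG : Set V) (AH BH : Set W)
    (L : V → Set W)
    (hcover : IsBipartiteCorrespondenceCover G H AG BG AH BH L)
    (hdegA : ∀ v ∈ AG, deg G v ≤ ΔA) (hdegB : ∀ v ∈ BG, deg G v ≤ ΔB)
    (hLA : ∀ v ∈ AG, kA ≤ (L v).ncard) (hLB : ∀ w ∈ BG, kB ≤ (L w).ncard) :
    HasIndepTransversal H L := by
  obtain ⟨⟨hunion, hdisj, hGbip⟩, -, ⟨⟨hpart, hnon⟩, hmatch⟩, -, -⟩ := hcover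
  have hkA' : (0 : ℝ) < kA := by exact_mod_cast hkA
  have hkB' : (0 : ℝ) < kB := by exact_mod_cast hkB
  have hΔA' : (0 : ℝ) < ΔA := by exact_mod_cast hΔA
  set D : ℝ := (ΔA : ℝ) * min 1 ((kB : ℝ) / (kA : ℝ)) with hD
  have hDpos : 0 < D := mul_pos hΔA' (lt_min one_pos (by positivity))
  set d : ℕ := ΔA * (ΔB - 1) with hd
  have hd' : (d : ℝ) = (ΔA : ℝ) * ((ΔB : ℝ) - 1) := by
    rw [hd, Nat.cast_mul, Nat.cast_sub hΔB, Nat.cast_one]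
  rw [← hd'] at hcond
  have he : (1 : ℝ) < Real.exp 1 := Real.one_lt_exp_iff.2 one_pos
  -- For `kB = 1` the base `1 - 1 / kB` vanishes and the hypothesis reads `e (d + 1) ≤ 1`.
  have hkB2 : 2 ≤ kB := by
    by_contra h
    have h1 : kB = 1 := by omega
    rw [h1] at hcond
    norm_num [Real.zero_rpow hDpos.ne'] at hcond
    have : (0 : ℝ) ≤ d := Nat.cast_nonneg d
    nlinarith
  have hkB2' : (2 : ℝ) ≤ kB := by exact_mod_cast hkB2
  set q : ℝ := 1 - 1 / (kB : ℝ) with hq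
  have hq0 : 0 < q := by
    rw [hq, sub_pos, div_lt_one hkB']; linarith
  have hq1 : q ≤ 1 := by
    have : 0 < 1 / (kB : ℝ) := by positivity
    linarith
  have hp0 : 0 ≤ (1 - q ^ D) ^ kA :=
    pow_nonneg (sub_nonneg.2 (Real.rpow_le_one hq0.le hq1 hDpos.le)) _
  obtain ⟨y, hy0, hy1, hpy⟩ := exists_local_lemma_param d _ hp0 hcond
  have huniq : ∀ {x v v'}, x ∈ L v → x ∈ L v' → v = v' := fun {x v v'} h h' =>
    (hpart x).unique h h'
  have hAB : ∀ v, v ∈ AG ∨ v ∈ BG := fun v => by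
    have : v ∈ AG ∪ BG := hunion ▸ Set.mem_univ v
    exact this
  have hnotAB : ∀ {v}, v ∈ AG → v ∈ BG → False := fun h h' => Set.disjoint_left.1 hdisj h h'
  have hnbrA : ∀ {v w}, v ∈ AG → G.Adj v w → w ∈ BG := fun {v w} hv h => by
    rcases hGbip h with h | h
    · exact h.2
    · exact (hnotAB hv h.1).elim
  have hdegcard : ∀ v, (univ.filter fun w => G.Adj v w).card = deg G v := by
    intro v
    rw [deg, ← Set.ncard_coe_finset]
    congr 1
    ext w
    simp
  -- `e w` enumerates the `kB` selected vertices of `L w`.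
  have hex : ∀ w : V, ∃ e : Fin kB → W, w ∈ BG → Function.Injective e ∧ ∀ c, e c ∈ L w := by
    intro w
    by_cases hw : w ∈ BG
    · have h1 : Fintype.card (Fin kB) ≤ Fintype.card (L w) := by
        rw [Fintype.card_fin, ← Nat.card_eq_fintype_card, Nat.card_coe_set_eq]
        exact hLB w hw
      obtain ⟨g⟩ := Function.Embedding.nonempty_of_card_le h1
      exact ⟨fun c => (g c : W), fun _ =>
        ⟨Subtype.val_injective.comp g.injective, fun c => (g c).2⟩⟩
    · have hA := (hAB w).resolve_right hw
      have : (L w).ncard ≠ 0 := by have := hLA w hA; omega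
      obtain ⟨x, -⟩ := Set.nonempty_of_ncard_ne_zero this
      exact ⟨fun _ => x, fun h => absurd h hw⟩
  choose e he using hex
  -- `P v` is the set of `kA` selected vertices of `L v`.
  have hexP : ∀ v : V, ∃ P : Finset W, v ∈ AG → P.card = kA ∧ ∀ x ∈ P, x ∈ L v := by
    intro v
    by_cases hv : v ∈ AG
    · have h1 : kA ≤ (L v).toFinset.card := by
        rw [← Set.ncard_eq_toFinset_card']
        exact hLA v hv
      obtain ⟨P, hP, hc⟩ := exists_subset_card_eq h1
      exact ⟨P, fun _ => ⟨hc, fun x hx => Set.mem_toFinset.1 (hP hx)⟩⟩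
    · exact ⟨∅, fun h => absurd h hv⟩
  choose P hP using hexP
  set hit : V → Fin kB → W → Prop := fun w c x => H.Adj x (e w c) with hhit
  set nb : V → Finset V := fun v => univ.filter fun w => G.Adj v w with hnb
  set A : V → (V → Fin kB) → Prop := fun v f => ∀ x ∈ P v, ∃ w ∈ nb v, hit w (f w) x with hAdef
  set Γ : V → Finset V := fun v => (nb v).biUnion fun w => (nb w).erase v with hΓdef
  have hΓ : ∀ v ∈ AG.toFinset, (Γ v).card ≤ d := by
    intro v hv
    rw [Set.mem_toFinset] at hv
    refine (card_biUnion_le_card_mul _ _ (ΔB - 1) ?_).trans ?_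
    · intro w hw
      have hvw : G.Adj v w := by simpa [hnb] using hw
      rw [card_erase_of_mem (by simpa [hnb] using hvw.symm)]
      have := hdegB w (hnbrA hv hvw)
      rw [← hdegcard] at this
      exact Nat.sub_le_sub_right this 1
    · refine Nat.mul_le_mul_right _ ?_
      have := hdegA v hv
      rwa [← hdegcard] at this
  have hprob : ∀ v ∈ AG,
      ∏ x ∈ P v, (1 - ∏ w ∈ nb v, (1 - ((univ.filter fun c => hit w c x).card : ℝ) / kB)) ≤
        (1 - q ^ D) ^ kA := by
    intro v hv
    obtain ⟨hPc, hPL⟩ := hP v hv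
    set dd : W → ℕ := fun x => ((nb v).filter fun w => ∃ c, hit w c x).card with hdd
    have hfac : ∀ x ∈ P v,
        ∏ w ∈ nb v, (1 - ((univ.filter fun c => hit w c x).card : ℝ) / kB) = q ^ dd x := by
      intro x hx
      have hpow : q ^ dd x = ∏ w ∈ nb v, if ∃ c, hit w c x then q else 1 := by
        rw [← prod_filter, prod_const]
      rw [hpow]
      refine prod_congr rfl fun w hw => ?_
      have hvw : G.Adj v w := by simpa [hnb] using hw
      have hwB := hnbrA hv hvw
      split_ifs with h
      · obtain ⟨c, hc⟩ := h
        have : (univ.filter fun c => hit w c x) = {c} := by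
          ext c'
          simp only [mem_filter, mem_univ, true_and, mem_singleton]
          constructor
          · intro hc'
            exact (he w hwB).1 (hmatch hvw x (hPL x hx) _ ((he w hwB).2 c') _
              ((he w hwB).2 c) hc' hc)
          · rintro rfl; exact hc
        rw [this, card_singleton, Nat.cast_one]
      · have : (univ.filter fun c => hit w c x) = ∅ := by
          rw [filter_eq_empty_iff]
          intro c _ hc
          exact h ⟨c, hc⟩
        rw [this]; simp
    rw [prod_congr rfl fun x hx => by rw [hfac x hx]]
    refine prod_one_sub_pow_le (P v) kA hkA hPc q hq0 hq1 dd D ?_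
    -- Double counting: each `w` contributes the size of a matching between `kA` and `kB` vertices.
    have hswap : ∑ x ∈ P v, dd x =
        ∑ w ∈ nb v, ((P v).filter fun x => ∃ c, hit w c x).card := by
      simp only [hdd, card_filter]
      exact sum_comm
    have hw : ∀ w ∈ nb v, ((P v).filter fun x => ∃ c, hit w c x).card ≤ min kA kB := by
      intro w hw
      have hvw : G.Adj v w := by simpa [hnb] using hw
      have hwB := hnbrA hv hvw
      refine le_min ((card_filter_le _ _).trans hPc.le) ?_
      have hsub : ((P v).filter fun x => ∃ c, hit w c x) ⊆
          (univ : Finset (Fin kB)).biUnion fun c => (P v).filter fun x => hit w c x := by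
        intro x hx
        simp only [mem_filter, mem_biUnion, mem_univ, true_and] at hx ⊢
        obtain ⟨hx, c, hc⟩ := hx
        exact ⟨c, hx, hc⟩
      refine (card_le_card hsub).trans
        ((card_biUnion_le_card_mul _ _ 1 fun c _ => ?_).trans (by simp))
      rw [card_le_one]
      intro x hx x' hx'
      rw [mem_filter] at hx hx'
      exact hmatch hvw.symm _ ((he w hwB).2 c) x (hPL x hx.1) x' (hPL x' hx'.1)
        hx.2.symm hx'.2.symm
    have hsum : ∑ x ∈ P v, dd x ≤ ΔA * min kA kB := by
      rw [hswap]
      refine (sum_le_card_nsmul _ _ _ hw).trans ?_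
      rw [smul_eq_mul]
      refine Nat.mul_le_mul_right _ ?_
      have := hdegA v hv
      rwa [← hdegcard] at this
    have hsum' : (∑ x ∈ P v, dd x : ℝ) ≤ ΔA * min (kA : ℝ) kB := by exact_mod_cast hsum
    refine hsum'.trans (le_of_eq ?_)
    rw [hD, mul_left_comm, mul_min_of_nonneg _ _ hkA'.le, mul_one, mul_div_cancel₀ _ hkA'.ne']
  have : Nonempty (Fin kB) := ⟨⟨0, hkB⟩⟩
  obtain ⟨f, hf⟩ := local_lemma_s2 AG.toFinset A Γ d ((1 - q ^ D) ^ kA) y hy0 hy1 hpy hΓ (by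
    intro v hv S _ hvS hSΓ
    rw [Set.mem_toFinset] at hv
    have h1 := card_hit_le hkB hit (nb v) (P v)
      (by
        intro w hw c x hx x' hx' h h'
        have hvw : G.Adj v w := by simpa [hnb] using hw
        have hwB := hnbrA hv hvw
        exact hmatch hvw.symm _ ((he w hwB).2 c) x ((hP v hv).2 x hx) x' ((hP v hv).2 x' hx')
          h.symm h'.symm)
      (fun f => ∀ u ∈ S, ¬ A u f)
      (by
        intro w hw f c
        refine forall₂_congr fun u hu => not_congr ?_
        -- `u` is not adjacent to `w`, since otherwise `u ∈ Γ v`.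
        have hwu : w ∉ nb u := by
          intro h
          refine Finset.disjoint_left.1 hSΓ hu ?_
          rw [mem_biUnion]
          refine ⟨w, hw, mem_erase.2 ⟨fun h => hvS (h ▸ hu), ?_⟩⟩
          have : G.Adj u w := by simpa [hnb] using h
          simpa [hnb] using this.symm
        refine forall₂_congr fun x _ => exists_congr fun w' => and_congr_right fun hw' => ?_
        have : w' ≠ w := fun h => hwu (h ▸ hw')
        rw [Function.update_of_ne this])
    have h2 := h1.trans (mul_le_mul_of_nonneg_right (hprob v hv) (Nat.cast_nonneg _))
    refine le_trans (le_of_eq ?_) (h2.trans (le_of_eq ?_)) <;> congr!)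
  have hgood : ∀ v : V, ∃ x : W, x ∈ L v ∧ (v ∈ BG → x = e v (f v)) ∧
      (v ∈ AG → ∀ w, G.Adj v w → ¬ H.Adj x (e w (f w))) := by
    intro v
    by_cases hv : v ∈ AG
    · have h1 := hf v (Set.mem_toFinset.2 hv)
      simp only [hAdef] at h1
      push Not at h1
      obtain ⟨x, hx, hx'⟩ := h1
      exact ⟨x, (hP v hv).2 x hx, fun h => (hnotAB hv h).elim,
        fun _ w hw => hx' w (by simpa [hnb] using hw)⟩
    · have hB := (hAB v).resolve_left hv
      exact ⟨e v (f v), (he v hB).2 _, fun _ => rfl, fun h => absurd h hv⟩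
  choose t htL htB htA using hgood
  have hno : ∀ v w, v ∈ AG → w ∈ BG → G.Adj v w → ¬ H.Adj (t v) (t w) := by
    intro v w hv hw hvw
    rw [htB w hw]
    exact htA v hv w hvw
  refine ⟨Set.range t, ?_, ?_⟩
  · rintro _ ⟨v, rfl⟩ _ ⟨w, rfl⟩ hadj
    by_cases hvw : G.Adj v w
    · rcases hGbip hvw with ⟨hv, hw⟩ | ⟨hv, hw⟩
      · exact hno v w hv hw hvw hadj
      · exact hno w v hw hv hvw.symm hadj.symm
    · exact hnon hvw _ (htL v) _ (htL w) hadj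
  · intro v
    refine ⟨t v, ⟨htL v, v, rfl⟩, ?_⟩
    rintro _ ⟨hx, u, rfl⟩
    rw [huniq hx (htL u)]
end

section
/- For each $\varepsilon > 0$ there exists $D_0$ such that the following holds. Let $G$ and $H$ be finite bipartite graphs such that $H$ is a correspondence-cover of $G$ with respect to some map $L : V(G) \to 2^{V(H)}$. If $H$ has maximum degree $D \ge D_0$ and $|L(v)| \ge (1+\varepsilon) D/\log D$ for all $v \in V(G)$ (where $\log$ denotes the natural logarithm), then $H$ admits an independent transversal with respect to $L$. -/
open Finset

/-! ### The local lemma on `V → K` -/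

open scoped Classical in
/-- An event depending only on the coordinates in `T` and one depending only on those outside `T`
are independent: exchanging coordinates outside `T` is injective on pairs of functions. -/
lemma card_and_mul_le {V K : Type} [Fintype V] [Fintype K] (T : Finset V)
    (E F : (V → K) → Prop)
    (hE : ∀ f g, (∀ u ∈ T, f u = g u) → E f → E g)
    (hF : ∀ f g, (∀ u, u ∉ T → f u = g u) → F f → F g) :
    #{f | E f ∧ F f} * #(univ : Finset (V → K)) ≤ #{f | E f} * #{f | F f} := by
  rw [← card_product, ← card_product]
  apply card_le_card_of_injOn (fun p => (T.piecewise p.1 p.2, T.piecewise p.2 p.1))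
  · rintro ⟨f, g⟩ h
    simp only [coe_product, Set.mem_prod, mem_coe, mem_filter, mem_univ, true_and, and_true] at h ⊢
    exact ⟨hE _ _ (fun u hu => by simp [hu]) h.1, hF _ _ (fun u hu => by simp [hu]) h.2⟩
  · rintro ⟨f, g⟩ _ ⟨f', g'⟩ _ h
    simp only [Prod.mk.injEq] at h ⊢
    constructor <;> funext u <;>
      · have h1 := congrFun h.1 u
        have h2 := congrFun h.2 u
        by_cases hu : u ∈ T <;> simp_all

open scoped Classical in
/-- Inductive core of the local lemma: conditioned on avoiding the bad events in `S`, any bad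
event has probability at most `2 * p`. -/
lemma local_lemma_step {V K ι : Type} [Fintype V] [Fintype K]
    (Bad : ι → (V → K) → Prop) (T : ι → Finset V)
    (hT : ∀ i f g, (∀ u ∈ T i, f u = g u) → Bad i f → Bad i g)
    (p d : ℝ) (hp : 0 ≤ p)
    (hbad : ∀ i, (#{f | Bad i f} : ℝ) ≤ p * #(univ : Finset (V → K)))
    (hd : ∀ (i : ι) (S : Finset ι), (#{j ∈ S | ¬ Disjoint (T i) (T j)} : ℝ) ≤ d)
    (hpd : 4 * p * d ≤ 1) (hne : 0 < #(univ : Finset (V → K))) (S : Finset ι) :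
    ∀ i, (#{f | Bad i f ∧ ∀ j ∈ S, ¬ Bad j f} : ℝ) ≤ 2 * p * #{f | ∀ j ∈ S, ¬ Bad j f} := by
  induction S using Finset.strongInduction with
  | H S ih =>
    intro i
    set S1 := {j ∈ S | ¬ Disjoint (T i) (T j)} with hS1
    set S2 := {j ∈ S | Disjoint (T i) (T j)} with hS2
    have hmono : (#{f | Bad i f ∧ ∀ j ∈ S, ¬ Bad j f} : ℝ)
        ≤ #{f | Bad i f ∧ ∀ j ∈ S2, ¬ Bad j f} := by
      norm_cast
      apply card_le_card
      intro f
      simp only [mem_filter, mem_univ, true_and, hS2]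
      exact fun h => ⟨h.1, fun j hj => h.2 j hj.1⟩
    have hind : (#{f | Bad i f ∧ ∀ j ∈ S2, ¬ Bad j f} : ℝ)
        ≤ p * #{f | ∀ j ∈ S2, ¬ Bad j f} := by
      have h := card_and_mul_le (T i) (Bad i) (fun f => ∀ j ∈ S2, ¬ Bad j f) (hT i) (by
        intro f g hfg hf j hj hb
        refine hf j hj (hT j g f (fun u hu => (hfg u ?_).symm) hb)
        have := (mem_filter.1 hj).2
        exact Finset.disjoint_right.1 this hu)
      have h' : (#{f | Bad i f ∧ ∀ j ∈ S2, ¬ Bad j f} : ℝ) * #(univ : Finset (V → K))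
          ≤ #{f | Bad i f} * #{f | ∀ j ∈ S2, ¬ Bad j f} := by
        norm_cast
        convert h
      have hne' : (0 : ℝ) < #(univ : Finset (V → K)) := by exact_mod_cast hne
      have h2 := mul_le_mul_of_nonneg_right (hbad i)
        (Nat.cast_nonneg (α := ℝ) #{f | ∀ j ∈ S2, ¬ Bad j f})
      refine le_of_mul_le_mul_right (h'.trans (h2.trans (le_of_eq ?_))) hne'
      ring
    have hcover : (#{f | ∀ j ∈ S2, ¬ Bad j f} : ℝ) ≤ #{f | ∀ j ∈ S, ¬ Bad j f}
        + ∑ j ∈ S1, (#{f | Bad j f ∧ ∀ j ∈ S2, ¬ Bad j f} : ℝ) := by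
      have h1 : ({f | ∀ j ∈ S2, ¬ Bad j f} : Finset (V → K)) ⊆
          ({f | ∀ j ∈ S, ¬ Bad j f} : Finset (V → K)) ∪ S1.biUnion (fun j => {f | Bad j f ∧ ∀ j ∈ S2, ¬ Bad j f}) := by
        intro f hf
        simp only [mem_filter, mem_univ, true_and] at hf
        simp only [mem_union, mem_filter, mem_univ, true_and, mem_biUnion]
        by_cases h : ∀ j ∈ S, ¬ Bad j f
        · exact Or.inl h
        · right
          push Not at h
          obtain ⟨j, hj, hb⟩ := h
          refine ⟨j, ?_, hb, hf⟩
          rw [hS1, mem_filter]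
          refine ⟨hj, fun hdis => hf j ?_ hb⟩
          rw [hS2, mem_filter]
          exact ⟨hj, hdis⟩
      have h2 := (card_le_card h1).trans ((card_union_le _ _).trans
        (Nat.add_le_add_left card_biUnion_le _))
      exact_mod_cast h2
    have hsum : ∑ j ∈ S1, (#{f | Bad j f ∧ ∀ j ∈ S2, ¬ Bad j f} : ℝ)
        ≤ d * (2 * p * #{f | ∀ j ∈ S2, ¬ Bad j f}) := by
      have hle : ∀ j ∈ S1, (#{f | Bad j f ∧ ∀ j ∈ S2, ¬ Bad j f} : ℝ)
          ≤ 2 * p * #{f | ∀ j ∈ S2, ¬ Bad j f} := by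
        intro j hj
        refine ih S2 ?_ j
        -- `S2` misses `j`, so it is a proper subset of `S`
        rw [hS1, mem_filter] at hj
        refine (Finset.ssubset_iff_of_subset (filter_subset _ _)).2 ⟨j, hj.1, ?_⟩
        exact fun h => hj.2 (mem_filter.1 h).2
      refine (sum_le_card_nsmul _ _ _ hle).trans ?_
      rw [nsmul_eq_mul]
      exact mul_le_mul_of_nonneg_right (hd i S) (by positivity)
    have hN : (0 : ℝ) ≤ #{f | ∀ j ∈ S2, ¬ Bad j f} := Nat.cast_nonneg _
    nlinarith [mul_nonneg hp hN, mul_le_mul_of_nonneg_right hpd hN]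

open scoped Classical in
/-- The symmetric Lovász Local Lemma for the uniform measure on `V → K`, with `4 * p * d ≤ 1`. The
event `Bad i` is determined by the coordinates in `T i`. -/
lemma local_lemma_s3 {V K ι : Type} [Fintype V] [Fintype K] [Fintype ι] [Nonempty K]
    (Bad : ι → (V → K) → Prop) (T : ι → Finset V)
    (hT : ∀ i f g, (∀ u ∈ T i, f u = g u) → Bad i f → Bad i g)
    (p d : ℝ) (hp : 0 ≤ p) (hd1 : 1 ≤ d)
    (hbad : ∀ i, (#{f | Bad i f} : ℝ) ≤ p * #(univ : Finset (V → K)))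
    (hd : ∀ i : ι, (#{j | ¬ Disjoint (T i) (T j)} : ℝ) ≤ d)
    (hpd : 4 * p * d ≤ 1) : ∃ f, ∀ i, ¬ Bad i f := by
  have hne : 0 < #(univ : Finset (V → K)) := card_pos.2 univ_nonempty
  have hstep := local_lemma_step Bad T hT p d hp hbad (fun i S => le_trans (by
    norm_cast
    exact card_le_card (filter_subset_filter _ (subset_univ S))) (hd i)) hpd hne
  have key : ∀ S : Finset ι, 0 < #{f | ∀ j ∈ S, ¬ Bad j f} := by
    intro S
    induction S using Finset.induction_on with
    | empty => simpa using hne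
    | insert i S _ ih =>
      have h1 : (#{f | Bad i f ∧ ∀ j ∈ S, ¬ Bad j f} : ℝ) ≤
          2 * p * #{f | ∀ j ∈ S, ¬ Bad j f} := by convert hstep S i
      have h2 : #{f | ∀ j ∈ S, ¬ Bad j f} = #{f | Bad i f ∧ ∀ j ∈ S, ¬ Bad j f}
          + #{f | ∀ j ∈ insert i S, ¬ Bad j f} := by
        rw [← card_filter_add_card_filter_not (s := {f | ∀ j ∈ S, ¬ Bad j f}) (p := Bad i),
          filter_filter, filter_filter]
        congr 2 <;> ext f <;> simp [and_comm]
      have ih' : (0 : ℝ) < #{f | ∀ j ∈ S, ¬ Bad j f} := by exact_mod_cast ih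
      have h2' : (#{f | ∀ j ∈ S, ¬ Bad j f} : ℝ) = #{f | Bad i f ∧ ∀ j ∈ S, ¬ Bad j f}
          + #{f | ∀ j ∈ insert i S, ¬ Bad j f} := by exact_mod_cast h2
      have hp4 : 4 * p ≤ 1 := by nlinarith
      have : (0 : ℝ) < #{f | ∀ j ∈ insert i S, ¬ Bad j f} := by nlinarith
      exact_mod_cast this
  obtain ⟨f, hf⟩ := card_pos.1 (key univ)
  exact ⟨f, fun i => (mem_filter.1 hf).2 i (mem_univ i)⟩

/-! ### Negative correlation of blocking -/

open scoped Classical in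
/-- Negative correlation. Here `R c u x` means that choosing `x` at `u` blocks `c`; every choice
blocks at most one `c`. Given `f` blocking all of `S` and `g` not blocking `c`, exchange their values
wherever `f` blocks `c`: the first function still blocks `S` and no longer blocks `c`, and the
exchanged places can be read off from the second function. -/
lemma card_unblocked_mul_le {V K I : Type} [Fintype V] [Fintype K]
    (R : I → V → K → Prop) (hR : ∀ c c' u x, R c u x → R c' u x → c = c')
    (c : I) (S : Finset I) (hc : c ∉ S) :
    #{f : V → K | ∀ i ∈ S, ∃ u, R i u (f u)} * #{f : V → K | ¬ ∃ u, R c u (f u)} ≤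
      #{f : V → K | (∀ i ∈ S, ∃ u, R i u (f u)) ∧ ¬ ∃ u, R c u (f u)}
        * #(univ : Finset (V → K)) := by
  rw [← card_product, ← card_product]
  apply card_le_card_of_injOn (fun p => (fun u => if R c u (p.1 u) then p.2 u else p.1 u,
    fun u => if R c u (p.1 u) then p.1 u else p.2 u))
  · rintro ⟨f, g⟩ h
    simp only [coe_product, Set.mem_prod, mem_coe, mem_filter, mem_univ, true_and, and_true,
      not_exists] at h ⊢
    refine ⟨fun i hi => ?_, fun u => ?_⟩
    · obtain ⟨u, hu⟩ := h.1 i hi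
      refine ⟨u, ?_⟩
      rw [if_neg]
      · exact hu
      · intro h'
        exact hc (hR _ _ _ _ h' hu ▸ hi)
    · split_ifs with h'
      · exact h.2 u
      · exact h'
  · rintro ⟨f, g⟩ h ⟨f', g'⟩ h' heq
    simp only [coe_product, Set.mem_prod, mem_coe, mem_filter, mem_univ, true_and,
      not_exists] at h h'
    simp only [Prod.mk.injEq] at heq ⊢
    have key : ∀ u, f u = f' u ∧ g u = g' u := by
      intro u
      have h1 := congrFun heq.1 u
      have h2 := congrFun heq.2 u
      have hg := h.2 u
      have hg' := h'.2 u
      split_ifs at h1 h2 with a b b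
      · exact ⟨h2, h1⟩
      · exact absurd (h2 ▸ a) hg'
      · exact absurd (h2 ▸ b) hg
      · exact ⟨h1, h2⟩
    exact ⟨funext fun u => (key u).1, funext fun u => (key u).2⟩

open scoped Classical in
lemma card_blocked_mul_le {V K I : Type} [Fintype V] [Fintype K]
    (R : I → V → K → Prop) (hR : ∀ c c' u x, R c u x → R c' u x → c = c')
    (c : I) (S : Finset I) (hc : c ∉ S) :
    #{f : V → K | ∀ i ∈ insert c S, ∃ u, R i u (f u)} * #(univ : Finset (V → K)) ≤
      #{f : V → K | ∀ i ∈ S, ∃ u, R i u (f u)} * #{f : V → K | ∃ u, R c u (f u)} := by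
  have h := card_unblocked_mul_le R hR c S hc
  have h1 : #(univ : Finset (V → K)) =
      #{f : V → K | ∃ u, R c u (f u)} + #{f : V → K | ¬ ∃ u, R c u (f u)} :=
    (card_filter_add_card_filter_not (s := univ) (p := fun f : V → K => ∃ u, R c u (f u))).symm
  have h2 : #{f : V → K | ∀ i ∈ S, ∃ u, R i u (f u)} =
      #{f : V → K | ∀ i ∈ insert c S, ∃ u, R i u (f u)}
      + #{f : V → K | (∀ i ∈ S, ∃ u, R i u (f u)) ∧ ¬ ∃ u, R c u (f u)} := by
    rw [← card_filter_add_card_filter_not (s := {f : V → K | ∀ i ∈ S, ∃ u, R i u (f u)})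
      (p := fun f => ∃ u, R c u (f u)), filter_filter, filter_filter]
    congr 2
    ext f
    simp [and_comm]
  generalize #(univ : Finset (V → K)) = N at *
  generalize #{f : V → K | ∃ u, R c u (f u)} = b at *
  generalize #{f : V → K | ¬ ∃ u, R c u (f u)} = b' at *
  generalize #{f : V → K | ∀ i ∈ S, ∃ u, R i u (f u)} = s at *
  nlinarith

open scoped Classical in
lemma card_all_blocked_le {V K I : Type} [Fintype V] [Fintype K] [Nonempty K]
    (R : I → V → K → Prop) (hR : ∀ c c' u x, R c u x → R c' u x → c = c')
    (q : ℝ)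
    (hq : ∀ c, (#{f : V → K | ∃ u, R c u (f u)} : ℝ) ≤ q * #(univ : Finset (V → K)))
    (S : Finset I) :
    (#{f : V → K | ∀ i ∈ S, ∃ u, R i u (f u)} : ℝ) ≤ q ^ #S * #(univ : Finset (V → K)) := by
  have hne : (0 : ℝ) < #(univ : Finset (V → K)) := by
    exact_mod_cast card_pos.2 univ_nonempty
  induction S using Finset.induction_on with
  | empty => simp
  | insert c S hc ih =>
    have hq0 : 0 ≤ q := by
      have h := (Nat.cast_nonneg _).trans (hq c)
      exact nonneg_of_mul_nonneg_left h hne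
    have h : (#{f : V → K | ∀ i ∈ insert c S, ∃ u, R i u (f u)} : ℝ) * #(univ : Finset (V → K)) ≤
      #{f : V → K | ∀ i ∈ S, ∃ u, R i u (f u)} * #{f : V → K | ∃ u, R c u (f u)} := by
      exact_mod_cast card_blocked_mul_le R hR c S hc
    rw [card_insert_of_notMem hc]
    refine le_of_mul_le_mul_right (h.trans ((mul_le_mul ih (hq c) (Nat.cast_nonneg _)
      (by positivity)).trans (le_of_eq ?_))) hne
    ring

open scoped Classical in
/-- `P u x` means that choosing `x` at `u` blocks a fixed element `c`. At most `D` coordinates have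
such a choice, and each has at most one, so `c` is unblocked with probability at least
`(1 - 1/k)^D`. -/
lemma card_unblocked_ge {V : Type} [Fintype V] {k D : ℕ} (hk : 0 < k)
    (P : V → Fin k → Prop) (hP : ∀ u x y, P u x → P u y → x = y)
    (hD : #{u | ∃ x, P u x} ≤ D) :
    (1 - 1 / (k : ℝ)) ^ D * #(univ : Finset (V → Fin k)) ≤
      #{f : V → Fin k | ¬ ∃ u, P u (f u)} := by
  have hk' : (1 : ℝ) ≤ k := by exact_mod_cast hk
  have hb0 : 0 ≤ 1 - 1 / (k : ℝ) := by
    rw [sub_nonneg, div_le_one (by linarith)]; exact hk'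
  have hb1 : 1 - 1 / (k : ℝ) ≤ 1 := by
    have : 0 ≤ 1 / (k : ℝ) := by positivity
    linarith
  have h1 : ({f : V → Fin k | ¬ ∃ u, P u (f u)} : Finset (V → Fin k))
      = Fintype.piFinset (fun u => ({x | ¬ P u x} : Finset (Fin k))) := by
    ext f; simp [Fintype.mem_piFinset]
  have h2 : ∀ u, (k : ℝ) * (if ∃ x, P u x then (1 - 1 / (k : ℝ)) else 1)
      ≤ #({x | ¬ P u x} : Finset (Fin k)) := by
    intro u
    have hsum := card_filter_add_card_filter_not (s := (univ : Finset (Fin k))) (p := P u)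
    rw [card_univ, Fintype.card_fin] at hsum
    have hsum' : (#({x | P u x} : Finset (Fin k)) : ℝ) + #({x | ¬ P u x} : Finset (Fin k)) = k := by
      exact_mod_cast hsum
    split_ifs with h
    · have hle : #({x | P u x} : Finset (Fin k)) ≤ 1 := by
        rw [card_le_one]
        intro a ha b hb
        exact hP u a b (mem_filter.1 ha).2 (mem_filter.1 hb).2
      have hle' : (#({x | P u x} : Finset (Fin k)) : ℝ) ≤ 1 := by exact_mod_cast hle
      have : (k : ℝ) * (1 - 1 / k) = k - 1 := by field_simp
      linarith
    · push Not at h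
      have : ({x | P u x} : Finset (Fin k)) = ∅ := by
        ext x; simp [h x]
      rw [this] at hsum'
      simp at hsum' ⊢
      linarith
  rw [h1, Fintype.card_piFinset]
  push_cast
  refine le_trans ?_ (prod_le_prod (fun u _ => ?_) (fun u _ => h2 u))
  · rw [prod_mul_distrib, prod_ite, prod_const, prod_const_one, mul_one, prod_const, card_univ,
      card_univ, Fintype.card_fun, Fintype.card_fin, mul_comm]
    push_cast
    exact mul_le_mul_of_nonneg_left (pow_le_pow_of_le_one hb0 hb1 hD) (by positivity)
  · split_ifs <;> positivity

/-! ### The choice of the list size -/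

open Filter in
/-- The numerical input. With `t = log D` and `δ = 1 - 1 / (1 + ε / 2)`, the exponent
`k (1 - 1/k)^D` is at least `exp (δ t) / t`, which eventually exceeds `7 t = log (D ^ 7)`. -/
lemma exists_list_size (ε : ℝ) (hε : 0 < ε) :
    ∃ D0 : ℕ, ∀ D : ℕ, D0 ≤ D → ∃ k : ℕ, 0 < k ∧ 0 < D ∧
      (∀ n : ℕ, (1 + ε) * D / Real.log D ≤ (n : ℝ) → k ≤ n) ∧
      4 * Real.exp (-(k * (1 - 1 / (k : ℝ)) ^ D)) * ((k * D : ℕ) : ℝ) ^ 2 ≤ 1 := by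
  set δ : ℝ := 1 - 1 / (1 + ε / 2) with hδ
  have hδ0 : 0 < δ := by
    rw [hδ, sub_pos, div_lt_one (by positivity)]; linarith
  have ht : Tendsto (fun D : ℕ => Real.log D) atTop atTop :=
    Real.tendsto_log_atTop.comp tendsto_natCast_atTop_atTop
  have e1 : ∀ᶠ t : ℝ in atTop, t ≤ (ε / 2) * Real.exp t := by
    have := (isLittleO_pow_exp_pos_mul_atTop 1 one_pos).bound (half_pos hε)
    filter_upwards [this, eventually_ge_atTop 0] with t h h0
    simpa [abs_of_nonneg h0] using h
  have e2 : ∀ᶠ t : ℝ in atTop, 7 * t ^ 2 ≤ Real.exp (δ * t) := by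
    have := (isLittleO_pow_exp_pos_mul_atTop 2 hδ0).bound (show (0 : ℝ) < 1 / 7 by norm_num)
    filter_upwards [this] with t h
    simp at h
    linarith
  obtain ⟨D0, hD0⟩ := eventually_atTop.1 ((ht.eventually (e1.and (e2.and
    (eventually_ge_atTop 1)))).and (tendsto_natCast_atTop_atTop.eventually
    (eventually_ge_atTop (4 + ε))))
  refine ⟨D0, fun D hD => ?_⟩
  obtain ⟨⟨h1, h2, h3⟩, h4⟩ := hD0 D hD
  set t := Real.log D with htdef
  set x : ℝ := (D : ℝ) with hx
  have hx0 : 0 < x := by linarith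
  have hxt : Real.exp t = x := Real.exp_log hx0
  have ht0 : 0 < t := by linarith
  rw [hxt] at h1
  set y := (1 + ε) * x / t with hy
  set k := ⌈y⌉₊ with hk
  have hyk : y ≤ k := Nat.le_ceil y
  have hy0 : 0 < y := by positivity
  have hky : (k : ℝ) ≤ y + 1 := (Nat.ceil_lt_add_one hy0.le).le
  have hk1 : (1 + ε / 2) * x / t ≤ k - 1 := by
    have : 1 ≤ (ε / 2) * x / t := by rw [le_div_iff₀ ht0]; linarith
    have hs : y = (1 + ε / 2) * x / t + (ε / 2) * x / t := by rw [hy]; ring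
    linarith
  have hk10 : (0 : ℝ) < k - 1 := lt_of_lt_of_le (by positivity) hk1
  have hk0 : (0 : ℝ) < k := by linarith
  have hkx : x / t ≤ k := by
    refine le_trans ?_ hyk
    rw [hy]
    gcongr
    nlinarith
  have hb : Real.exp (-(1 / ((k : ℝ) - 1))) ≤ 1 - 1 / (k : ℝ) := by
    have := Real.add_one_le_exp (1 / ((k : ℝ) - 1))
    rw [Real.exp_neg]
    have h' : 1 - 1 / (k : ℝ) = (1 / ((k : ℝ) - 1) + 1)⁻¹ := by
      have : (k : ℝ) - 1 ≠ 0 := hk10.ne'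
      field_simp
      ring
    rw [h']
    exact inv_anti₀ (by positivity) this
  have hpow : Real.exp (-(t / (1 + ε / 2))) ≤ (1 - 1 / (k : ℝ)) ^ D := by
    refine le_trans ?_ (pow_le_pow_left₀ (Real.exp_pos _).le hb D)
    rw [← Real.exp_nat_mul, Real.exp_le_exp, mul_neg, neg_le_neg_iff, mul_one_div]
    rw [div_le_div_iff₀ hk10 (by positivity)]
    rw [div_le_iff₀ ht0] at hk1
    linarith
  have hexp : 7 * t ≤ k * (1 - 1 / (k : ℝ)) ^ D := by
    calc 7 * t ≤ Real.exp (δ * t) / t := by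
          rw [le_div_iff₀ ht0]; linarith
      _ = x / t * Real.exp (-(t / (1 + ε / 2))) := by
          rw [← hxt, div_mul_eq_mul_div, ← Real.exp_add]
          congr 2
          rw [hδ]; ring
      _ ≤ _ := mul_le_mul hkx hpow (Real.exp_pos _).le hk0.le
  have hkx2 : (k : ℝ) ≤ x ^ 2 := by
    have : y ≤ (1 + ε) * x := div_le_self (by positivity) h3
    nlinarith
  refine ⟨k, by exact_mod_cast hk0, Nat.cast_pos.1 hx0, fun n hn => Nat.ceil_le.2 hn, ?_⟩
  have he : Real.exp (-(k * (1 - 1 / (k : ℝ)) ^ D)) ≤ (x ^ 7)⁻¹ := by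
    rw [Real.exp_neg]
    refine inv_anti₀ (by positivity) ?_
    rw [← hxt, ← Real.exp_nat_mul, Real.exp_le_exp]
    exact_mod_cast hexp
  have hkD : ((k * D : ℕ) : ℝ) ≤ x ^ 3 := by
    push_cast
    nlinarith
  calc 4 * Real.exp (-(k * (1 - 1 / (k : ℝ)) ^ D)) * ((k * D : ℕ) : ℝ) ^ 2
      ≤ 4 * (x ^ 7)⁻¹ * (x ^ 3) ^ 2 := by gcongr
    _ = 4 / x := by field_simp
    _ ≤ 1 := by rw [div_le_one hx0]; linarith

/-! ### The independent transversal -/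

theorem stmt3 (ε : ℝ) (hε : 0 < ε) :
    ∃ D0 : ℕ, ∀ (V W : Type) [Fintype V] [Fintype W]
      (G : SimpleGraph V) (H : SimpleGraph W) (L : V → Set W) (D : ℕ),
      (∃ A B, IsBipartitionOf G A B) → (∃ A B, IsBipartitionOf H A B) →
      IsCorrespondenceCoverWrt G H L →
      D0 ≤ D → (∀ x : W, deg H x ≤ D) →
      (∀ v : V, (1 + ε) * D / Real.log D ≤ ((L v).ncard : ℝ)) →
      HasIndepTransversal H L := by
  classical
  obtain ⟨D0, hD0⟩ := exists_list_size ε hε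
  refine ⟨D0, ?_⟩
  intro V W _ _ G H L D hG _ hL hD hdeg hcard
  obtain ⟨A, B, hAB, hdisj, hadj⟩ := hG
  obtain ⟨⟨hpart, hcov⟩, hmatch⟩ := hL
  obtain ⟨k, hk, hDpos, hkn, hnum⟩ := hD0 D hD
  -- `e v` enumerates the shrunken list of `v`
  have he : ∀ v, ∃ e : Fin k → W, Function.Injective e ∧ ∀ i, e i ∈ L v := by
    intro v
    have h1 : k ≤ (L v).ncard := hkn _ (hcard v)
    have h2 : k ≤ Fintype.card (L v) := by
      rwa [← Nat.card_coe_set_eq, Nat.card_eq_fintype_card] at h1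
    obtain ⟨φ⟩ : Nonempty (Fin k ↪ L v) :=
      Function.Embedding.nonempty_of_card_le (by simpa using h2)
    exact ⟨fun i => φ i, fun a b hab => φ.injective (Subtype.ext hab), fun i => (φ i).2⟩
  choose e heinj hemem using he
  have hGadj : ∀ u v i j, H.Adj (e u i) (e v j) → G.Adj u v := by
    intro u v i j h
    by_contra hn
    exact hcov hn _ (hemem u i) _ (hemem v j) h
  have huniq : ∀ u v i j j', H.Adj (e u i) (e v j) → H.Adj (e u i) (e v j') → j = j' := by
    intro u v i j j' h h'
    exact heinj v (hmatch (hGadj _ _ _ _ h) _ (hemem u i) _ (hemem v j) _ (hemem v j') h h')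
  have hnbr : ∀ v i, #{u | ∃ j, H.Adj (e v i) (e u j)} ≤ D := by
    intro v i
    choose π hπ _ using hpart
    have hsub : ({u | ∃ j, H.Adj (e v i) (e u j)} : Finset V) ⊆
        (H.neighborFinset (e v i)).image π := by
      intro u hu
      obtain ⟨j, hj⟩ := (mem_filter.1 hu).2
      refine mem_image.2 ⟨e u j, by simpa using hj, ?_⟩
      by_contra hne
      rename_i huni
      exact hne (huni (e u j) u (hemem u j)).symm
    refine (card_le_card hsub).trans (card_image_le.trans ?_)
    have := hdeg (e v i)
    rw [deg, ← SimpleGraph.coe_neighborFinset, Set.ncard_coe_finset] at this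
    exact this
  let T : V → Finset V := fun v => {u | ∃ i j, H.Adj (e v i) (e u j)}
  have hTmem : ∀ u v, u ∈ T v ↔ ∃ i j, H.Adj (e v i) (e u j) := by
    intro u v; simp [T]
  have hTsymm : ∀ u v, u ∈ T v → v ∈ T u := by
    intro u v h
    rw [hTmem] at h ⊢
    obtain ⟨i, j, h⟩ := h
    exact ⟨j, i, h.symm⟩
  have hTcard : ∀ v, #(T v) ≤ k * D := by
    intro v
    have hsub : T v ⊆ (univ : Finset (Fin k)).biUnion
        (fun i => {u | ∃ j, H.Adj (e v i) (e u j)}) := by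
      intro u hu
      simpa using (hTmem u v).1 hu
    refine (card_le_card hsub).trans ((card_biUnion_le_card_mul _ _ D
      (fun i _ => hnbr v i)).trans ?_)
    simp
  have : Nonempty (Fin k) := ⟨⟨0, hk⟩⟩
  have hk' : (1 : ℝ) ≤ k := by exact_mod_cast hk
  obtain ⟨f, hf⟩ := local_lemma_s3
    (fun v (f : V → Fin k) => ∀ i ∈ (univ : Finset (Fin k)), ∃ u, H.Adj (e v i) (e u (f u))) T
    (by
      intro v f g hfg hf i hi
      obtain ⟨u, hu⟩ := hf i hi
      exact ⟨u, by rw [← hfg u ((hTmem u v).2 ⟨i, _, hu⟩)]; exact hu⟩)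
    (Real.exp (-(k * (1 - 1 / (k : ℝ)) ^ D))) (((k * D : ℕ) : ℝ) ^ 2) (Real.exp_pos _).le
    (one_le_pow₀ (by exact_mod_cast Nat.mul_pos hk hDpos))
    (by
      intro v
      refine le_trans (le_of_eq ?_) ((card_all_blocked_le (fun i u x => H.Adj (e v i) (e u x)) ?_
        (1 - (1 - 1 / (k : ℝ)) ^ D) ?_ univ).trans ?_)
      · congr!
      · intro c c' u x h h'
        exact huniq u v x c c' h.symm h'.symm
      · intro c
        have h := card_unblocked_ge hk (fun u x => H.Adj (e v c) (e u x))
          (fun u x y => huniq v u c x y) (hnbr v c)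
        have hsum := card_filter_add_card_filter_not (s := (univ : Finset (V → Fin k)))
          (p := fun f => ∃ u, H.Adj (e v c) (e u (f u)))
        have hsum' : (#{f : V → Fin k | ∃ u, H.Adj (e v c) (e u (f u))} : ℝ)
          + #{f : V → Fin k | ¬ ∃ u, H.Adj (e v c) (e u (f u))}
          = #(univ : Finset (V → Fin k)) := by exact_mod_cast hsum
        linarith
      · refine mul_le_mul_of_nonneg_right ?_ (Nat.cast_nonneg _)
        rw [card_univ, Fintype.card_fin, ← mul_neg, Real.exp_nat_mul]
        have hb1 : (1 - 1 / (k : ℝ)) ^ D ≤ 1 := by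
          refine pow_le_one₀ ?_ ?_
          · rw [sub_nonneg, div_le_one (by linarith)]; exact hk'
          · have : 0 ≤ 1 / (k : ℝ) := by positivity
            linarith
        refine pow_le_pow_left₀ (by linarith) ?_ k
        have := Real.add_one_le_exp (-(1 - 1 / (k : ℝ)) ^ D)
        linarith)
    (by
      intro v
      have hsub : ({w | ¬ Disjoint (T v) (T w)} : Finset V) ⊆ (T v).biUnion T := by
        intro w hw
        obtain ⟨u, hu, hu'⟩ := Finset.not_disjoint_iff.1 (mem_filter.1 hw).2
        exact mem_biUnion.2 ⟨u, hu, hTsymm _ _ hu'⟩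
      have h := (card_le_card hsub).trans ((card_biUnion_le_card_mul _ _ (k * D)
        (fun u _ => hTcard u)).trans (Nat.mul_le_mul_right _ (hTcard v)))
      rw [sq]
      exact_mod_cast h)
    hnum
  have hg : ∀ v, ∃ i, ∀ u, ¬ H.Adj (e v i) (e u (f u)) := by
    intro v
    have := hf v
    push Not at this
    obtain ⟨i, _, hi⟩ := this
    exact ⟨i, hi⟩
  choose g hg using hg
  let h : V → Fin k := fun v => if v ∈ A then f v else g v
  have hhA : ∀ v ∈ A, h v = f v := fun v hv => if_pos hv
  have hhB : ∀ v ∈ B, h v = g v := fun v hv =>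
    if_neg (fun hA => Set.disjoint_left.1 hdisj hA hv)
  refine ⟨Set.range (fun v => e v (h v)), ?_, ?_⟩
  · rintro _ ⟨u, rfl⟩ _ ⟨v, rfl⟩ huv
    simp only at huv
    rcases hadj (hGadj _ _ _ _ huv) with ⟨hu, hv⟩ | ⟨hu, hv⟩
    · rw [hhA u hu, hhB v hv] at huv
      exact hg v u huv.symm
    · rw [hhB u hu, hhA v hv] at huv
      exact hg u v huv
  · intro v
    refine ⟨e v (h v), ⟨hemem v _, v, rfl⟩, ?_⟩
    rintro _ ⟨hw, u, rfl⟩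
    have : u = v := (hpart _).unique (hemem u (h u)) hw
    simp [this]
end

section
/- For each $\varepsilon > 0$ there exists $D_0$ such that the following holds. Let $G$ and $H$ be finite bipartite graphs with bipartitions $(A_G,B_G)$ and $(A_H,B_H)$ respectively, such that $H$ is a bipartite correspondence-cover of $G$ with respect to a map $L$. If every vertex of $A_H$ has degree at most $D_A$ in $H$ and every vertex of $B_H$ has degree at most $D_B$ in $H$, where $D_A, D_B \ge D_0$, and $|L(v)| \ge (1+\varepsilon) D_A/\log D_A$ for all $v \in A_G$ and $|L(w)| \ge (1+\varepsilon) D_B/\log D_B$ for all $w \in B_G$ (where $\log$ denotes the natural logarithm), then $H$ admits an independent transversal with respect to $L$. -/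
/-! ### The local lemma -/

open Finset in
/-- The symmetric Lovász local lemma for the uniform measure on a finite set `Ω`, in counting form.
The independence hypothesis is only the inequality
`P(Bad i ∧ no Bad j for j ∈ S) ≤ P(Bad i) * P(no Bad j for j ∈ S)` for `S` disjoint from `Γ i`. -/
theorem local_lemma_s4 {Ω ι : Type*} [Fintype Ω] [Nonempty Ω] [Fintype ι]
    [DecidableEq Ω] [DecidableEq ι]
    (Bad : ι → Finset Ω) (Γ : ι → Finset ι) (p d : ℝ) (hp0 : 0 ≤ p) (hd1 : 1 ≤ d)
    (hpd : 4 * p * d ≤ 1)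
    (hp : ∀ i, (#(Bad i) : ℝ) ≤ p * Fintype.card Ω)
    (hd : ∀ i, (#(Γ i) : ℝ) ≤ d)
    (hind : ∀ i (S : Finset ι), Disjoint S (Γ i) →
      #(Bad i ∩ (S.biUnion Bad)ᶜ) * Fintype.card Ω ≤ #(Bad i) * #((S.biUnion Bad)ᶜ)) :
    ∃ ω, ∀ i, ω ∉ Bad i := by
  have hΩ : (0 : ℝ) < Fintype.card Ω := by exact_mod_cast Fintype.card_pos
  -- The conditional probability of `Bad i`, given that no event indexed by `S` occurs,
  -- is at most `2 * p`.
  have key : ∀ n : ℕ, ∀ S : Finset ι, #S = n → ∀ i,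
      (#(Bad i ∩ (S.biUnion Bad)ᶜ) : ℝ) ≤ 2 * p * #((S.biUnion Bad)ᶜ) := by
    intro n
    induction n using Nat.strong_induction_on with
    | _ n ih =>
    intro S hS i
    have hfar : ∀ S' : Finset ι, Disjoint S' (Γ i) →
        (#(Bad i ∩ (S'.biUnion Bad)ᶜ) : ℝ) ≤ p * #((S'.biUnion Bad)ᶜ) := by
      intro S' hS'
      have h1 : (#(Bad i ∩ (S'.biUnion Bad)ᶜ) : ℝ) * Fintype.card Ω
          ≤ #(Bad i) * #((S'.biUnion Bad)ᶜ) := by exact_mod_cast hind i S' hS'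
      have h2 : (#(Bad i) : ℝ) * #((S'.biUnion Bad)ᶜ)
          ≤ p * Fintype.card Ω * #((S'.biUnion Bad)ᶜ) :=
        mul_le_mul_of_nonneg_right (hp i) (by positivity)
      refine le_of_mul_le_mul_right ?_ hΩ
      linarith
    by_cases hdis : Disjoint S (Γ i)
    · have := hfar S hdis
      have h0 : 0 ≤ p * (#((S.biUnion Bad)ᶜ) : ℝ) := by positivity
      linarith
    · set S₂ := S \ Γ i with hS₂
      have hlt : #S₂ < n := by
        rw [← hS]
        apply Finset.card_lt_card
        refine ⟨sdiff_subset, fun h => hdis ?_⟩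
        rw [Finset.disjoint_left]
        intro a ha
        exact (mem_sdiff.1 (h ha)).2
      have hsub : (S.biUnion Bad)ᶜ ⊆ (S₂.biUnion Bad)ᶜ := by
        apply compl_subset_compl.2
        exact biUnion_subset_biUnion_of_subset_left _ sdiff_subset
      have hnum : (#(Bad i ∩ (S.biUnion Bad)ᶜ) : ℝ) ≤ p * #((S₂.biUnion Bad)ᶜ) := by
        refine le_trans ?_ (hfar S₂ disjoint_sdiff_self_left)
        exact_mod_cast card_le_card (inter_subset_inter_left hsub)
      have hcov : (S₂.biUnion Bad)ᶜ ⊆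
          (S.biUnion Bad)ᶜ ∪ (Γ i).biUnion fun j => Bad j ∩ (S₂.biUnion Bad)ᶜ := by
        intro ω hω
        by_cases h : ω ∈ (S.biUnion Bad)ᶜ
        · exact mem_union_left _ h
        · apply mem_union_right
          simp only [mem_compl, not_not, mem_biUnion] at h
          obtain ⟨j, hj, hjω⟩ := h
          refine mem_biUnion.2 ⟨j, ?_, mem_inter.2 ⟨hjω, hω⟩⟩
          by_contra hjΓ
          exact (mem_compl.1 hω) (mem_biUnion.2 ⟨j, mem_sdiff.2 ⟨hj, hjΓ⟩, hjω⟩)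
      have hden : (#((S₂.biUnion Bad)ᶜ) : ℝ) ≤
          #((S.biUnion Bad)ᶜ) + d * (2 * p * #((S₂.biUnion Bad)ᶜ)) := by
        have h1 : (#((S₂.biUnion Bad)ᶜ) : ℝ) ≤ #((S.biUnion Bad)ᶜ) +
            ∑ j ∈ Γ i, (#(Bad j ∩ (S₂.biUnion Bad)ᶜ) : ℝ) := by
          exact_mod_cast (card_le_card hcov).trans ((card_union_le _ _).trans
            (Nat.add_le_add_left card_biUnion_le _))
        have h2 : ∑ j ∈ Γ i, (#(Bad j ∩ (S₂.biUnion Bad)ᶜ) : ℝ)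
            ≤ #(Γ i) * (2 * p * #((S₂.biUnion Bad)ᶜ)) := by
          rw [← nsmul_eq_mul]
          exact sum_le_card_nsmul _ _ _ fun j _ => ih _ hlt S₂ rfl j
        have h3 : (#(Γ i) : ℝ) * (2 * p * #((S₂.biUnion Bad)ᶜ))
            ≤ d * (2 * p * #((S₂.biUnion Bad)ᶜ)) :=
          mul_le_mul_of_nonneg_right (hd i) (by positivity)
        linarith
      have h4 : 4 * p * d * (#((S₂.biUnion Bad)ᶜ) : ℝ) ≤ 1 * #((S₂.biUnion Bad)ᶜ) :=
        mul_le_mul_of_nonneg_right hpd (by positivity)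
      have h5 : (#((S₂.biUnion Bad)ᶜ) : ℝ) ≤ 2 * #((S.biUnion Bad)ᶜ) := by linarith
      have h6 := mul_le_mul_of_nonneg_left h5 hp0
      linarith
  have hp2 : 2 * p < 1 := by nlinarith
  have pos : ∀ S : Finset ι, 0 < #((S.biUnion Bad)ᶜ) := by
    intro S
    induction S using Finset.induction_on with
    | empty => simpa using Fintype.card_pos
    | insert i S _ ih =>
      have h := key _ S rfl i
      have hsplit : (#((S.biUnion Bad)ᶜ) : ℝ) ≤ #(Bad i ∩ (S.biUnion Bad)ᶜ) +
          #(((insert i S).biUnion Bad)ᶜ) := by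
        have : (S.biUnion Bad)ᶜ ⊆
            (Bad i ∩ (S.biUnion Bad)ᶜ) ∪ ((insert i S).biUnion Bad)ᶜ := by
          intro ω hω
          by_cases hi : ω ∈ Bad i
          · exact mem_union_left _ (mem_inter.2 ⟨hi, hω⟩)
          · apply mem_union_right
            rw [biUnion_insert, mem_compl, mem_union, not_or]
            exact ⟨hi, mem_compl.1 hω⟩
        exact_mod_cast (card_le_card this).trans (card_union_le _ _)
      have ih' : (0 : ℝ) < #((S.biUnion Bad)ᶜ) := by exact_mod_cast ih
      have : (0 : ℝ) < #(((insert i S).biUnion Bad)ᶜ) := by nlinarith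
      exact_mod_cast this
  obtain ⟨ω, hω⟩ := card_pos.1 (pos univ)
  refine ⟨ω, fun i hi => mem_compl.1 hω (mem_biUnion.2 ⟨i, mem_univ _, hi⟩)⟩

/-! ### Random choices in a finite product -/

open Finset in
/-- In a finite product space, an event `A` determined by the coordinates in `P` and an event `N`
determined by the remaining coordinates satisfy `P(A ∩ N) ≤ P(A) * P(N)`. -/
theorem card_inter_mul_card_le {α : Type*} [Fintype α] [DecidableEq α] {β : α → Type*}
    [∀ a, Fintype (β a)] [∀ a, DecidableEq (β a)] (P : α → Prop) [DecidablePred P]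
    (A N : Finset (∀ a, β a))
    (hA : ∀ f g : ∀ a, β a, (∀ a, P a → f a = g a) → f ∈ A → g ∈ A)
    (hN : ∀ f g : ∀ a, β a, (∀ a, ¬ P a → f a = g a) → f ∈ N → g ∈ N) :
    #(A ∩ N) * Fintype.card (∀ a, β a) ≤ #A * #N := by
  classical
  rw [← card_univ, ← card_product, ← card_product]
  -- Exchange the coordinates outside `P`.
  refine card_le_card_of_injOn
    (fun q => (fun a => if P a then q.1 a else q.2 a, fun a => if P a then q.2 a else q.1 a)) ?_ ?_
  · rintro ⟨x, ω⟩ h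
    have h := (mem_product.1 h).1
    rw [mem_inter] at h
    exact mem_product.2 ⟨hA x _ (fun a ha => by simp [ha]) h.1,
      hN x _ (fun a ha => by simp [ha]) h.2⟩
  · rintro ⟨x, ω⟩ - ⟨x', ω'⟩ - h
    simp only [Prod.mk.injEq] at h ⊢
    constructor <;> funext a <;> have h1 := congrFun h.1 a <;> have h2 := congrFun h.2 a <;>
      by_cases hP : P a <;> simp_all

open Finset in
/-- Say that `f` covers `y` if `R a (f a) y` for some `a`. If each value `f a` covers at most one
element of `γ`, the events that a given `y` is covered are negatively correlated, so the
probability that every `y` is covered is at most the product of the individual bounds `q`. -/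
theorem card_all_covered_le {α γ : Type*} [Fintype α] [DecidableEq α] [Fintype γ]
    {β : α → Type*} [∀ a, Fintype (β a)] [∀ a, Nonempty (β a)]
    (R : ∀ a, β a → γ → Prop)
    (hR1 : ∀ a x y y', R a x y → R a x y' → y = y')
    (q : ℝ) (hq : ∀ y, (Nat.card {f : ∀ a, β a // ∃ a, R a (f a) y} : ℝ)
      ≤ q * Nat.card (∀ a, β a)) (hq0 : 0 ≤ q) :
    (Nat.card {f : ∀ a, β a // ∀ y, ∃ a, R a (f a) y} : ℝ)
      ≤ q ^ Fintype.card γ * Nat.card (∀ a, β a) := by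
  classical
  simp only [Nat.card_eq_fintype_card, Fintype.card_subtype] at *
  have hΩ : (0 : ℝ) < Fintype.card (∀ a, β a) := by exact_mod_cast Fintype.card_pos
  have main : ∀ S : Finset γ, (#{f : ∀ a, β a | ∀ y ∈ S, ∃ a, R a (f a) y} : ℝ)
      ≤ q ^ #S * Fintype.card (∀ a, β a) := by
    intro S
    induction S using Finset.induction_on with
    | empty => simp
    | insert c S hc ih =>
      set F : Finset (∀ a, β a) := {f | ∀ y ∈ S, ∃ a, R a (f a) y} with hF
      set C : Finset (∀ a, β a) := {f | ∃ a, R a (f a) c} with hC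
      set U : Finset (∀ a, β a) := {f | ¬ ∃ a, R a (f a) c} with hU
      -- Where `f` uses a neighbour of `c`, exchange its value with that of `u`.
      have hinj : #F * #U ≤ #(F ∩ U) * Fintype.card (∀ a, β a) := by
        rw [← card_univ, ← card_product, ← card_product]
        refine card_le_card_of_injOn
          (fun q => (fun a => if R a (q.1 a) c then q.2 a else q.1 a,
            fun a => if R a (q.1 a) c then q.1 a else q.2 a)) ?_ ?_
        · rintro ⟨f, u⟩ h
          have h := mem_product.1 h
          simp only [hF, hU, mem_filter, mem_univ, true_and, not_exists] at h
          refine mem_product.2 ⟨mem_inter.2 ⟨?_, ?_⟩, mem_univ _⟩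
          · simp only [hF, mem_filter, mem_univ, true_and]
            intro y hy
            obtain ⟨a, ha⟩ := h.1 y hy
            refine ⟨a, ?_⟩
            have : ¬ R a (f a) c := fun h' => hc (hR1 a _ _ _ h' ha ▸ hy)
            simpa [this] using ha
          · simp only [hU, mem_filter, mem_univ, true_and, not_exists]
            intro a
            by_cases h' : R a (f a) c
            · simpa [h'] using h.2 a
            · simp [h']
        · rintro ⟨f, u⟩ h ⟨f', u'⟩ h' heq
          have h := mem_product.1 h
          have h' := mem_product.1 h'
          simp only [hF, hU, mem_filter, mem_univ, true_and, not_exists] at h h'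
          simp only [Prod.mk.injEq] at heq ⊢
          have hu := h.2
          have hu' := h'.2
          clear h h'
          constructor <;> funext a <;> have h1 := congrFun heq.1 a <;>
            have h2 := congrFun heq.2 a <;> have h3 := hu a <;> have h4 := hu' a <;>
            clear heq hu hu' <;>
            by_cases hP : R a (f a) c <;> by_cases hP' : R a (f' a) c <;> simp_all
      have hFs : #(F ∩ C) + #(F ∩ U) = #F := by
        rw [← card_filter_add_card_filter_not (s := F) (fun f => ∃ a, R a (f a) c)]
        congr 2 <;> ext f <;> simp [hC, hU]
      have hUs : #C + #U = Fintype.card (∀ a, β a) := by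
        rw [← card_univ, ← card_filter_add_card_filter_not (s := univ)
          (fun f : ∀ a, β a => ∃ a, R a (f a) c)]
      have hFC : (#(F ∩ C) : ℝ) * Fintype.card (∀ a, β a) ≤ #F * #C := by
        have h1 : (#F : ℝ) * #U ≤ #(F ∩ U) * Fintype.card (∀ a, β a) := by exact_mod_cast hinj
        have h2 : (#(F ∩ C) : ℝ) + #(F ∩ U) = #F := by exact_mod_cast hFs
        have h3 : (#C : ℝ) + #U = Fintype.card (∀ a, β a) := by exact_mod_cast hUs
        have h4 : (#(F ∩ U) : ℝ) = #F - #(F ∩ C) := by linarith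
        have h5 : (#U : ℝ) = Fintype.card (∀ a, β a) - #C := by linarith
        rw [h4, h5] at h1
        linarith
      have heq : ({f : ∀ a, β a | ∀ y ∈ insert c S, ∃ a, R a (f a) y} : Finset _) = F ∩ C := by
        ext f
        simp [hF, hC, and_comm]
      rw [heq, card_insert_of_notMem hc]
      refine le_of_mul_le_mul_right ?_ hΩ
      calc (#(F ∩ C) : ℝ) * Fintype.card (∀ a, β a) ≤ #F * #C := hFC
        _ ≤ (q ^ #S * Fintype.card (∀ a, β a)) * (q * Fintype.card (∀ a, β a)) :=
          mul_le_mul ih (hq c) (by positivity) (by positivity)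
        _ = _ := by ring
  simpa using main univ

open Finset in
/-- If `Q` holds for at most one of the `k` values at each coordinate, and for none outside at most
`D` coordinates, then a uniformly random `f` avoids `Q` with probability at least
`(1 - 1 / k) ^ D`. -/
theorem card_covered_le {α : Type*} [Fintype α] [DecidableEq α]
    {β : α → Type*} [∀ a, Fintype (β a)] (k D : ℕ) (hk : 1 ≤ k)
    (hβ : ∀ a, Fintype.card (β a) = k) (Q : ∀ a, β a → Prop)
    (hQ : ∀ a x x', Q a x → Q a x' → x = x')
    (hD : Nat.card {a // ∃ x, Q a x} ≤ D) :
    (Nat.card {f : ∀ a, β a // ∃ a, Q a (f a)} : ℝ)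
      ≤ (1 - (1 - 1 / (k : ℝ)) ^ D) * Nat.card (∀ a, β a) := by
  classical
  simp only [Nat.card_eq_fintype_card, Fintype.card_subtype] at *
  have hk0 : (0 : ℝ) < k := by exact_mod_cast hk
  have hk1 : (1 : ℝ) ≤ k := by exact_mod_cast hk
  have h01 : 0 ≤ 1 - 1 / (k : ℝ) := by
    rw [sub_nonneg, div_le_one hk0]; exact hk1
  have hU : ({f : ∀ a, β a | ¬ ∃ a, Q a (f a)} : Finset _) =
      Fintype.piFinset (fun a => ({x | ¬ Q a x} : Finset (β a))) := by
    ext f; simp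
  have hcard : ∀ a, (k : ℝ) * (if ∃ x, Q a x then 1 - 1 / (k : ℝ) else 1) ≤
      (#{x | ¬ Q a x} : ℝ) := by
    intro a
    have h1 := card_filter_add_card_filter_not (s := (univ : Finset (β a))) (Q a)
    rw [card_univ, hβ a] at h1
    have h1' : (#{x | Q a x} : ℝ) + #{x | ¬ Q a x} = k := by exact_mod_cast h1
    split_ifs with h
    · have : #{x | Q a x} ≤ 1 := by
        rw [card_le_one]
        intro x hx y hy
        exact hQ a x y (by simpa using hx) (by simpa using hy)
      have : (#{x | Q a x} : ℝ) ≤ 1 := by exact_mod_cast this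
      rw [mul_sub, mul_one_div_cancel hk0.ne']
      linarith
    · have : #{x | Q a x} = 0 := by
        rw [card_eq_zero, filter_eq_empty_iff]
        exact fun x _ hx => h ⟨x, hx⟩
      rw [this] at h1'
      simp at h1'
      simp [h1']
  have hΩ : Fintype.card (∀ a, β a) = k ^ Fintype.card α := by
    simp [Fintype.card_pi, hβ, prod_const]
  have hlow : (Fintype.card (∀ a, β a) : ℝ) * (1 - 1 / (k : ℝ)) ^ D
      ≤ #{f : ∀ a, β a | ¬ ∃ a, Q a (f a)} := by
    rw [hU, Fintype.card_piFinset]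
    push_cast
    calc (Fintype.card (∀ a, β a) : ℝ) * (1 - 1 / (k : ℝ)) ^ D
        ≤ (Fintype.card (∀ a, β a) : ℝ) * (1 - 1 / (k : ℝ)) ^ #{a | ∃ x, Q a x} := by
          apply mul_le_mul_of_nonneg_left _ (by positivity)
          exact pow_le_pow_of_le_one h01 (by simp) hD
      _ = ∏ a, (k : ℝ) * (if ∃ x, Q a x then 1 - 1 / (k : ℝ) else 1) := by
          rw [prod_mul_distrib, prod_ite, hΩ]
          simp
      _ ≤ _ := prod_le_prod (fun a _ => by split_ifs <;> positivity) (fun a _ => hcard a)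
  have hs := card_filter_add_card_filter_not (s := univ) (fun f : ∀ a, β a => ∃ a, Q a (f a))
  rw [card_univ] at hs
  have hs' : (#{f : ∀ a, β a | ∃ a, Q a (f a)} : ℝ) + #{f : ∀ a, β a | ¬ ∃ a, Q a (f a)} =
    Fintype.card (∀ a, β a) := by exact_mod_cast hs
  linarith

/-! ### Numerical estimates -/

section

open Real Filter

theorem eventually_estimates (ε : ℝ) (hε : 0 < ε) :
    ∀ᶠ x : ℝ in atTop, 4 ≤ x ∧ 1 + ε ≤ log x ∧ log x ≤ x ^ (1 / 4 : ℝ) ∧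
      2 / ε * log x ≤ x ∧ 10 * log x ≤ x ∧
      11 * log x ^ 2 ≤ x ^ (1 - 1 / (1 + ε / 2)) := by
  have hδ : 0 < 1 - 1 / (1 + ε / 2) := by
    rw [sub_pos, div_lt_one (by positivity)]; linarith
  have h1 := (isLittleO_log_rpow_atTop (r := 1 / 4) (by norm_num)).bound (c := 1) one_pos
  have h2 := isLittleO_log_id_atTop.bound (c := ε / 2) (by positivity)
  have h3 := isLittleO_log_id_atTop.bound (c := 1 / 10) (by positivity)
  have h4 := (isLittleO_log_rpow_rpow_atTop (s := 1 - 1 / (1 + ε / 2)) 2 hδ).bound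
    (c := 1 / 11) (by positivity)
  filter_upwards [h1, h2, h3, h4, eventually_ge_atTop 4,
    tendsto_log_atTop.eventually_ge_atTop (1 + ε)] with x h1 h2 h3 h4 h5 h6
  have hl : 0 < log x := by linarith
  have hx : 0 < x := by linarith
  have hr : ∀ r : ℝ, ‖x ^ r‖ = x ^ r := fun r => norm_of_nonneg (rpow_nonneg hx.le r)
  have hr' : ‖log x ^ (2 : ℝ)‖ = log x ^ 2 := by
    rw [norm_of_nonneg (rpow_nonneg hl.le _)]; exact_mod_cast rpow_natCast (log x) 2
  rw [hr, norm_of_nonneg hl.le] at h1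
  rw [norm_of_nonneg hl.le, id, norm_of_nonneg hx.le] at h2 h3
  rw [hr, hr'] at h4
  refine ⟨h5, h6, by linarith, ?_, by linarith, by linarith⟩
  calc 2 / ε * log x ≤ 2 / ε * (ε / 2 * x) := by gcongr
    _ = x := by field_simp

/-- The numerical condition of the local lemma for part sizes `k`, `m`, when `DB ≤ DA`. If
`DA ≥ DB ^ 4`, Bernoulli's inequality bounds the base by `DB / k ≤ DA ^ (-1/2)`, and `m ≥ 10`
suffices. Otherwise everything is polynomial in `DB`, and since `log x / x` is decreasing,
`(1 - 1 / k) ^ DB` is at least `DB ^ (-1 / (1 + ε / 2))`, so that the `m`-th power is at most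
`exp (-DB ^ δ / log DB)` with `δ > 0`. -/
theorem exists_threshold (ε : ℝ) (hε : 0 < ε) :
    ∃ D0 : ℕ, 1 ≤ D0 ∧ ∀ DA DB k m : ℕ, D0 ≤ DB → DB ≤ DA →
      k = ⌈(1 + ε) * DA / log DA⌉₊ → m = ⌈(1 + ε) * DB / log DB⌉₊ →
      1 ≤ k ∧ 1 ≤ m ∧
        4 * (1 - (1 - 1 / (k : ℝ)) ^ DB) ^ m * ((m * DB * (k * DA) : ℕ) : ℝ) ≤ 1 := by
  obtain ⟨D0, hD0⟩ := eventually_atTop.1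
    (tendsto_natCast_atTop_atTop.eventually (eventually_estimates ε hε))
  refine ⟨max D0 1, le_max_right _ _, fun DA DB k m hDB hDAB hk hm => ?_⟩
  have hDB0 : D0 ≤ DB := (le_max_left _ _).trans hDB
  obtain ⟨a1, a2, a3, a4, a5, -⟩ := hD0 DA (hDB0.trans hDAB)
  obtain ⟨b1, b2, b3, b4, b5, b6⟩ := hD0 DB hDB0
  have hAB : (DB : ℝ) ≤ DA := by exact_mod_cast hDAB
  have bounds : ∀ D n : ℕ, (4 : ℝ) ≤ D → 1 + ε ≤ log D → 10 * log (D : ℝ) ≤ D →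
      n = ⌈(1 + ε) * D / log D⌉₊ → (1 + ε) * D / log D ≤ n ∧ n ≤ D ∧ 10 ≤ n := by
    intro D n h1 h2 h3 hn
    have hl : 0 < log (D : ℝ) := by linarith
    have hle : (1 + ε) * D / log D ≤ n := hn ▸ Nat.le_ceil _
    refine ⟨hle, ?_, ?_⟩
    · rw [hn]
      apply Nat.ceil_le.2
      rw [div_le_iff₀ hl, mul_comm]
      gcongr
    · have : (10 : ℝ) ≤ (1 + ε) * D / log D := by
        rw [le_div_iff₀ hl]; nlinarith
      exact_mod_cast this.trans hle
  obtain ⟨ka, kD, k10⟩ := bounds DA k a1 a2 a5 hk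
  obtain ⟨mb, mD, m10⟩ := bounds DB m b1 b2 b5 hm
  refine ⟨by omega, by omega, ?_⟩
  have hlA : 0 < log (DA : ℝ) := by linarith
  have hlB : 0 < log (DB : ℝ) := by linarith
  have k10' : (10 : ℝ) ≤ k := by exact_mod_cast k10
  have kD' : (k : ℝ) ≤ DA := by exact_mod_cast kD
  have mD' : (m : ℝ) ≤ DB := by exact_mod_cast mD
  have hA0 : (0 : ℝ) < DA := by linarith
  have hB0 : (0 : ℝ) < DB := by linarith
  have hk0 : (0 : ℝ) < k := by linarith
  have hu0 : 0 ≤ 1 - 1 / (k : ℝ) := by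
    rw [sub_nonneg, div_le_one hk0]; linarith
  have hu1 : 1 - 1 / (k : ℝ) ≤ 1 := by simp
  have hq0 : 0 ≤ 1 - (1 - 1 / (k : ℝ)) ^ DB := sub_nonneg.2 (pow_le_one₀ hu0 hu1)
  have hq1 : 1 - (1 - 1 / (k : ℝ)) ^ DB ≤ 1 := by
    have := pow_nonneg hu0 DB
    linarith
  have hfac : ((m * DB * (k * DA) : ℕ) : ℝ) ≤ (DB : ℝ) ^ 2 * (DA : ℝ) ^ 2 := by
    push_cast
    calc (m : ℝ) * DB * (k * DA) ≤ DB * DB * (DA * DA) := by gcongr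
      _ = _ := by ring
  rcases le_or_gt ((DB : ℝ) ^ 4) DA with hbig | hsmall
  · have hBq : (DB : ℝ) ≤ (DA : ℝ) ^ (1 / 4 : ℝ) := by
      rw [show (1 / 4 : ℝ) = ((4 : ℕ) : ℝ)⁻¹ by norm_num]
      exact (le_rpow_inv_iff_of_pos hB0.le hA0.le (by norm_num)).2 (by exact_mod_cast hbig)
    have hq : 1 - (1 - 1 / (k : ℝ)) ^ DB ≤ (DA : ℝ) ^ (-(1 / 2) : ℝ) := by
      have hbern := one_add_mul_le_pow (a := -(1 / (k : ℝ))) (by linarith) DB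
      rw [← sub_eq_add_neg] at hbern
      have h1 : (DB : ℝ) / k ≤ DB * log DA / DA := by
        rw [div_le_div_iff₀ hk0 hA0, mul_assoc]
        gcongr
        rw [div_le_iff₀ hlA] at ka
        nlinarith
      have h2 : DB * log DA / DA ≤ (DA : ℝ) ^ (-(1 / 2) : ℝ) := by
        rw [div_le_iff₀ hA0]
        calc DB * log DA ≤ (DA : ℝ) ^ (1 / 4 : ℝ) * (DA : ℝ) ^ (1 / 4 : ℝ) := by gcongr
          _ = (DA : ℝ) ^ (-(1 / 2) : ℝ) * (DA : ℝ) ^ (1 : ℝ) := by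
            rw [← rpow_add hA0, ← rpow_add hA0]; norm_num
          _ = _ := by rw [rpow_one]
      have h3 : (DB : ℝ) / k = DB * (1 / k) := by ring
      linarith
    have hqm : (1 - (1 - 1 / (k : ℝ)) ^ DB) ^ m ≤ ((DA : ℝ) ^ 5)⁻¹ := by
      calc (1 - (1 - 1 / (k : ℝ)) ^ DB) ^ m ≤ (1 - (1 - 1 / (k : ℝ)) ^ DB) ^ 10 :=
            pow_le_pow_of_le_one hq0 hq1 m10
        _ ≤ ((DA : ℝ) ^ (-(1 / 2) : ℝ)) ^ 10 := by gcongr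
        _ = (DA : ℝ) ^ (-(5 : ℕ) : ℝ) := by
          rw [← rpow_natCast, ← rpow_mul hA0.le]; norm_num
        _ = _ := by rw [rpow_neg hA0.le, rpow_natCast]
    calc _ ≤ 4 * ((DA : ℝ) ^ 5)⁻¹ * ((DA : ℝ) ^ 2 * (DA : ℝ) ^ 2) := by
          gcongr
          exact hfac.trans (by gcongr)
      _ = 4 / DA := by field_simp
      _ ≤ 1 := by rw [div_le_one hA0]; exact a1
  · have hk1 : (1 + ε / 2) * DA / log DA ≤ (k : ℝ) - 1 := by
      have : 1 ≤ ε / 2 * DA / log DA := by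
        rw [le_div_iff₀ hlA]
        rw [div_mul_eq_mul_div, div_le_iff₀ hε] at a4
        linarith
      have e : (1 + ε) * DA / log DA = (1 + ε / 2) * DA / log DA + ε / 2 * DA / log DA := by
        ring
      linarith
    -- `log x / x` is decreasing
    have hmono : log (DA : ℝ) / DA ≤ log DB / DB := by
      have he : exp 1 ≤ DB := by have := exp_one_lt_d9; linarith
      exact log_div_self_antitoneOn he (he.trans hAB) hAB
    have hexp : (DB : ℝ) / (k - 1) ≤ log DB / (1 + ε / 2) := by
      have hpos : 0 < (1 + ε / 2) * DA / log DA := by positivity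
      calc (DB : ℝ) / (k - 1) ≤ DB / ((1 + ε / 2) * DA / log DA) := by gcongr
        _ = DB * (log DA / DA) / (1 + ε / 2) := by field_simp
        _ ≤ DB * (log DB / DB) / (1 + ε / 2) := by gcongr
        _ = _ := by field_simp
    have hu : exp (-(1 / ((k : ℝ) - 1))) ≤ 1 - 1 / k := by
      have hk1 : (0 : ℝ) < k - 1 := by linarith
      have h1 := add_one_le_exp (1 / ((k : ℝ) - 1))
      have h2 : 1 / ((k : ℝ) - 1) + 1 = (1 - 1 / (k : ℝ))⁻¹ := by
        rw [one_sub_div hk0.ne', inv_div]; field_simp; ring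
      rw [exp_neg, ← inv_inv (1 - 1 / (k : ℝ)), ← h2]
      gcongr
    have hlow : (DB : ℝ) ^ (-(1 / (1 + ε / 2))) ≤ (1 - 1 / (k : ℝ)) ^ DB := by
      calc (DB : ℝ) ^ (-(1 / (1 + ε / 2))) = exp (-(log DB / (1 + ε / 2))) := by
            rw [rpow_def_of_pos hB0]; congr 1; ring
        _ ≤ exp (-((DB : ℝ) / (k - 1))) := by gcongr
        _ = exp (-(1 / ((k : ℝ) - 1))) ^ DB := by
            rw [← exp_nat_mul]; congr 1; ring
        _ ≤ _ := by gcongr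
    have hm' : (DB : ℝ) / log DB ≤ m := by
      refine le_trans ?_ mb
      gcongr
      nlinarith
    have hmq : 11 * log DB ≤ m * (1 - 1 / (k : ℝ)) ^ DB := by
      calc 11 * log (DB : ℝ) ≤ (DB : ℝ) ^ (1 - 1 / (1 + ε / 2)) / log DB := by
            rw [le_div_iff₀ hlB]; linarith
        _ = DB / log DB * (DB : ℝ) ^ (-(1 / (1 + ε / 2))) := by
            rw [sub_eq_add_neg, rpow_add hB0, rpow_one]; ring
        _ ≤ _ := by gcongr
    have hqm : (1 - (1 - 1 / (k : ℝ)) ^ DB) ^ m ≤ ((DB : ℝ) ^ 11)⁻¹ := by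
      calc (1 - (1 - 1 / (k : ℝ)) ^ DB) ^ m ≤ exp (-((1 - 1 / (k : ℝ)) ^ DB)) ^ m := by
            gcongr
            have := add_one_le_exp (-((1 - 1 / (k : ℝ)) ^ DB))
            linarith
        _ = exp (-(m * (1 - 1 / (k : ℝ)) ^ DB)) := by
            rw [← exp_nat_mul]; congr 1; ring
        _ ≤ exp (-(11 * log DB)) := by gcongr
        _ = _ := by
            rw [exp_neg, show (11 : ℝ) * log DB = (11 : ℕ) * log DB by norm_num, exp_nat_mul,
              exp_log hB0]
    calc _ ≤ 4 * ((DB : ℝ) ^ 11)⁻¹ * ((DB : ℝ) ^ 2 * ((DB : ℝ) ^ 4) ^ 2) := by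
          gcongr
          exact hfac.trans (by gcongr)
      _ = 4 / DB := by field_simp
      _ ≤ 1 := by rw [div_le_one hB0]; exact b1

end

/-! ### Independent transversals -/

open Finset in
/-- The random choice: `β a` and `γ i` are the parts of the two sides, all of sizes `k` and `m`, and
`R` is the adjacency relation between them. A suitable choice `f` on the first side leaves in
every `γ i` an element with no neighbour among the chosen ones. -/
theorem exists_avoiding_choice {α ι : Type*} [Fintype α] [Fintype ι]
    {β : α → Type*} {γ : ι → Type*} [∀ a, Fintype (β a)] [∀ i, Fintype (γ i)]
    (k m DA DB : ℕ) (hk : 1 ≤ k) (hm : 1 ≤ m) (hDA : 1 ≤ DA) (hDB : 1 ≤ DB)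
    (hβ : ∀ a, Fintype.card (β a) = k) (hγ : ∀ i, Fintype.card (γ i) = m)
    (R : ∀ a i, β a → γ i → Prop)
    (hR1 : ∀ a i x y y', R a i x y → R a i x y' → y = y')
    (hR2 : ∀ a i x x' y, R a i x y → R a i x' y → x = x')
    (hA : ∀ a (x : β a), Nat.card {i // ∃ y, R a i x y} ≤ DA)
    (hB : ∀ i (y : γ i), Nat.card {a // ∃ x, R a i x y} ≤ DB)
    (hnum : 4 * (1 - (1 - 1 / (k : ℝ)) ^ DB) ^ m * ((m * DB * (k * DA) : ℕ) : ℝ) ≤ 1) :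
    ∃ (f : ∀ a, β a) (g : ∀ i, γ i), ∀ a i, ¬ R a i (f a) (g i) := by
  classical
  have hne : ∀ a, Nonempty (β a) := fun a =>
    Fintype.card_pos_iff.1 (by rw [hβ a]; exact hk)
  have hk0 : (0 : ℝ) < k := by exact_mod_cast hk
  have hu0 : 0 ≤ 1 - 1 / (k : ℝ) := by
    rw [sub_nonneg, div_le_one hk0]; exact_mod_cast hk
  have hq0 : 0 ≤ 1 - (1 - 1 / (k : ℝ)) ^ DB := sub_nonneg.2 (pow_le_one₀ hu0 (by simp))
  let Bad : ι → Finset (∀ a, β a) := fun i => {f | ∀ y, ∃ a, R a i (f a) y}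
  let T : ι → Finset α := fun i => {a | ∃ x y, R a i x y}
  let Γ : ι → Finset ι := fun i => {j | ∃ a ∈ T i, a ∈ T j}
  have hT : ∀ i, #(T i) ≤ m * DB := by
    intro i
    have hsub : T i ⊆ (univ : Finset (γ i)).biUnion fun y => {a | ∃ x, R a i x y} := by
      intro a ha
      obtain ⟨x, y, h⟩ := (mem_filter.1 ha).2
      exact mem_biUnion.2 ⟨y, mem_univ _, mem_filter.2 ⟨mem_univ _, x, h⟩⟩
    refine (card_le_card hsub).trans ?_
    rw [← hγ i, ← card_univ]
    refine card_biUnion_le_card_mul _ _ _ fun y _ => ?_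
    simpa [Nat.card_eq_fintype_card, Fintype.card_subtype] using hB i y
  have hT' : ∀ a, #{j | a ∈ T j} ≤ k * DA := by
    intro a
    have hsub : ({j | a ∈ T j} : Finset ι) ⊆
        (univ : Finset (β a)).biUnion fun x => {j | ∃ y, R a j x y} := by
      intro j hj
      obtain ⟨x, y, h⟩ := (mem_filter.1 (mem_filter.1 hj).2).2
      exact mem_biUnion.2 ⟨x, mem_univ _, mem_filter.2 ⟨mem_univ _, y, h⟩⟩
    refine (card_le_card hsub).trans ?_
    rw [← hβ a, ← card_univ]
    refine card_biUnion_le_card_mul _ _ _ fun x _ => ?_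
    simpa [Nat.card_eq_fintype_card, Fintype.card_subtype] using hA a x
  have hΓ : ∀ i, #(Γ i) ≤ m * DB * (k * DA) := by
    intro i
    have hsub : Γ i ⊆ (T i).biUnion fun a => {j | a ∈ T j} := by
      intro j hj
      obtain ⟨a, h1, h2⟩ := (mem_filter.1 hj).2
      exact mem_biUnion.2 ⟨a, h1, mem_filter.2 ⟨mem_univ _, h2⟩⟩
    refine (card_le_card hsub).trans ?_
    refine (card_biUnion_le_card_mul _ _ _ fun a _ => hT' a).trans ?_
    exact Nat.mul_le_mul_right _ (hT i)
  -- `Bad j` depends only on the coordinates in `T j`.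
  have hdep : ∀ j (f g : ∀ a, β a), (∀ a ∈ T j, f a = g a) → f ∈ Bad j → g ∈ Bad j := by
    intro j f g hfg hf
    refine mem_filter.2 ⟨mem_univ _, fun y => ?_⟩
    obtain ⟨a, ha⟩ := (mem_filter.1 hf).2 y
    refine ⟨a, ?_⟩
    rwa [← hfg a (mem_filter.2 ⟨mem_univ _, _, _, ha⟩)]
  obtain ⟨f, hf⟩ := local_lemma_s4 Bad Γ ((1 - (1 - 1 / (k : ℝ)) ^ DB) ^ m)
    ((m * DB * (k * DA) : ℕ) : ℝ) (pow_nonneg hq0 m)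
    (by
      have : 1 ≤ m * DB * (k * DA) :=
        Nat.mul_pos (Nat.mul_pos hm hDB) (Nat.mul_pos hk hDA)
      exact_mod_cast this) hnum
    (by
      intro i
      have h := card_all_covered_le (fun a x y => R a i x y) (fun a => hR1 a i) _
        (fun y => card_covered_le k DB hk hβ (fun a x => R a i x y)
          (fun a x x' => hR2 a i x x' y) (hB i y)) hq0
      rw [hγ i] at h
      simpa [Nat.card_eq_fintype_card, Fintype.card_subtype] using h)
    (fun i => by exact_mod_cast hΓ i)
    (by
      intro i S hS
      refine card_inter_mul_card_le (fun a => a ∈ T i) _ _ (hdep i) ?_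
      intro f g hfg hf
      rw [mem_compl, mem_biUnion] at hf ⊢
      rintro ⟨j, hj, hgj⟩
      refine hf ⟨j, hj, hdep j g f (fun a ha => (hfg a fun hai => ?_).symm) hgj⟩
      exact Finset.disjoint_left.1 hS hj (mem_filter.2 ⟨mem_univ _, a, hai, ha⟩))
  have hf' : ∀ i, ∃ y, ∀ a, ¬ R a i (f a) y := by
    intro i
    by_contra! h
    exact hf i (mem_filter.2 ⟨mem_univ _, h⟩)
  choose g hg using hf'
  exact ⟨f, g, fun a i => hg i a⟩

theorem IsBipartitionOf.symm {V : Type*} {G : SimpleGraph V} {A B : Set V}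
    (h : IsBipartitionOf G A B) : IsBipartitionOf G B A :=
  ⟨by rw [Set.union_comm]; exact h.1, h.2.1.symm, fun _ _ huv => (h.2.2 huv).symm⟩

theorem IsBipartiteCorrespondenceCover.symm {V W : Type*} {G : SimpleGraph V}
    {H : SimpleGraph W} {AG BG : Set V} {AH BH : Set W} {L : V → Set W}
    (h : IsBipartiteCorrespondenceCover G H AG BG AH BH L) :
    IsBipartiteCorrespondenceCover G H BG AG BH AH L :=
  ⟨h.1.symm, h.2.1.symm, h.2.2.1, h.2.2.2.2, h.2.2.2.1⟩

theorem IsBipartitionOf.not_adj_left {V : Type*} {G : SimpleGraph V} {A B : Set V}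
    (h : IsBipartitionOf G A B) {x y : V} (hx : x ∈ A) (hy : y ∈ A) : ¬ G.Adj x y := by
  intro hxy
  rcases h.2.2 hxy with ⟨-, hB⟩ | ⟨hB, -⟩
  · exact Set.disjoint_left.1 h.2.1 hy hB
  · exact Set.disjoint_left.1 h.2.1 hx hB

/-- The number of parts that meet the neighbourhood of `z` is at most the degree of `z`. -/
theorem card_parts_le_deg {V W : Type*} [Finite W] (H : SimpleGraph W) (L : V → Set W)
    (huniq : ∀ w : W, ∃! v : V, w ∈ L v) (S : Set V) (M : S → Set W)
    (hM : ∀ v, M v ⊆ L v) (z : W) :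
    Nat.card {v : S // ∃ x : M v, H.Adj x z} ≤ deg H z := by
  have hx : ∀ v : {v : S // ∃ x : M v, H.Adj x z}, ∃ x : M v.1, H.Adj x z := fun v => v.2
  choose x hx using hx
  unfold deg
  rw [← Nat.card_coe_set_eq]
  refine Nat.card_le_card_of_injective
    (fun v => (⟨(x v : W), (hx v).symm⟩ : H.neighborSet z)) ?_
  intro u v h
  have hxx : (x u : W) = x v := congrArg Subtype.val h
  apply Subtype.ext
  apply Subtype.ext
  exact (huniq (x u)).unique (hM _ (x u).2) (hxx ▸ hM _ (x v).2)

/-- The parts are first shrunk to size exactly `k` on the `A`-side and `m` on the `B`-side, so that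
`exists_avoiding_choice` applies. -/
theorem hasIndepTransversal_of_numeric {V W : Type*} [Fintype V] [Fintype W]
    {G : SimpleGraph V} {H : SimpleGraph W} {AG BG : Set V} {AH BH : Set W} {L : V → Set W}
    (h : IsBipartiteCorrespondenceCover G H AG BG AH BH L) (k m DA DB : ℕ)
    (hk : 1 ≤ k) (hm : 1 ≤ m) (hDA : 1 ≤ DA) (hDB : 1 ≤ DB)
    (hdA : ∀ x ∈ AH, deg H x ≤ DA) (hdB : ∀ x ∈ BH, deg H x ≤ DB)
    (hLA : ∀ v ∈ AG, k ≤ (L v).ncard) (hLB : ∀ w ∈ BG, m ≤ (L w).ncard)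
    (hnum : 4 * (1 - (1 - 1 / (k : ℝ)) ^ DB) ^ m * ((m * DB * (k * DA) : ℕ) : ℝ) ≤ 1) :
    HasIndepTransversal H L := by
  classical
  obtain ⟨hG, hH, ⟨⟨huniq, hcov⟩, hmatch⟩, hA, hB⟩ := h
  have hMA : ∀ v : AG, ∃ M : Set W, M ⊆ L v ∧ M.ncard = k := fun v =>
    Set.exists_subset_card_eq (hLA v v.2)
  have hMB : ∀ v : BG, ∃ M : Set W, M ⊆ L v ∧ M.ncard = m := fun v =>
    Set.exists_subset_card_eq (hLB v v.2)
  choose MA hMA hcA using hMA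
  choose MB hMB hcB using hMB
  have hadj : ∀ (v v' : V) (x y : W), x ∈ L v → y ∈ L v' → H.Adj x y → G.Adj v v' := by
    intro v v' x y hx hy hxy
    by_contra hn
    exact hcov hn x hx y hy hxy
  obtain ⟨f, g, hfg⟩ := exists_avoiding_choice (β := fun v => MA v) (γ := fun w => MB w)
    k m DA DB hk hm hDA hDB
    (fun v => by rw [← Nat.card_eq_fintype_card, Nat.card_coe_set_eq, hcA])
    (fun v => by rw [← Nat.card_eq_fintype_card, Nat.card_coe_set_eq, hcB])
    (fun _ _ x y => H.Adj x y)
    (fun a i x y y' h1 h2 => Subtype.ext <|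
      hmatch (hadj a i x y (hMA _ x.2) (hMB _ y.2) h1) x (hMA _ x.2) y (hMB _ y.2)
        y' (hMB _ y'.2) h1 h2)
    (fun a i x x' y h1 h2 => Subtype.ext <|
      hmatch (hadj a i x y (hMA _ x.2) (hMB _ y.2) h1).symm y (hMB _ y.2) x (hMA _ x.2)
        x' (hMA _ x'.2) h1.symm h2.symm)
    (fun a x => by
      have := card_parts_le_deg H L huniq BG MB hMB (x : W)
      simp only [SimpleGraph.adj_comm] at this ⊢
      exact this.trans (hdA _ (hA a a.2 (hMA _ x.2))))
    (fun i y => (card_parts_le_deg H L huniq AG MA hMA (y : W)).trans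
      (hdB _ (hB i i.2 (hMB _ y.2)))) hnum
  have hfA : ∀ a, (f a : W) ∈ AH := fun a => hA a a.2 (hMA _ (f a).2)
  have hgB : ∀ i, (g i : W) ∈ BH := fun i => hB i i.2 (hMB _ (g i).2)
  refine ⟨Set.range (fun a => (f a : W)) ∪ Set.range (fun i => (g i : W)), ?_, ?_⟩
  · rintro _ (⟨a, rfl⟩ | ⟨i, rfl⟩) _ (⟨a', rfl⟩ | ⟨i', rfl⟩)
    · exact hH.not_adj_left (hfA a) (hfA a')
    · exact hfg a i'
    · exact fun hh => hfg a' i hh.symm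
    · exact hH.symm.not_adj_left (hgB i) (hgB i')
  · intro v
    have hdisj := Set.disjoint_left.1 hG.2.1
    have hv : v ∈ AG ∪ BG := hG.1 ▸ Set.mem_univ v
    rcases hv with hv | hv
    · refine ⟨f ⟨v, hv⟩, ⟨hMA _ (f ⟨v, hv⟩).2, Or.inl ⟨_, rfl⟩⟩, ?_⟩
      rintro _ ⟨hw, ⟨a, rfl⟩ | ⟨i, rfl⟩⟩
      · obtain rfl : a = ⟨v, hv⟩ := Subtype.ext ((huniq _).unique (hMA _ (f a).2) hw)
        rfl
      · exact (hdisj hv ((huniq _).unique (hMB _ (g i).2) hw ▸ i.2)).elim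
    · refine ⟨g ⟨v, hv⟩, ⟨hMB _ (g ⟨v, hv⟩).2, Or.inr ⟨_, rfl⟩⟩, ?_⟩
      rintro _ ⟨hw, ⟨a, rfl⟩ | ⟨i, rfl⟩⟩
      · exact (hdisj ((huniq _).unique (hMA _ (f a).2) hw ▸ a.2) hv).elim
      · obtain rfl : i = ⟨v, hv⟩ := Subtype.ext ((huniq _).unique (hMB _ (g i).2) hw)
        rfl

theorem stmt4 (ε : ℝ) (hε : 0 < ε) :
    ∃ D0 : ℕ, ∀ (V W : Type) [Fintype V] [Fintype W]
      (G : SimpleGraph V) (H : SimpleGraph W)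
      (AG BG : Set V) (AH BH : Set W) (L : V → Set W) (DA DB : ℕ),
      IsBipartiteCorrespondenceCover G H AG BG AH BH L →
      D0 ≤ DA → D0 ≤ DB →
      (∀ x ∈ AH, deg H x ≤ DA) → (∀ x ∈ BH, deg H x ≤ DB) →
      (∀ v ∈ AG, (1 + ε) * DA / Real.log DA ≤ ((L v).ncard : ℝ)) →
      (∀ w ∈ BG, (1 + ε) * DB / Real.log DB ≤ ((L w).ncard : ℝ)) →
      HasIndepTransversal H L := by
  obtain ⟨D0, hD1, hD0⟩ := exists_threshold ε hε
  refine ⟨D0, ?_⟩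
  intro V W _ _ G H AG BG AH BH L DA DB h hDA hDB hdA hdB hLA hLB
  rcases le_total DB DA with hle | hle
  · obtain ⟨hk, hm, hnum⟩ := hD0 DA DB _ _ hDB hle rfl rfl
    exact hasIndepTransversal_of_numeric h _ _ DA DB hk hm (hD1.trans hDA) (hD1.trans hDB)
      hdA hdB (fun v hv => Nat.ceil_le.2 (hLA v hv)) (fun v hv => Nat.ceil_le.2 (hLB v hv)) hnum
  · obtain ⟨hk, hm, hnum⟩ := hD0 DB DA _ _ hDA hle rfl rfl
    exact hasIndepTransversal_of_numeric h.symm _ _ DB DA hk hm (hD1.trans hDB) (hD1.trans hDA)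
      hdB hdA (fun v hv => Nat.ceil_le.2 (hLB v hv)) (fun v hv => Nat.ceil_le.2 (hLA v hv)) hnum
end

section
/- For each $\varepsilon > 0$ there exists $\Delta_0$ such that the following holds. Let $G$ and $H$ be finite bipartite graphs with bipartitions $(A_G,B_G)$ and $(A_H,B_H)$ respectively, such that $H$ is a bipartite correspondence-cover of $G$ with respect to a map $L$. If $G$ has maximum degree $\Delta \ge \Delta_0$, $|L(v)| \ge (1+\varepsilon)\Delta/\log_4 \Delta$ for all $v \in A_G$ (where $\log_4$ is the logarithm in base $4$), and $|L(w)| = 2$ for all $w \in B_G$, then $H$ admits an independent transversal with respect to $L$. -/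
open Finset

/-! ### Counting in the discrete cube -/

section Cube

variable {ι : Type*}

/-- Exchanging the coordinates in `S` between two points is injective on pairs, so it compares
the sizes of products of subsets of the cube. -/
lemma card_mul_card_le_of_swap [DecidableEq ι] (S : Finset ι) (P Q R R' : Finset (ι → Bool))
    (h : ∀ x ∈ P, ∀ y ∈ Q, S.piecewise x y ∈ R ∧ S.piecewise y x ∈ R') :
    #P * #Q ≤ #R * #R' := by
  rw [← card_product, ← card_product]
  apply card_le_card_of_injOn
    (fun p : (ι → Bool) × (ι → Bool) => (S.piecewise p.1 p.2, S.piecewise p.2 p.1))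
  · rintro ⟨x, y⟩ hxy
    simp only [coe_product, Set.mem_prod, mem_coe] at hxy ⊢
    exact h x hxy.1 y hxy.2
  · rintro ⟨x, y⟩ _ ⟨x', y'⟩ _ hEq
    simp only [Prod.mk.injEq] at hEq ⊢
    obtain ⟨h1, h2⟩ := hEq
    constructor <;> funext i
    · have e1 := congrFun h1 i
      have e2 := congrFun h2 i
      by_cases hi : i ∈ S <;> simp_all [Finset.piecewise]
    · have e1 := congrFun h1 i
      have e2 := congrFun h2 i
      by_cases hi : i ∈ S <;> simp_all [Finset.piecewise]

lemma card_subcube [Fintype ι] [DecidableEq ι] (S : Finset ι) (a : ι → Bool) :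
    2 ^ #S * #{x : ι → Bool | ∀ i ∈ S, x i = a i} = Fintype.card (ι → Bool) := by
  have h : ({x : ι → Bool | ∀ i ∈ S, x i = a i} : Finset (ι → Bool)) =
      Fintype.piFinset (fun i => if i ∈ S then {a i} else univ) := by
    ext x
    simp only [mem_filter, mem_univ, true_and, Fintype.mem_piFinset]
    refine forall_congr' fun i => ?_
    by_cases hi : i ∈ S <;> simp [hi]
  have h2 : (2 : ℕ) ^ #S = ∏ i : ι, if i ∈ S then 2 else 1 := by
    rw [Finset.prod_ite]; simp
  rw [h, Fintype.card_piFinset, h2, ← Finset.prod_mul_distrib, Fintype.card_pi]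
  refine Finset.prod_congr rfl fun i _ => ?_
  by_cases hi : i ∈ S <;> simp [hi]

/-- Negative correlation: let each `c ∈ C` be blocked by `x` when `x` takes the value `b c i` at
some `i ∈ N c`. If no value of a coordinate blocks two elements of `C`, then the probability that
all of `C` is blocked is at most the product of the individual probabilities. -/
lemma card_allBlocked_le [Fintype ι] [DecidableEq ι] {W : Type*} [DecidableEq W]
    (N : W → Finset ι) (b : W → ι → Bool) (C : Finset W)
    (hb : ∀ c ∈ C, ∀ c' ∈ C, c ≠ c' → ∀ i ∈ N c, i ∈ N c' → b c i ≠ b c' i) :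
    (#{x : ι → Bool | ∀ c ∈ C, ∃ i ∈ N c, x i = b c i} : ℝ) ≤
      (∏ c ∈ C, (1 - (2 ^ #(N c) : ℝ)⁻¹)) * Fintype.card (ι → Bool) := by
  induction C using Finset.induction_on with
  | empty => simp
  | insert c C hc ih =>
    have ih := ih fun c₁ h₁ c₂ h₂ => hb c₁ (mem_insert_of_mem h₁) c₂ (mem_insert_of_mem h₂)
    rw [prod_insert hc]
    set F : Finset (ι → Bool) := {x | ∀ c ∈ C, ∃ i ∈ N c, x i = b c i} with hF
    set U : Finset (ι → Bool) := {x | ∀ i ∈ N c, x i = !b c i} with hU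
    have hsplit : ({x : ι → Bool | ∀ c' ∈ insert c C, ∃ i ∈ N c', x i = b c' i} :
        Finset (ι → Bool)) = F \ U := by
      ext x
      simp only [mem_filter, mem_univ, true_and, mem_sdiff, hF, hU, forall_mem_insert]
      push Not
      rw [and_comm]
      refine and_congr_right fun _ => exists_congr fun i => and_congr_right fun _ => ?_
      cases x i <;> cases b c i <;> simp
    have hcorr : #U * #F ≤ #(U ∩ F) * Fintype.card (ι → Bool) := by
      rw [← Finset.card_univ]
      refine card_mul_card_le_of_swap (N c) _ _ _ _ fun x hx y hy => ⟨?_, mem_univ _⟩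
      simp only [mem_inter, hF, hU, mem_filter, mem_univ, true_and] at hx hy ⊢
      refine ⟨fun i hi => by simp [hi, hx i hi], fun c' hc' => ?_⟩
      obtain ⟨i, hi, hyi⟩ := hy c' hc'
      refine ⟨i, hi, ?_⟩
      by_cases hic : i ∈ N c
      · -- the value not blocking `c` is the one blocking `c'`
        have := hb c (mem_insert_self _ _) c' (mem_insert_of_mem hc')
          (fun h => hc (h ▸ hc')) i hic hi
        simp only [hic, piecewise_eq_of_mem, hx i hic]
        revert this
        cases b c i <;> cases b c' i <;> simp
      · simp [hic, hyi]
    have hUcard : (2 : ℝ) ^ #(N c) * #U = Fintype.card (ι → Bool) := by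
      exact_mod_cast card_subcube (N c) (fun i => !b c i)
    have hpos : (0 : ℝ) < Fintype.card (ι → Bool) := by
      exact_mod_cast Fintype.card_pos
    have hpow : (0 : ℝ) < 2 ^ #(N c) := by positivity
    have hcorr' : (2 ^ #(N c) : ℝ)⁻¹ * #F ≤ #(U ∩ F) := by
      have h1 : (#U : ℝ) * #F ≤ #(U ∩ F) * Fintype.card (ι → Bool) := by exact_mod_cast hcorr
      have h2 : (#U : ℝ) = (2 ^ #(N c) : ℝ)⁻¹ * Fintype.card (ι → Bool) := by
        rw [← hUcard]; field_simp
      rw [h2] at h1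
      refine le_of_mul_le_mul_right ?_ hpos
      linarith
    have hdiff : (#(F \ U) : ℝ) = #F - #(U ∩ F) := by
      have := card_sdiff_add_card_inter F U
      rw [inter_comm] at this
      rw [← this]; push_cast; ring
    have hfac : (0 : ℝ) ≤ 1 - (2 ^ #(N c) : ℝ)⁻¹ := by
      have : (2 ^ #(N c) : ℝ)⁻¹ ≤ 1 := inv_le_one_of_one_le₀ (one_le_pow₀ (by norm_num))
      linarith
    rw [hsplit, hdiff, mul_assoc]
    calc (#F : ℝ) - #(U ∩ F) ≤ (1 - (2 ^ #(N c) : ℝ)⁻¹) * #F := by linarith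
      _ ≤ _ := mul_le_mul_of_nonneg_left ih hfac

/-- If no value of a coordinate blocks two elements of `C`, then each coordinate of `D` belongs to
at most two of the sets `N c`. -/
lemma sum_card_le {W : Type*} (N : W → Finset ι) (b : W → ι → Bool)
    (C : Finset W) (D : Finset ι) (hD : ∀ c ∈ C, N c ⊆ D)
    (hb : ∀ c ∈ C, ∀ c' ∈ C, c ≠ c' → ∀ i ∈ N c, i ∈ N c' → b c i ≠ b c' i) :
    ∑ c ∈ C, #(N c) ≤ 2 * #D := by
  have h : #(C.sigma N) ≤ #(D ×ˢ (univ : Finset Bool)) := by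
    apply card_le_card_of_injOn (fun p : (Σ _ : W, ι) => (p.2, b p.1 p.2))
    · rintro ⟨c, i⟩ hp
      simp only [mem_coe, mem_sigma] at hp
      simpa using hD c hp.1 hp.2
    · rintro ⟨c, i⟩ hp ⟨c', i'⟩ hp' hEq
      simp only [mem_coe, mem_sigma] at hp hp'
      simp only [Prod.mk.injEq] at hEq
      obtain ⟨rfl, h2⟩ := hEq
      by_cases hcc : c = c'
      · rw [hcc]
      · exact absurd h2 (hb c hp.1 c' hp'.1 hcc i hp.2 hp'.2)
  rw [card_sigma, card_product] at h
  simpa [mul_comm] using h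

/-! ### The local lemma -/

/-- Symmetric Lovász local lemma for the uniform measure on the cube: `E v` is determined by the
coordinates in `D v`, has probability at most `p`, and `D v` meets at most `d` of the sets
`D u` (`u = v` included). -/
lemma local_lemma_s5 [Fintype ι] [DecidableEq ι] {α : Type*} [Fintype α]
    (E : α → Finset (ι → Bool)) (D : α → Finset ι)
    (hdep : ∀ v, ∀ x y : ι → Bool, (∀ i ∈ D v, x i = y i) → x ∈ E v → y ∈ E v)
    (p : ℝ) (d : ℕ) (hp0 : 0 ≤ p)
    (hp : ∀ v, (#(E v) : ℝ) ≤ p * Fintype.card (ι → Bool))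
    (hd : ∀ v, #{u | ¬ Disjoint (D v) (D u)} ≤ d)
    (hpd : 4 * p * d ≤ 1) (hp2 : 2 * p < 1) :
    ∃ x : ι → Bool, ∀ v, x ∉ E v := by
  classical
  -- `A T` is the set of points avoiding `E u` for all `u ∈ T`
  let A : Finset α → Finset (ι → Bool) := fun T => {x | ∀ u ∈ T, x ∉ E u}
  have hpos : (0 : ℝ) < Fintype.card (ι → Bool) := by
    exact_mod_cast Fintype.card_pos
  have hindep : ∀ v, ∀ T : Finset α, (∀ u ∈ T, Disjoint (D v) (D u)) →
      (#(E v ∩ A T) : ℝ) ≤ p * #(A T) := by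
    intro v T hT
    have h := card_mul_card_le_of_swap (D v) (E v ∩ A T) univ (E v) (A T) (by
      intro x hx y _
      simp only [mem_inter, A, mem_filter, mem_univ, true_and] at hx ⊢
      refine ⟨hdep v x _ (fun i hi => by simp [hi]) hx.1, fun u hu hmem => hx.2 u hu ?_⟩
      refine hdep u _ x (fun i hi => ?_) hmem
      have : i ∉ D v := fun h => (Finset.disjoint_left.mp (hT u hu)) h hi
      simp [this])
    rw [Finset.card_univ] at h
    have h' : (#(E v ∩ A T) : ℝ) * Fintype.card (ι → Bool) ≤ #(E v) * #(A T) := by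
      exact_mod_cast h
    refine le_of_mul_le_mul_right (h'.trans ?_) hpos
    calc (#(E v) : ℝ) * #(A T) ≤ (p * Fintype.card (ι → Bool)) * #(A T) :=
          mul_le_mul_of_nonneg_right (hp v) (by positivity)
      _ = _ := by ring
  have key : ∀ n : ℕ, ∀ T : Finset α, #T = n → ∀ v,
      (#(E v ∩ A T) : ℝ) ≤ 2 * p * #(A T) := by
    intro n
    induction n using Nat.strong_induction_on with
    | _ n ih =>
    intro T hTn v
    set T1 := T.filter (fun u => ¬ Disjoint (D v) (D u)) with hT1
    set T2 := T.filter (fun u => Disjoint (D v) (D u)) with hT2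
    have hAsub : A T ⊆ A T2 := by
      intro x hx
      simp only [A, mem_filter, mem_univ, true_and] at hx ⊢
      exact fun u hu => hx u (mem_of_mem_filter u hu)
    have h2 : (#(E v ∩ A T2) : ℝ) ≤ p * #(A T2) :=
      hindep v T2 fun u hu => (mem_filter.mp hu).2
    have h1 : (#(E v ∩ A T) : ℝ) ≤ #(E v ∩ A T2) := by
      exact_mod_cast card_le_card (inter_subset_inter_left hAsub)
    have hhalf : (#(A T2) : ℝ) ≤ 2 * #(A T) := by
      rcases T1.eq_empty_or_nonempty with hemp | hne
      · have : T2 = T := by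
          apply filter_true_of_mem
          intro u hu
          by_contra hcon
          have : u ∈ T1 := mem_filter.mpr ⟨hu, hcon⟩
          simp [hemp] at this
        rw [this]
        have : (0 : ℝ) ≤ #(A T) := by positivity
        linarith
      · have hlt : #T2 < n := by
          rw [← hTn]
          apply card_lt_card
          refine (filter_subset _ _).ssubset_of_ne fun hEq => ?_
          obtain ⟨u, hu⟩ := hne
          have hu' := mem_filter.mp hu
          rw [← hEq] at hu'
          exact hu'.2 (mem_filter.mp hu'.1).2
        have hcov : A T2 ⊆ A T ∪ T1.biUnion fun u => E u ∩ A T2 := by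
          intro x hx
          by_cases hxT : x ∈ A T
          · exact mem_union_left _ hxT
          · apply mem_union_right
            simp only [A, mem_filter, mem_univ, true_and] at hxT
            push Not at hxT
            obtain ⟨u, huT, hxu⟩ := hxT
            refine mem_biUnion.mpr ⟨u, ?_, mem_inter.mpr ⟨hxu, hx⟩⟩
            refine mem_filter.mpr ⟨huT, fun hdis => ?_⟩
            exact (mem_filter.mp hx).2 u (mem_filter.mpr ⟨huT, hdis⟩) hxu
        have hc1 : (#(A T2) : ℝ) ≤ #(A T) + ∑ u ∈ T1, (#(E u ∩ A T2) : ℝ) := by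
          have := (card_le_card hcov).trans
            ((card_union_le _ _).trans (Nat.add_le_add_left card_biUnion_le _))
          exact_mod_cast this
        have hc2 : ∑ u ∈ T1, (#(E u ∩ A T2) : ℝ) ≤ #T1 * (2 * p * #(A T2)) := by
          rw [← nsmul_eq_mul]
          exact sum_le_card_nsmul _ _ _ fun u _ => ih _ hlt T2 rfl u
        have hT1d : (#T1 : ℝ) ≤ d := by
          have : #T1 ≤ d := (card_le_card (filter_subset_filter _ (subset_univ T))).trans (hd v)
          exact_mod_cast this
        have hc3 : (#T1 : ℝ) * (2 * p * #(A T2)) ≤ d * (2 * p * #(A T2)) :=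
          mul_le_mul_of_nonneg_right hT1d (by positivity)
        have hc4 : (4 * p * d) * #(A T2) ≤ 1 * (#(A T2) : ℝ) :=
          mul_le_mul_of_nonneg_right hpd (by positivity)
        linarith
    calc (#(E v ∩ A T) : ℝ) ≤ p * #(A T2) := h1.trans h2
      _ ≤ p * (2 * #(A T)) := mul_le_mul_of_nonneg_left hhalf hp0
      _ = _ := by ring
  have hall : ∀ T : Finset α, (0 : ℝ) < #(A T) := by
    intro T
    induction T using Finset.induction_on with
    | empty => simp [A]
    | insert v T _ ih =>
      have hEq : A (insert v T) = A T \ E v := by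
        ext x
        simp [A, and_comm]
      have hsd : (#(A T \ E v) : ℝ) + #(E v ∩ A T) = #(A T) := by
        rw [inter_comm]
        exact_mod_cast card_sdiff_add_card_inter (A T) (E v)
      have := key _ T rfl v
      rw [hEq]
      nlinarith
  have hne := hall univ
  obtain ⟨x, hx⟩ := card_pos.mp (by exact_mod_cast hne : 0 < #(A univ))
  exact ⟨x, fun v => (mem_filter.mp hx).2 v (mem_univ v)⟩

end Cube

/-! ### Estimates -/

/-- Convexity of `t ↦ 2 ^ (-t)`: if `∑ n c ≤ m K` and `K ≤ #C`, then
`∑ 2 ^ (-n c) ≥ K 2 ^ (-m)`; combined with `1 - t ≤ exp (-t)`. -/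
lemma prod_le_exp {W : Type*} (C : Finset W) (n : W → ℕ) (m K : ℝ) (hm : 0 ≤ m)
    (hK : K ≤ #C) (hn : (∑ c ∈ C, (n c : ℝ)) ≤ m * K) :
    ∏ c ∈ C, (1 - (2 ^ n c : ℝ)⁻¹) ≤ Real.exp (-(K * Real.exp (-(m * Real.log 2)))) := by
  have hlog : 0 < Real.log 2 := Real.log_pos (by norm_num)
  have hterm : ∀ c ∈ C, Real.exp (-(m * Real.log 2)) * (1 + (m - n c) * Real.log 2) ≤
      (2 ^ n c : ℝ)⁻¹ := by
    intro c _
    have h1 : (2 ^ n c : ℝ)⁻¹ =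
        Real.exp (-(m * Real.log 2)) * Real.exp ((m - n c) * Real.log 2) := by
      rw [← Real.exp_add, show -(m * Real.log 2) + (m - n c) * Real.log 2 =
        -(n c * Real.log 2) by ring, Real.exp_neg, Real.exp_nat_mul, Real.exp_log (by norm_num)]
    rw [h1]
    refine mul_le_mul_of_nonneg_left ?_ (Real.exp_pos _).le
    have := Real.add_one_le_exp ((m - n c) * Real.log 2)
    linarith
  have hsum : K * Real.exp (-(m * Real.log 2)) ≤ ∑ c ∈ C, (2 ^ n c : ℝ)⁻¹ := by
    refine le_trans ?_ (sum_le_sum hterm)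
    rw [← mul_sum, mul_comm]
    refine mul_le_mul_of_nonneg_left ?_ (Real.exp_pos _).le
    rw [sum_add_distrib, ← sum_mul, sum_sub_distrib]
    simp only [sum_const, nsmul_eq_mul, mul_one]
    have h1 : m * K ≤ m * #C := mul_le_mul_of_nonneg_left hK hm
    have h2 : 0 ≤ (#C * m - ∑ c ∈ C, (n c : ℝ)) * Real.log 2 :=
      mul_nonneg (by linarith) hlog.le
    linarith
  calc ∏ c ∈ C, (1 - (2 ^ n c : ℝ)⁻¹) ≤ ∏ c ∈ C, Real.exp (-(2 ^ n c : ℝ)⁻¹) := by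
        refine prod_le_prod (fun c _ => ?_) fun c _ => ?_
        · have : (2 ^ n c : ℝ)⁻¹ ≤ 1 := inv_le_one_of_one_le₀ (one_le_pow₀ (by norm_num))
          linarith
        · have := Real.add_one_le_exp (-(2 ^ n c : ℝ)⁻¹)
          linarith
    _ = Real.exp (-∑ c ∈ C, (2 ^ n c : ℝ)⁻¹) := by
        rw [← Real.exp_sum, sum_neg_distrib]
    _ ≤ _ := Real.exp_le_exp.mpr (by linarith)

/-- With `K = (1+ε)Δ / log₄ Δ` and `m = 2Δ/K`, the bound `exp (-K 2 ^ (-m))` is eventually at most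
`1 / (4Δ²)`. -/
lemma numeric_bound_s5 (ε : ℝ) (hε : 0 < ε) :
    ∃ Δ0 : ℕ, ∀ Δ : ℕ, Δ0 ≤ Δ → ∃ m : ℝ, 0 ≤ m ∧ 1 ≤ Δ ∧
      m * ((1 + ε) * Δ / (Real.log Δ / Real.log 4)) = 2 * Δ ∧
      4 * Real.exp (-(((1 + ε) * Δ / (Real.log Δ / Real.log 4)) *
        Real.exp (-(m * Real.log 2)))) * (Δ : ℝ) ^ 2 ≤ 1 := by
  set δ : ℝ := ε / (1 + ε) with hδ
  have hδpos : 0 < δ := by positivity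
  refine ⟨⌈Real.exp (24 / δ ^ 3 + 1)⌉₊, fun Δ hΔ => ?_⟩
  have hΔ' : Real.exp (24 / δ ^ 3 + 1) ≤ Δ := Nat.ceil_le.mp hΔ
  have hΔpos : (0 : ℝ) < Δ := (Real.exp_pos _).trans_le hΔ'
  set t := Real.log Δ with ht
  have hexpt : Real.exp t = Δ := Real.exp_log hΔpos
  have ht1 : 24 / δ ^ 3 + 1 ≤ t := (Real.le_log_iff_exp_le hΔpos).mpr hΔ'
  have h24 : 0 < 24 / δ ^ 3 := by positivity
  have ht0 : 1 ≤ t := by linarith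
  have hlog4 : Real.log 4 = 2 * Real.log 2 := by
    rw [show (4 : ℝ) = 2 ^ 2 by norm_num, Real.log_pow]; norm_num
  have hl2 := Real.log_two_gt_d9
  have hl2' := Real.log_two_lt_d9
  have hl2pos : 0 < Real.log 2 := by linarith
  refine ⟨t / ((1 + ε) * Real.log 2), by positivity, ?_, ?_, ?_⟩
  · exact_mod_cast hΔpos
  · rw [hlog4]; field_simp
  · have e1 : t / ((1 + ε) * Real.log 2) * Real.log 2 = t / (1 + ε) := by field_simp
    have e2 : Real.exp (-(t / (1 + ε))) * Δ = Real.exp (δ * t) := by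
      rw [← hexpt, ← Real.exp_add]
      congr 1
      rw [hδ]; field_simp; ring
    have e3 : ((1 + ε) * Δ / (t / Real.log 4)) * Real.exp (-(t / (1 + ε))) =
        (1 + ε) * Real.log 4 * Real.exp (δ * t) / t := by
      rw [← e2]; field_simp
    rw [e1, e3]
    have hcube : 4 * t ^ 2 ≤ Real.exp (δ * t) := by
      have h := Real.pow_div_factorial_le_exp (δ * t) (by positivity) 3
      have h6 : ((Nat.factorial 3 : ℕ) : ℝ) = 6 := by norm_num [Nat.factorial]
      rw [h6] at h
      refine le_trans ?_ h
      have h3 : 24 ≤ t * δ ^ 3 := by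
        rw [← div_le_iff₀ (by positivity)]; linarith
      have : 24 * t ^ 2 ≤ (t * δ ^ 3) * t ^ 2 := mul_le_mul_of_nonneg_right h3 (by positivity)
      rw [le_div_iff₀ (by norm_num)]
      nlinarith
    have hbig : 4 * t ≤ (1 + ε) * Real.log 4 * Real.exp (δ * t) / t := by
      rw [le_div_iff₀ (by linarith)]
      have h1 : 1 ≤ (1 + ε) * Real.log 4 := by rw [hlog4]; nlinarith
      have h2 := Real.exp_pos (δ * t)
      nlinarith
    have h4 : (4 : ℝ) = Real.exp (Real.log 4) := (Real.exp_log (by norm_num)).symm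
    have hΔ2 : (Δ : ℝ) ^ 2 = Real.exp (2 * t) := by
      rw [← hexpt, ← Real.exp_nat_mul]; norm_num
    rw [hΔ2]
    nth_rewrite 1 [h4]
    rw [← Real.exp_add, ← Real.exp_add, Real.exp_le_one_iff]
    rw [hlog4] at hbig ⊢
    linarith

/-! ### The transversal -/

theorem stmt5 (ε : ℝ) (hε : 0 < ε) :
    ∃ Δ0 : ℕ, ∀ (V W : Type) [Fintype V] [Fintype W]
      (G : SimpleGraph V) (H : SimpleGraph W)
      (AG BG : Set V) (AH BH : Set W) (L : V → Set W) (Δ : ℕ),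
      IsBipartiteCorrespondenceCover G H AG BG AH BH L →
      Δ0 ≤ Δ → (∀ v : V, deg G v ≤ Δ) →
      (∀ v ∈ AG, (1 + ε) * Δ / (Real.log Δ / Real.log 4) ≤ ((L v).ncard : ℝ)) →
      (∀ w ∈ BG, (L w).ncard = 2) →
      HasIndepTransversal H L := by
  classical
  obtain ⟨Δ0, hΔ0⟩ := numeric_bound_s5 ε hε
  refine ⟨Δ0, ?_⟩
  intro V W _ _ G H AG BG AH BH L Δ hcov hΔ hdeg hA hB
  obtain ⟨m, hm0, hΔ1, hmK, hfin⟩ := hΔ0 Δ hΔ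
  obtain ⟨⟨hAB, hdisj, hbip⟩, -, ⟨⟨hpart, hnon⟩, hmatch⟩, -, -⟩ := hcov
  set K : ℝ := (1 + ε) * Δ / (Real.log Δ / Real.log 4) with hKdef
  set p : ℝ := Real.exp (-(K * Real.exp (-(m * Real.log 2)))) with hpdef
  have hadj : ∀ {v v' : V} {x y : W}, x ∈ L v → y ∈ L v' → H.Adj x y → G.Adj v v' := by
    intro v v' x y hx hy hxy
    by_contra hcon
    exact hnon hcon x hx y hy hxy
  have hdis : ∀ {v : V}, v ∈ AG → v ∈ BG → False :=
    fun ha hb => Set.disjoint_left.mp hdisj ha hb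
  -- `q w` lists the two colours of `w`
  have hq : ∀ w : BG, ∃ q : Bool → W, q true ≠ q false ∧ L w = {q true, q false} := by
    intro w
    obtain ⟨x, y, hxy, hL⟩ := Set.ncard_eq_two.mp (hB w w.2)
    exact ⟨fun b => if b then x else y, by simpa using hxy, by simpa using hL⟩
  choose q hqne hqL using hq
  have hqmem : ∀ (w : BG) (b : Bool), q w b ∈ L w := by
    intro w b
    rw [hqL w]
    cases b <;> simp
  have hqinj : ∀ (w : BG) (b b' : Bool), q w b = q w b' → b = b' := by
    intro w b b' h
    have := hqne w
    cases b <;> cases b' <;> simp_all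
  -- `b c w` is the value of the coin flip at `w` that blocks `c`, when `w ∈ N c`
  let N : W → Finset BG := fun c => {w | ∃ x, H.Adj c (q w x)}
  let b : W → BG → Bool := fun c w => decide (H.Adj c (q w true))
  have hbiff : ∀ c w, w ∈ N c → ∀ x, H.Adj c (q w x) ↔ x = b c w := by
    intro c w hw
    obtain ⟨y, hy⟩ := (mem_filter.mp hw).2
    obtain ⟨v, hv, -⟩ := hpart c
    have huniq : ∀ x, H.Adj c (q w x) → x = y := fun x hx =>
      hqinj w _ _ (hmatch (hadj hv (hqmem w y) hy) c hv _ (hqmem w x) _ (hqmem w y) hx hy)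
    have hby : b c w = y := by
      by_cases h : H.Adj c (q w true)
      · simp [b, h, ← huniq true h]
      · cases y
        · simp [b, h]
        · exact absurd hy h
    intro x
    rw [hby]
    exact ⟨huniq x, fun h => h ▸ hy⟩
  let C : AG → Finset W := fun v => (L v).toFinset
  have hCmem : ∀ v c, c ∈ C v ↔ c ∈ L v := fun v c => Set.mem_toFinset
  have hbne : ∀ v : AG, ∀ c ∈ C v, ∀ c' ∈ C v, c ≠ c' → ∀ i ∈ N c, i ∈ N c' →
      b c i ≠ b c' i := by
    intro v c hc c' hc' hne i hi hi' hEq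
    rw [hCmem] at hc hc'
    have h1 : H.Adj c (q i (b c i)) := (hbiff c i hi _).mpr rfl
    have h2 : H.Adj c' (q i (b c i)) := (hbiff c' i hi' _).mpr hEq
    exact hne (hmatch (hadj hc (hqmem i _) h1).symm _ (hqmem i _) c hc c' hc' h1.symm h2.symm)
  let D : AG → Finset BG := fun v => {w | G.Adj v w}
  have hND : ∀ v : AG, ∀ c ∈ C v, N c ⊆ D v := by
    intro v c hc w hw
    obtain ⟨y, hy⟩ := (mem_filter.mp hw).2
    exact mem_filter.mpr ⟨mem_univ _, hadj ((hCmem v c).mp hc) (hqmem w y) hy⟩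
  have hdeg' : ∀ v : V, G.degree v ≤ Δ := by
    intro v
    have := hdeg v
    rwa [deg, Set.ncard_eq_toFinset_card', ← SimpleGraph.neighborFinset_def,
      SimpleGraph.card_neighborFinset_eq_degree] at this
  have hDcard : ∀ v, #(D v) ≤ Δ := by
    intro v
    refine le_trans ?_ (hdeg' v)
    rw [← SimpleGraph.card_neighborFinset_eq_degree]
    refine card_le_card_of_injOn Subtype.val (fun w hw => ?_) Subtype.val_injective.injOn
    simpa [D] using hw
  let E : AG → Finset (BG → Bool) := fun v => {x | ∀ c ∈ C v, ∃ i ∈ N c, x i = b c i}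
  have hEp : ∀ v, (#(E v) : ℝ) ≤ p * Fintype.card (BG → Bool) := by
    intro v
    have hle := card_allBlocked_le N b (C v) (hbne v)
    refine le_trans (le_of_eq ?_) (hle.trans ?_)
    · congr!
    refine mul_le_mul_of_nonneg_right ?_ (by positivity)
    apply prod_le_exp (C v) (fun c => #(N c)) m K hm0
    · have := hA v v.2
      rwa [Set.ncard_eq_toFinset_card'] at this
    · rw [hmK]
      have h := (sum_card_le N b (C v) (D v) (hND v) (hbne v)).trans
        (Nat.mul_le_mul_left 2 (hDcard v))
      exact_mod_cast h
  have hΔ1' : (1 : ℝ) ≤ Δ := by exact_mod_cast hΔ1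
  have hp0 : 0 < p := Real.exp_pos _
  obtain ⟨x, hx⟩ := local_lemma_s5 E D (by
      intro v x y hxy hxE
      simp only [E, mem_filter, mem_univ, true_and] at hxE ⊢
      intro c hc
      obtain ⟨i, hi, hxi⟩ := hxE c hc
      exact ⟨i, hi, by rw [← hxy i (hND v c hc hi), hxi]⟩)
    p (Δ ^ 2) hp0.le hEp (by
      intro v
      have hsub : (({u | ¬ Disjoint (D v) (D u)} : Finset AG).image Subtype.val) ⊆
          (D v).biUnion fun w => G.neighborFinset w := by
        intro u hu
        obtain ⟨u, hu', rfl⟩ := mem_image.mp hu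
        obtain ⟨w, hw1, hw2⟩ := Finset.not_disjoint_iff.mp (mem_filter.mp hu').2
        refine mem_biUnion.mpr ⟨w, hw1, ?_⟩
        rw [SimpleGraph.mem_neighborFinset]
        exact (mem_filter.mp hw2).2.symm
      rw [← card_image_of_injective _ Subtype.val_injective]
      refine (card_le_card hsub).trans ?_
      refine (card_biUnion_le_card_mul _ _ Δ fun w _ => ?_).trans ?_
      · rw [SimpleGraph.card_neighborFinset_eq_degree]; exact hdeg' w
      · rw [sq]; exact Nat.mul_le_mul_right _ (hDcard v))
    (by push_cast; exact hfin) (by nlinarith)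
  have hs : ∀ v : V, ∃ s ∈ L v, (∀ hv : v ∈ BG, s = q ⟨v, hv⟩ (x ⟨v, hv⟩)) ∧
      (v ∈ AG → ∀ i : BG, ¬ H.Adj s (q i (x i))) := by
    intro v
    have hv : v ∈ AG ∪ BG := hAB ▸ Set.mem_univ v
    rcases hv with hv | hv
    · have hxv := hx ⟨v, hv⟩
      simp only [E, mem_filter, mem_univ, true_and] at hxv
      push Not at hxv
      obtain ⟨c, hc, hfree⟩ := hxv
      refine ⟨c, (hCmem _ c).mp hc, fun hv' => (hdis hv hv').elim, fun _ i hi => ?_⟩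
      have hiN : i ∈ N c := mem_filter.mpr ⟨mem_univ _, _, hi⟩
      exact hfree i hiN ((hbiff c i hiN _).mp hi)
    · exact ⟨q ⟨v, hv⟩ (x ⟨v, hv⟩), hqmem ⟨v, hv⟩ _, fun _ => rfl, fun hv' => (hdis hv' hv).elim⟩
  choose s hsL hsB hsA using hs
  refine ⟨Set.range s, ?_, fun v => ⟨s v, ⟨hsL v, v, rfl⟩, ?_⟩⟩
  · rintro _ ⟨v, rfl⟩ _ ⟨v', rfl⟩ hadj'
    rcases hbip (hadj (hsL v) (hsL v') hadj') with ⟨h1, h2⟩ | ⟨h1, h2⟩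
    · rw [hsB v' h2] at hadj'
      exact hsA v h1 _ hadj'
    · rw [hsB v h1] at hadj'
      exact hsA v' h2 _ hadj'.symm
  · rintro _ ⟨hy, v', rfl⟩
    rw [(hpart (s v')).unique hy (hsL v')]
end
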